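/- Theorem D, ℚ(√−2)-dihedral family: For every integer n ≥ 1, let z_n = (2·4^n + 1)/3 and take r = 24·z_n. Then the quotient #{primes ℓ with 5 ≤ ℓ ≤ x and c_r(ν_r(ℓ)) = 1} / π(x) tends to (1/2)^{n+1} (in ℝ, as the natural number x → ∞). -/

import Mathlib

open Polynomial Filter

/-- The `N`-th Fourier coefficient of the mod-2 eta power `η^r(q^{m_r})`:
the coefficient of `X^N` in `X^{b_r} · ∏_{n=1}^{N} (1 − X^{m_r·n})^r` over `ZMod 2`,
where `m_r = 24 / gcd 24 r` and `b_r = r / gcd 24 r`. -/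
noncomputable def etaCoeff (r N : ℕ) : ZMod 2 :=
  (X ^ (r / Nat.gcd 24 r) *
    ∏ n ∈ Finset.Icc 1 N,
      ((1 : Polynomial (ZMod 2)) - X ^ (24 / Nat.gcd 24 r * n)) ^ r).coeff N

/-- `ν_r(ℓ)`: the smallest multiple of `ℓ` that is `≥ b_r` and congruent to `b_r`
modulo `m_r`. -/
noncomputable def nuR (r ℓ : ℕ) : ℕ :=
  sInf {N : ℕ | ℓ ∣ N ∧ r / Nat.gcd 24 r ≤ N ∧
    N % (24 / Nat.gcd 24 r) = (r / Nat.gcd 24 r) % (24 / Nat.gcd 24 r)}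

/-- `π(x)`: the number of primes `≤ x`. -/
def primePi (x : ℕ) : ℕ := ((Finset.range (x + 1)).filter Nat.Prime).card

/-- The number of primes `ℓ` with `5 ≤ ℓ ≤ x` and `c_r(ν_r(ℓ)) = 1`. -/
noncomputable def etaDensityCount (r x : ℕ) : ℕ :=
  ((Finset.range (x + 1)).filter
    (fun ℓ => ℓ.Prime ∧ 5 ≤ ℓ ∧ etaCoeff r (nuR r ℓ) = 1)).card

namespace EtaDensity

open MeasureTheory Topology Set

/-! ### The Fejér kernel -/

/-- The Fejér kernel, written as the cosine transform of the tent function. -/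
noncomputable def fejer (u : ℝ) : ℝ := ∫ τ in (0 : ℝ)..1, (1 - τ) * (2 * Real.cos (τ * u))

lemma fejer_eq {u : ℝ} (hu : u ≠ 0) : fejer u = 2 * (1 - Real.cos u) / u ^ 2 := by
  have h : ∀ τ ∈ uIcc (0 : ℝ) 1, HasDerivAt
      (fun τ : ℝ => 2 * ((1 - τ) * Real.sin (τ * u) / u - Real.cos (τ * u) / u ^ 2))
      ((1 - τ) * (2 * Real.cos (τ * u))) τ := by
    intro τ _
    have h1 : HasDerivAt (fun τ : ℝ => τ * u) u τ := by
      simpa using (hasDerivAt_id τ).mul_const u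
    have h2 : HasDerivAt (fun τ : ℝ => 1 - τ) (-1) τ := by
      simpa using (hasDerivAt_id τ).const_sub 1
    refine ((((h2.mul h1.sin).div_const u).sub (h1.cos.div_const (u ^ 2))).const_mul
      2).congr_deriv ?_
    have hu2 : u / u = 1 := div_self hu
    have hu3 : u / u ^ 2 = 1 / u := by field_simp
    linear_combination (2 * (1 - τ) * Real.cos (τ * u)) * hu2 + 2 * Real.sin (τ * u) * hu3
  rw [fejer, intervalIntegral.integral_eq_sub_of_hasDerivAt h
    (Continuous.intervalIntegrable (by fun_prop) _ _)]
  simp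
  ring

lemma fejer_zero : fejer 0 = 1 := by
  simp only [fejer, mul_zero, Real.cos_zero, mul_one]
  rw [intervalIntegral.integral_mul_const, intervalIntegral.integral_sub (by simp) (by simp)]
  simp
  norm_num

lemma continuous_fejer : Continuous fejer :=
  intervalIntegral.continuous_parametric_intervalIntegral_of_continuous' (by fun_prop) _ _

lemma fejer_nonneg (u : ℝ) : 0 ≤ fejer u := by
  rcases eq_or_ne u 0 with rfl | hu
  · simp [fejer_zero]
  · rw [fejer_eq hu]
    have := Real.cos_le_one u
    have : 0 ≤ 1 - Real.cos u := by linarith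
    positivity

lemma fejer_le (u : ℝ) : fejer u ≤ 8 * (1 + u ^ 2)⁻¹ := by
  rw [← div_eq_mul_inv]
  rcases le_total (u ^ 2) 1 with h | h
  · have h1 : fejer u ≤ 2 := by
      have := intervalIntegral.norm_integral_le_of_norm_le_const (a := (0 : ℝ)) (b := 1)
        (f := fun τ : ℝ => (1 - τ) * (2 * Real.cos (τ * u))) (C := 2) (by
          intro τ hτ
          rw [uIoc_of_le zero_le_one] at hτ
          have h1 : |1 - τ| ≤ 1 := by rw [abs_le]; constructor <;> linarith [hτ.1, hτ.2]
          have h2 := Real.abs_cos_le_one (τ * u)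
          rw [Real.norm_eq_abs, abs_mul, abs_mul, abs_two]
          nlinarith [abs_nonneg (1 - τ), abs_nonneg (Real.cos (τ * u))])
      have h2 := le_abs_self (fejer u)
      simp only [Real.norm_eq_abs, sub_zero, abs_one, mul_one] at this
      exact h2.trans this
    rw [le_div_iff₀ (by positivity)]
    nlinarith [fejer_nonneg u]
  · have hu : u ≠ 0 := by rintro rfl; norm_num at h
    rw [fejer_eq hu, div_le_div_iff₀ (by positivity) (by positivity)]
    nlinarith [Real.neg_one_le_cos u, Real.cos_le_one u]

lemma integrable_fejer : Integrable fejer := by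
  refine (integrable_inv_one_add_sq.const_mul 8).mono' continuous_fejer.aestronglyMeasurable ?_
  refine Eventually.of_forall fun u => ?_
  rw [Real.norm_of_nonneg (fejer_nonneg u)]
  exact fejer_le u

lemma integral_fejer_pos : 0 < ∫ u, fejer u := by
  rw [integral_pos_iff_support_of_nonneg fejer_nonneg integrable_fejer]
  exact (continuous_fejer.isOpen_support).measure_pos _ ⟨0, by simp [fejer_zero]⟩

lemma integral_tent_mul_exp (u : ℝ) :
    ∫ τ in (-1 : ℝ)..1, ((1 - |τ| : ℝ) : ℂ) * Complex.exp (τ * u * Complex.I) = fejer u := by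
  have hc : Continuous fun τ : ℝ => ((1 - |τ| : ℝ) : ℂ) * Complex.exp (τ * u * Complex.I) := by
    fun_prop
  rw [← intervalIntegral.integral_add_adjacent_intervals (b := 0)
    (hc.intervalIntegrable _ _) (hc.intervalIntegrable _ _)]
  have h1 := intervalIntegral.integral_comp_neg (a := (0 : ℝ)) (b := 1)
    (fun τ : ℝ => ((1 - |τ| : ℝ) : ℂ) * Complex.exp (τ * u * Complex.I))
  rw [neg_zero] at h1
  rw [← h1, ← intervalIntegral.integral_add
    (Continuous.intervalIntegrable (by fun_prop) _ _) (hc.intervalIntegrable _ _), fejer,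
    ← intervalIntegral.integral_ofReal]
  refine intervalIntegral.integral_congr fun τ hτ => ?_
  rw [uIcc_of_le zero_le_one] at hτ
  simp only [abs_neg, abs_of_nonneg hτ.1]
  push_cast
  rw [Complex.cos]
  ring_nf

/-- The Fourier side of the Tauberian argument: smoothing a bounded function whose Laplace
transform extends continuously to the imaginary axis gives a function vanishing at infinity. -/
theorem tendsto_integral_mul_fejer {b : ℝ → ℝ} (hb : Measurable b) {M : ℝ} (hM : ∀ t, |b t| ≤ M)
    {G : ℂ → ℂ} (hG : ContinuousOn G {s | 0 ≤ s.re})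
    (hGb : ∀ s : ℂ, 0 < s.re → G s = ∫ t in Ioi (0 : ℝ), (b t : ℂ) * Complex.exp (-s * t))
    {lam : ℝ} (hlam : 0 < lam) :
    Tendsto (fun y : ℝ => ∫ t in Ioi (0 : ℝ), b t * fejer (lam * (y - t))) atTop (𝓝 0) := by
  have hM0 : 0 ≤ M := (abs_nonneg _).trans (hM 0)
  have hfubini : ∀ ε : ℝ, 0 < ε → ∀ y : ℝ,
      ((∫ t in Ioi (0 : ℝ), b t * Real.exp (-ε * t) * fejer (lam * (y - t)) : ℝ) : ℂ) =
      ∫ τ in (-1 : ℝ)..1, ((1 - |τ| : ℝ) : ℂ) * Complex.exp (τ * (lam * y) * Complex.I) *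
        G (ε + lam * τ * Complex.I) := by
    intro ε hε y
    have hI : Integrable (fun t : ℝ => M * Real.exp (-ε * t)) (volume.restrict (Ioi 0)) :=
      (exp_neg_integrableOn_Ioi 0 hε).const_mul M
    have hintegral : Integrable (Function.uncurry fun (t τ : ℝ) =>
        ((b t : ℂ) * Complex.exp (-ε * t)) * (((1 - |τ| : ℝ) : ℂ) *
          Complex.exp (τ * (lam * (y - t)) * Complex.I)))
        ((volume.restrict (Ioi (0 : ℝ))).prod (volume.restrict (Ioc (-1 : ℝ) 1))) := by
      have hprod := hI.mul_prod (ν := volume.restrict (Ioc (-1 : ℝ) 1))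
        (g := fun _ : ℝ => (2 : ℝ)) (integrable_const _)
      have hbm : Measurable fun z : ℝ × ℝ => ((b z.1 : ℝ) : ℂ) :=
        Complex.measurable_ofReal.comp (hb.comp measurable_fst)
      refine hprod.mono' ?_ ?_
      · refine Measurable.aestronglyMeasurable ?_
        simp only [Function.uncurry_def]
        refine (hbm.mul ?_).mul ?_
        · exact Continuous.measurable (by fun_prop)
        · exact Continuous.measurable (by fun_prop)
      · rw [Measure.prod_restrict]
        refine (ae_restrict_iff' (measurableSet_Ioi.prod measurableSet_Ioc)).mpr
          (Eventually.of_forall fun z hz => ?_)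
        obtain ⟨-, hz1, hz2⟩ := hz
        simp only [Function.uncurry_def, norm_mul, Complex.norm_exp]
        have e1 : (-(ε : ℂ) * (z.1 : ℂ)).re = -ε * z.1 := by simp
        have e2 : ((z.2 : ℂ) * (lam * (y - z.1)) * Complex.I).re = 0 := by
          have : (z.2 : ℂ) * (lam * (y - z.1)) * Complex.I
            = ((z.2 * (lam * (y - z.1)) : ℝ) : ℂ) * Complex.I := by push_cast; ring
          rw [this]; simp
        rw [e1, e2, Real.exp_zero, mul_one, Complex.norm_real, Complex.norm_real]
        have h3 : ‖1 - |z.2|‖ ≤ 2 := by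
          have : |z.2| ≤ 1 := abs_le.mpr ⟨hz1.le, hz2⟩
          rw [Real.norm_eq_abs, abs_le]; constructor <;> linarith [abs_nonneg z.2]
        have h4 : ‖b z.1‖ ≤ M := hM _
        gcongr
    rw [← integral_complex_ofReal]
    have e1 : ∀ t : ℝ, ((b t * Real.exp (-ε * t) * fejer (lam * (y - t)) : ℝ) : ℂ) =
        ∫ τ in Ioc (-1 : ℝ) 1, ((b t : ℂ) * Complex.exp (-ε * t)) * (((1 - |τ| : ℝ) : ℂ) *
          Complex.exp (τ * (lam * (y - t)) * Complex.I)) := by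
      intro t
      rw [integral_const_mul, ← intervalIntegral.integral_of_le (by norm_num)]
      have := integral_tent_mul_exp (lam * (y - t))
      push_cast at this ⊢
      rw [← this]
    simp_rw [e1]
    rw [integral_integral_swap hintegral, intervalIntegral.integral_of_le (by norm_num)]
    refine integral_congr_ae (Eventually.of_forall fun τ => ?_)
    simp only
    rw [hGb _ (by simpa using hε), ← integral_const_mul]
    refine integral_congr_ae (Eventually.of_forall fun t => ?_)
    simp only
    have : Complex.exp (-ε * t) * Complex.exp (τ * (lam * (y - t)) * Complex.I) =
        Complex.exp (τ * (lam * y) * Complex.I) *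
          Complex.exp (-(ε + lam * τ * Complex.I) * t) := by
      rw [← Complex.exp_add, ← Complex.exp_add]; ring_nf
    linear_combination ((b t : ℂ) * ((1 - |τ| : ℝ) : ℂ)) * this
  have hlim : ∀ y : ℝ, ((∫ t in Ioi (0 : ℝ), b t * fejer (lam * (y - t)) : ℝ) : ℂ) =
      ∫ τ in (-1 : ℝ)..1, ((1 - |τ| : ℝ) : ℂ) * Complex.exp (τ * (lam * y) * Complex.I) *
        G (lam * τ * Complex.I) := by
    intro y
    have hL : Tendsto (fun ε : ℝ =>
        ((∫ t in Ioi (0 : ℝ), b t * Real.exp (-ε * t) * fejer (lam * (y - t)) : ℝ) : ℂ))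
        (𝓝[>] 0) (𝓝 ((∫ t in Ioi (0 : ℝ), b t * fejer (lam * (y - t)) : ℝ) : ℂ)) := by
      refine (Complex.continuous_ofReal.tendsto _).comp ?_
      have hintK : Integrable (fun t : ℝ => M * fejer (lam * (y - t))) := by
        have := (integrable_fejer.comp_mul_left' hlam.ne').comp_sub_left y
        exact this.const_mul M
      refine tendsto_integral_filter_of_dominated_convergence _ ?_ ?_ hintK.integrableOn ?_
      · refine Eventually.of_forall fun ε => Measurable.aestronglyMeasurable ?_
        refine (hb.mul (Continuous.measurable (by fun_prop))).mul ?_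
        exact (continuous_fejer.comp (by fun_prop)).measurable
      · refine eventually_nhdsWithin_of_forall fun ε hε => ?_
        refine (ae_restrict_iff' measurableSet_Ioi).mpr (Eventually.of_forall fun t ht => ?_)
        rw [norm_mul, norm_mul, Real.norm_of_nonneg (fejer_nonneg _),
          Real.norm_of_nonneg (Real.exp_pos _).le]
        have h1 : Real.exp (-ε * t) ≤ 1 := by
          rw [Real.exp_le_one_iff]
          have := mul_pos (show (0 : ℝ) < ε from hε) (show (0 : ℝ) < t from ht)
          linarith
        have h2 : ‖b t‖ ≤ M := hM t
        have h3 : ‖b t‖ * Real.exp (-ε * t) ≤ M * 1 := by gcongr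
        rw [mul_one] at h3
        exact mul_le_mul_of_nonneg_right h3 (fejer_nonneg _)
      · refine Eventually.of_forall fun t => ?_
        have : Tendsto (fun ε : ℝ => b t * Real.exp (-ε * t) * fejer (lam * (y - t))) (𝓝 0)
            (𝓝 (b t * Real.exp (-0 * t) * fejer (lam * (y - t)))) :=
          Continuous.tendsto (by fun_prop) 0
        simp only [neg_zero, zero_mul, Real.exp_zero, mul_one] at this
        exact this.mono_left nhdsWithin_le_nhds
    have hcomp : IsCompact (Icc (0 : ℝ) 1 ×ˢ Icc (-1 : ℝ) 1) := isCompact_Icc.prod isCompact_Icc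
    have hGc : ContinuousOn (fun p : ℝ × ℝ => G (p.1 + lam * p.2 * Complex.I))
        (Icc (0 : ℝ) 1 ×ˢ Icc (-1 : ℝ) 1) := by
      refine hG.comp (by fun_prop) fun p hp => ?_
      simpa using hp.1.1
    obtain ⟨B, hB⟩ := hcomp.exists_bound_of_continuousOn hGc
    have hR : Tendsto (fun ε : ℝ => ∫ τ in (-1 : ℝ)..1, ((1 - |τ| : ℝ) : ℂ) *
        Complex.exp (τ * (lam * y) * Complex.I) * G (ε + lam * τ * Complex.I)) (𝓝[>] 0)
        (𝓝 (∫ τ in (-1 : ℝ)..1, ((1 - |τ| : ℝ) : ℂ) * Complex.exp (τ * (lam * y) * Complex.I) *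
        G (lam * τ * Complex.I))) := by
      have hsmall : ∀ᶠ ε : ℝ in 𝓝[>] 0, ε ∈ Ioc (0 : ℝ) 1 := Ioc_mem_nhdsGT one_pos
      refine intervalIntegral.tendsto_integral_filter_of_dominated_convergence
        (fun _ => 2 * B) ?_ ?_ (by simp) ?_
      · filter_upwards [hsmall] with ε hε
        refine ContinuousOn.aestronglyMeasurable ?_ measurableSet_uIoc
        refine ContinuousOn.mul (by fun_prop) ?_
        refine hGc.comp (f := fun τ : ℝ => (ε, τ)) (by fun_prop) fun τ hτ => ?_
        rw [uIoc_of_le (by norm_num)] at hτ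
        exact ⟨⟨hε.1.le, hε.2⟩, hτ.1.le, hτ.2⟩
      · filter_upwards [hsmall] with ε hε
        refine Eventually.of_forall fun τ hτ => ?_
        rw [uIoc_of_le (by norm_num)] at hτ
        have h1 := hB (ε, τ) ⟨⟨hε.1.le, hε.2⟩, hτ.1.le, hτ.2⟩
        have e2 : (τ : ℂ) * (lam * y) * Complex.I = ((τ * (lam * y) : ℝ) : ℂ) * Complex.I := by
          push_cast; ring
        rw [norm_mul, norm_mul, e2, Complex.norm_exp_ofReal_mul_I, mul_one, Complex.norm_real]
        have h3 : ‖1 - |τ|‖ ≤ 2 := by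
          have : |τ| ≤ 1 := abs_le.mpr ⟨hτ.1.le, hτ.2⟩
          rw [Real.norm_eq_abs, abs_le]; constructor <;> linarith [abs_nonneg τ]
        gcongr
      · refine Eventually.of_forall fun τ hτ => ?_
        rw [uIoc_of_le (by norm_num)] at hτ
        refine Tendsto.mul tendsto_const_nhds ?_
        have h0 : ContinuousWithinAt G {s | 0 ≤ s.re} (lam * τ * Complex.I) :=
          hG _ (by simp)
        refine Tendsto.comp (f := fun ε : ℝ => (ε : ℂ) + lam * τ * Complex.I) h0 ?_
        refine tendsto_nhdsWithin_iff.mpr ⟨?_, ?_⟩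
        · have : Tendsto (fun ε : ℝ => (ε : ℂ) + lam * τ * Complex.I) (𝓝 0)
              (𝓝 ((0 : ℝ) + lam * τ * Complex.I)) := Continuous.tendsto (by fun_prop) 0
          rw [Complex.ofReal_zero, zero_add] at this
          exact this.mono_left nhdsWithin_le_nhds
        · filter_upwards [hsmall] with ε hε
          simpa using hε.1.le
    refine tendsto_nhds_unique hL (hR.congr' ?_)
    exact eventually_nhdsWithin_of_forall fun ε hε => (hfubini ε hε y).symm
  have hRL := Real.tendsto_integral_exp_smul_cocompact (fun τ : ℝ =>
    (Ioc (-1 : ℝ) 1).indicator (fun τ : ℝ => ((1 - |τ| : ℝ) : ℂ) * G (lam * τ * Complex.I)) τ)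
  have hy : Tendsto (fun y : ℝ => -(lam * y) / (2 * Real.pi)) atTop (cocompact ℝ) := by
    refine Tendsto.mono_right ?_ atBot_le_cocompact
    refine Tendsto.atBot_div_const (by positivity) ?_
    exact tendsto_neg_atTop_atBot.comp (tendsto_id.const_mul_atTop hlam)
  have h := hRL.comp hy
  have h' : Tendsto (fun y : ℝ =>
      ((∫ t in Ioi (0 : ℝ), b t * fejer (lam * (y - t)) : ℝ) : ℂ)) atTop (𝓝 0) := by
    refine h.congr fun y => ?_
    simp only [Function.comp]
    rw [hlim y, intervalIntegral.integral_of_le (by norm_num),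
      ← integral_indicator measurableSet_Ioc]
    refine integral_congr_ae (Eventually.of_forall fun τ => ?_)
    simp only [Set.indicator_apply]
    split_ifs
    · rw [Circle.smul_def, Real.fourierChar_apply, smul_eq_mul]
      have : ((2 * Real.pi * (-(τ * (-(lam * y) / (2 * Real.pi)))) : ℝ) : ℂ) * Complex.I
          = τ * (lam * y) * Complex.I := by
        have hpi : (Real.pi : ℂ) ≠ 0 := by exact_mod_cast Real.pi_ne_zero
        push_cast; field_simp
      rw [this]; ring
    · simp
  exact (Complex.continuous_re.tendsto 0).comp h'

end EtaDensity

namespace EtaDensity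

open MeasureTheory Topology Set

/-! ### Monotonicity and Fejér means -/

lemma tendsto_fejer_tail :
    Tendsto (fun x : ℝ => ∫ u in {u : ℝ | x < |u|}, fejer u) atTop (𝓝 0) := by
  have hm : ∀ x : ℝ, MeasurableSet {u : ℝ | x < |u|} := fun x =>
    (isOpen_lt continuous_const continuous_abs).measurableSet
  simp_rw [← integral_indicator (hm _)]
  rw [show (0 : ℝ) = ∫ _ : ℝ, (0 : ℝ) by simp]
  refine tendsto_integral_filter_of_dominated_convergence fejer ?_ ?_ integrable_fejer ?_
  · exact Eventually.of_forall fun x =>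
      (integrable_fejer.indicator (hm x)).aestronglyMeasurable
  · refine Eventually.of_forall fun x => Eventually.of_forall fun u => ?_
    rw [Set.indicator_apply]
    split_ifs
    · rw [Real.norm_of_nonneg (fejer_nonneg u)]
    · simpa using fejer_nonneg u
  · refine Eventually.of_forall fun u => ?_
    refine tendsto_const_nhds.congr' ?_
    filter_upwards [eventually_ge_atTop |u|] with x hx
    rw [Set.indicator_of_notMem]
    simpa using hx

lemma fejer_window_bound {g : ℝ → ℝ} (hg : Measurable g) {M m y δ lam : ℝ} (hlam : 0 < lam)
    (hM : ∀ t, |g t| ≤ M) (hδ : δ < y)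
    (hw : ∀ t ∈ Icc (y - δ) (y + δ), m ≤ g t) :
    m * (∫ u, fejer u) - (M + m) * (∫ u in {u : ℝ | lam * δ < |u|}, fejer u) ≤
      lam * ∫ t in Ioi (0 : ℝ), g t * fejer (lam * (y - t)) := by
  have hM0 : 0 ≤ M := (abs_nonneg _).trans (hM 0)
  have hms : MeasurableSet {u : ℝ | lam * δ < |u|} :=
    (isOpen_lt continuous_const continuous_abs).measurableSet
  set k : ℝ → ℝ := {u : ℝ | lam * δ < |u|}.indicator fejer with hk
  have hkint : Integrable k := integrable_fejer.indicator hms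
  have hscale : ∀ f : ℝ → ℝ, ∫ t, f (lam * (y - t)) = lam⁻¹ * ∫ u, f u := by
    intro f
    have h1 := integral_sub_left_eq_self (fun t => f (lam * t)) volume y
    rw [h1, Measure.integral_comp_mul_left, abs_of_pos (inv_pos.mpr hlam), smul_eq_mul]
  have hsint : ∀ {f : ℝ → ℝ}, Integrable f → Integrable fun t => f (lam * (y - t)) := fun hf =>
    (hf.comp_mul_left' hlam.ne').comp_sub_left y
  rw [← integral_indicator hms, ← integral_indicator measurableSet_Ioi]
  have hle : ∫ t, (m * fejer (lam * (y - t)) - (M + m) * k (lam * (y - t))) ≤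
      ∫ t, (Ioi (0 : ℝ)).indicator (fun t => g t * fejer (lam * (y - t))) t := by
    refine integral_mono (((hsint integrable_fejer).const_mul m).sub
      ((hsint hkint).const_mul (M + m))) ?_ ?_
    · refine Integrable.indicator ?_ measurableSet_Ioi
      refine ((hsint integrable_fejer).const_mul M).mono' ?_ ?_
      · exact (hg.mul (continuous_fejer.comp (by fun_prop)).measurable).aestronglyMeasurable
      · refine Eventually.of_forall fun t => ?_
        rw [norm_mul, Real.norm_of_nonneg (fejer_nonneg _)]
        exact mul_le_mul_of_nonneg_right (hM t) (fejer_nonneg _)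
    · intro t
      have hf := fejer_nonneg (lam * (y - t))
      simp only [hk, Set.indicator_apply, mem_ofPred_eq, mem_Ioi]
      have habs : |lam * (y - t)| = lam * |y - t| := by rw [abs_mul, abs_of_pos hlam]
      have hiff : lam * δ < |lam * (y - t)| ↔ δ < |y - t| := by
        rw [habs, mul_lt_mul_iff_right₀ hlam]
      simp only [hiff]
      by_cases h1 : δ < |y - t|
      · simp only [if_pos h1]
        have h2 := abs_le.mp (hM t)
        split_ifs <;> nlinarith
      · simp only [if_neg h1]
        obtain ⟨h2, h3⟩ := abs_le.mp (not_lt.mp h1)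
        rw [if_pos (by linarith)]
        have := hw t ⟨by linarith, by linarith⟩
        nlinarith
  rw [integral_sub ((hsint integrable_fejer).const_mul m) ((hsint hkint).const_mul (M + m)),
    integral_const_mul, integral_const_mul, hscale, hscale] at hle
  have := mul_le_mul_of_nonneg_left hle hlam.le
  refine le_trans (le_of_eq ?_) this
  field_simp
  rfl

lemma frequently_window_absurd {g : ℝ → ℝ} (hg : Measurable g) {M m δ : ℝ}
    (hm : 0 < m) (hδ : 0 < δ) (hM : ∀ t, |g t| ≤ M)
    (hK : ∀ lam : ℝ, 0 < lam →
      Tendsto (fun y : ℝ => ∫ t in Ioi (0 : ℝ), g t * fejer (lam * (y - t))) atTop (𝓝 0))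
    (hw : ∃ᶠ y in atTop, ∀ t ∈ Icc (y - δ) (y + δ), m ≤ g t) : False := by
  have hI := integral_fejer_pos
  set I := ∫ u, fejer u
  have h1 : Tendsto (fun lam : ℝ => (M + m) * ∫ u in {u : ℝ | lam * δ < |u|}, fejer u) atTop
      (𝓝 ((M + m) * 0)) :=
    (tendsto_fejer_tail.comp (tendsto_id.atTop_mul_const hδ)).const_mul _
  rw [mul_zero] at h1
  obtain ⟨lam, hl1, hl2⟩ := ((h1.eventually (gt_mem_nhds (show 0 < m * I / 2 by positivity))).and
    (eventually_gt_atTop 0)).exists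
  have h2 := ((hK lam hl2).const_mul lam)
  rw [mul_zero] at h2
  obtain ⟨y, hy1, hy2, hy3⟩ := (hw.and_eventually
    ((h2.eventually (gt_mem_nhds (show 0 < m * I / 2 by positivity))).and
      (eventually_gt_atTop δ))).exists
  have := fejer_window_bound hg hl2 hM hy3 hy1
  linarith

theorem tendsto_of_fejer_means {B : ℝ → ℝ} (hB : Measurable B) {c M : ℝ}
    (hmono : Monotone fun t => Real.exp t * B t) (hM : ∀ t, |B t - c| ≤ M)
    (hK : ∀ lam : ℝ, 0 < lam →
      Tendsto (fun y : ℝ => ∫ t in Ioi (0 : ℝ), (B t - c) * fejer (lam * (y - t))) atTop (𝓝 0)) :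
    Tendsto B atTop (𝓝 c) := by
  have hcmp : ∀ s t : ℝ, s ≤ t → B s ≤ Real.exp (t - s) * B t := by
    intro s t hst
    have h := hmono hst
    simp only at h
    rw [Real.exp_sub, div_mul_eq_mul_div, le_div_iff₀ (Real.exp_pos s)]
    linarith
  refine tendsto_order.mpr ⟨fun a ha => ?_, fun a ha => ?_⟩
  · by_contra hcon
    have hfr : ∃ᶠ t in atTop, B t ≤ a := by simpa [Filter.Frequently] using hcon
    obtain ⟨δ, hδ, hδ'⟩ : ∃ δ > 0, ∀ x ∈ Icc 0 (2 * δ), Real.exp x * a < (a + c) / 2 := by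
      have hc : ContinuousAt (fun x : ℝ => Real.exp x * a) 0 := by fun_prop
      have := hc.eventually (gt_mem_nhds (show Real.exp 0 * a < (a + c) / 2 by
        rw [Real.exp_zero]; linarith))
      obtain ⟨r, hr, h⟩ := Metric.eventually_nhds_iff.mp this
      refine ⟨r / 4, by positivity, fun x hx => h ?_⟩
      rw [Real.dist_eq, sub_zero, abs_of_nonneg hx.1]
      linarith [hx.2]
    refine frequently_window_absurd (g := fun t => -(B t - c)) (by fun_prop)
      (show 0 < (c - a) / 2 by linarith) hδ (M := M) (by simpa only [abs_neg] using hM) ?_ ?_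
    · intro lam hlam
      simp only [neg_mul, integral_neg]
      simpa only [neg_zero] using (hK lam hlam).neg
    · refine (tendsto_atTop_add_const_right atTop (-δ) tendsto_id).frequently ?_
      refine hfr.mono fun t0 ht0 t ht => ?_
      simp only [id] at ht
      have h1 := hcmp t t0 (by linarith [ht.2])
      have h2 := hδ' (t0 - t) ⟨by linarith [ht.2], by linarith [ht.1]⟩
      have h3 := mul_le_mul_of_nonneg_left ht0 (Real.exp_pos (t0 - t)).le
      linarith
  · by_contra hcon
    have hfr : ∃ᶠ t in atTop, a ≤ B t := by simpa [Filter.Frequently] using hcon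
    obtain ⟨δ, hδ, hδ'⟩ : ∃ δ > 0, ∀ x ∈ Icc 0 (2 * δ), (a + c) / 2 < Real.exp (-x) * a := by
      have hc : ContinuousAt (fun x : ℝ => Real.exp (-x) * a) 0 := by fun_prop
      have := hc.eventually (lt_mem_nhds (show (a + c) / 2 < Real.exp (-0) * a by
        rw [neg_zero, Real.exp_zero]; linarith))
      obtain ⟨r, hr, h⟩ := Metric.eventually_nhds_iff.mp this
      refine ⟨r / 4, by positivity, fun x hx => h ?_⟩
      rw [Real.dist_eq, sub_zero, abs_of_nonneg hx.1]
      linarith [hx.2]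
    refine frequently_window_absurd (g := fun t => B t - c) (by fun_prop)
      (show 0 < (a - c) / 2 by linarith) hδ hM hK ?_
    refine (tendsto_atTop_add_const_right atTop δ tendsto_id).frequently ?_
    refine hfr.mono fun t0 ht0 t ht => ?_
    simp only [id] at ht
    have h1 := hcmp t0 t (by linarith [ht.1])
    have h2 := hδ' (t - t0) ⟨by linarith [ht.1], by linarith [ht.2]⟩
    have h3 := mul_le_mul_of_nonneg_left h1 (Real.exp_pos (-(t - t0))).le
    rw [← mul_assoc, ← Real.exp_add, neg_add_cancel, Real.exp_zero, one_mul] at h3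
    have h4 := mul_le_mul_of_nonneg_left ht0 (Real.exp_pos (-(t - t0))).le
    linarith

end EtaDensity

namespace EtaDensity

open MeasureTheory Topology Set

/-! ### The Wiener–Ikehara theorem -/

/-- `F` has finite limits from the open half plane `1 < re s` at every point of its closure. -/
def HasBoundaryLimits (F : ℂ → ℂ) : Prop :=
  ∀ s : ℂ, 1 ≤ s.re → ∃ l, Tendsto F (𝓝[{z | 1 < z.re}] s) (𝓝 l)

namespace HasBoundaryLimits

variable {F H : ℂ → ℂ}

lemma add (hF : HasBoundaryLimits F) (hH : HasBoundaryLimits H) :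
    HasBoundaryLimits fun s => F s + H s := fun s hs =>
  let ⟨l, hl⟩ := hF s hs
  let ⟨m, hm⟩ := hH s hs
  ⟨l + m, hl.add hm⟩

lemma sub (hF : HasBoundaryLimits F) (hH : HasBoundaryLimits H) :
    HasBoundaryLimits fun s => F s - H s := fun s hs =>
  let ⟨l, hl⟩ := hF s hs
  let ⟨m, hm⟩ := hH s hs
  ⟨l - m, hl.sub hm⟩

lemma const_mul (c : ℂ) (hF : HasBoundaryLimits F) :
    HasBoundaryLimits fun s => c * F s := fun s hs =>
  let ⟨l, hl⟩ := hF s hs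
  ⟨c * l, hl.const_mul c⟩

lemma sum {ι : Type*} (t : Finset ι) {F : ι → ℂ → ℂ} (hF : ∀ i ∈ t, HasBoundaryLimits (F i)) :
    HasBoundaryLimits fun s => ∑ i ∈ t, F i s := by
  classical
  induction t using Finset.induction_on with
  | empty => exact fun s _ => ⟨0, by simpa using tendsto_const_nhds⟩
  | insert i t hi ih =>
    simp_rw [Finset.sum_insert hi]
    exact (hF i (by simp)).add (ih fun j hj => hF j (by simp [hj]))

lemma congr (hF : HasBoundaryLimits F) (h : ∀ s : ℂ, 1 < s.re → F s = H s) :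
    HasBoundaryLimits H := fun s hs =>
  let ⟨l, hl⟩ := hF s hs
  ⟨l, hl.congr' (eventually_of_mem self_mem_nhdsWithin fun z hz => h z hz)⟩

lemma of_continuousOn (hF : ContinuousOn F {s | 1 ≤ s.re}) : HasBoundaryLimits F := fun s hs =>
  ⟨F s, (hF s hs).mono fun _ hz => (le_of_lt hz : (1 : ℝ) ≤ _)⟩

end HasBoundaryLimits

lemma integral_exp_laplace {A : ℝ → ℝ} {s : ℂ} :
    ∫ t in Ioi (1 : ℝ), (A t : ℂ) * (t : ℂ) ^ (-(s + 1)) =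
      ∫ u in Ioi (0 : ℝ), ((A (Real.exp u) * Real.exp (-u) : ℝ) : ℂ) *
        Complex.exp (-(s - 1) * u) := by
  have h := integral_comp_exp_Ioi (fun t : ℝ => (A t : ℂ) * (t : ℂ) ^ (-(s + 1))) 0
  rw [Real.exp_zero] at h
  rw [← h]
  refine setIntegral_congr_fun measurableSet_Ioi fun u _ => ?_
  simp only [Complex.real_smul]
  rw [Complex.ofReal_mul, Complex.ofReal_exp, Complex.ofReal_exp,
    Complex.cpow_def_of_ne_zero (Complex.exp_ne_zero _), ← Complex.ofReal_exp,
    ← Complex.ofReal_log (Real.exp_pos u).le, Real.log_exp, Complex.ofReal_exp,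
    mul_left_comm, ← Complex.exp_add, mul_assoc, ← Complex.exp_add]
  congr 2
  push_cast
  ring

theorem wiener_ikehara {a : ℕ → ℝ} (ha : ∀ n, 0 ≤ a n) {C : ℝ}
    (hC : ∀ N : ℕ, ∑ k ∈ Finset.Icc 1 N, a k ≤ C * N) {c : ℝ}
    (h : HasBoundaryLimits fun s => LSeries (fun n => (a n : ℂ)) s - c / (s - 1)) :
    Tendsto (fun N : ℕ => (∑ k ∈ Finset.Icc 1 N, a k) / N) atTop (𝓝 c) := by
  have hC0 : 0 ≤ C := by simpa using (ha 1).trans (by simpa using hC 1)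
  set A : ℝ → ℝ := fun x => ∑ k ∈ Finset.Icc 1 ⌊x⌋₊, a k with hA
  have hA0 : ∀ x, 0 ≤ A x := fun x => Finset.sum_nonneg fun k _ => ha k
  have hAC : ∀ x, 0 ≤ x → A x ≤ C * x := fun x hx =>
    (hC _).trans (mul_le_mul_of_nonneg_left (Nat.floor_le hx) hC0)
  have hAmono : Monotone A := fun x y hxy =>
    Finset.sum_le_sum_of_subset_of_nonneg
      (Finset.Icc_subset_Icc le_rfl (Nat.floor_mono hxy)) fun k _ _ => ha k
  set B : ℝ → ℝ := fun t => A (Real.exp t) * Real.exp (-t) with hB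
  have hBm : Measurable B := by
    have : Measurable A := hAmono.measurable
    fun_prop
  have hB0 : ∀ t, 0 ≤ B t := fun t => mul_nonneg (hA0 _) (Real.exp_pos _).le
  have hBC : ∀ t, B t ≤ C := fun t => by
    have := mul_le_mul_of_nonneg_right (hAC _ (Real.exp_pos t).le) (Real.exp_pos (-t)).le
    rwa [mul_assoc, ← Real.exp_add, add_neg_cancel, Real.exp_zero, mul_one] at this
  have hBb : ∀ t, |B t - c| ≤ C + |c| := fun t => by
    refine (abs_sub _ _).trans ?_
    rw [abs_of_nonneg (hB0 t)]
    linarith [hBC t]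
  have hO : (fun n ↦ ∑ k ∈ Finset.Icc 1 n, a k) =O[atTop] fun n : ℕ ↦ (n : ℝ) ^ (1 : ℝ) := by
    refine Asymptotics.IsBigO.of_bound C (Eventually.of_forall fun N => ?_)
    rw [Real.norm_of_nonneg (Finset.sum_nonneg fun k _ => ha k), Real.rpow_one,
      Real.norm_of_nonneg (Nat.cast_nonneg N)]
    exact hC N
  have hexp : ∀ s : ℂ, 0 < s.re → IntegrableOn (fun t : ℝ => Complex.exp (-s * t)) (Ioi 0) :=
    fun s hs => integrableOn_exp_mul_complex_Ioi (by simpa using hs) 0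
  set g : ℂ → ℂ := fun s =>
    (LSeries (fun n => (a n : ℂ)) (s + 1) - c / ((s + 1) - 1)) / (s + 1) - c / (s + 1) with hg
  have hgint : ∀ s : ℂ, 0 < s.re →
      g s = ∫ t in Ioi (0 : ℝ), ((B t - c : ℝ) : ℂ) * Complex.exp (-s * t) := by
    intro s hs
    have hs1 : s + 1 ≠ 0 := fun h0 => by
      have := congrArg Complex.re h0
      simp at this
      linarith
    have hs0 : s ≠ 0 := fun h0 => by simp [h0] at hs
    have h1 := LSeries_eq_mul_integral_of_nonneg a zero_le_one (s := s + 1)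
      (by simpa using hs) hO ha
    have h2 := integral_exp_laplace (A := A) (s := s + 1)
    simp only [hA, Complex.ofReal_sum] at h2
    rw [h2] at h1
    simp only [Complex.ofReal_sub, sub_mul]
    have hBi : IntegrableOn (fun t : ℝ => (B t : ℂ) * Complex.exp (-s * t)) (Ioi 0) := by
      refine (hexp s hs).bdd_mul (c := C) ?_ ?_
      · exact (Complex.measurable_ofReal.comp hBm).aestronglyMeasurable
      · refine Eventually.of_forall fun t => ?_
        rw [Complex.norm_real, Real.norm_of_nonneg (hB0 t)]
        exact hBC t
    rw [integral_sub hBi ((hexp s hs).const_mul _), integral_const_mul,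
      integral_exp_mul_complex_Ioi (by simpa using hs)]
    simp only [hg]
    rw [h1]
    simp only [hB, hA, add_sub_cancel_right]
    simp
    field_simp
    ring
  have hglim : ∀ s ∈ {s : ℂ | 0 ≤ s.re}, ∃ l, Tendsto g (𝓝[{z | 0 < z.re}] s) (𝓝 l) := by
    intro s hs
    have hs' : 0 ≤ s.re := hs
    have hs1 : s + 1 ≠ 0 := fun h0 => by
      have := congrArg Complex.re h0
      simp at this
      linarith
    obtain ⟨l, hl⟩ := h (s + 1) (by simpa using hs')
    have hshift : Tendsto (fun z : ℂ => z + 1) (𝓝[{z | 0 < z.re}] s)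
        (𝓝[{z | 1 < z.re}] (s + 1)) := by
      refine tendsto_nhdsWithin_iff.mpr ⟨?_, ?_⟩
      · exact (Continuous.tendsto (by fun_prop) s).mono_left nhdsWithin_le_nhds
      · exact eventually_of_mem self_mem_nhdsWithin fun z hz => by simpa using hz
    have hid : Tendsto (fun z : ℂ => z + 1) (𝓝[{z | 0 < z.re}] s) (𝓝 (s + 1)) :=
      hshift.mono_right nhdsWithin_le_nhds
    exact ⟨_, ((hl.comp hshift).div hid hs1).sub (tendsto_const_nhds.div hid hs1)⟩
  have hclos : {s : ℂ | 0 ≤ s.re} ⊆ closure {s : ℂ | 0 < s.re} := by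
    rw [Complex.closure_setOfPred_lt_re]
  have hG := continuousOn_extendFrom hclos hglim
  have hGeq : ∀ s : ℂ, 0 < s.re → extendFrom {z : ℂ | 0 < z.re} g s = g s := by
    intro s hs
    obtain ⟨l, hl⟩ := hglim s (le_of_lt hs)
    have : l = g s := (tendsto_nhds_unique (hl.mono_left (pure_le_nhdsWithin hs))
      (tendsto_pure_nhds g s))
    rw [← this]
    exact extendFrom_eq (subset_closure hs) hl
  have hlim : Tendsto B atTop (𝓝 c) := by
    refine tendsto_of_fejer_means hBm ?_ hBb ?_
    · have : (fun t => Real.exp t * B t) = fun t => A (Real.exp t) := by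
        funext t
        simp only [hB]
        rw [mul_left_comm, ← Real.exp_add, add_neg_cancel, Real.exp_zero, mul_one]
      rw [this]
      exact hAmono.comp Real.exp_monotone
    · intro lam hlam
      exact tendsto_integral_mul_fejer (by fun_prop) hBb hG
        (fun s hs => (hGeq s hs).trans (hgint s hs)) hlam
  refine (hlim.comp (Real.tendsto_log_atTop.comp tendsto_natCast_atTop_atTop)).congr' ?_
  filter_upwards [eventually_gt_atTop 0] with N hN
  have hN' : (0 : ℝ) < N := by exact_mod_cast hN
  simp only [Function.comp, hB, hA]
  rw [Real.exp_neg, Real.exp_log hN', Nat.floor_natCast, div_eq_mul_inv]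

end EtaDensity

namespace EtaDensity

open MeasureTheory Topology Set

/-! ### Prime counting from Dirichlet series over primes -/

/-- The function equal to `log p` at the primes `p ∈ S` and `0` elsewhere. -/
noncomputable def primeLog (S : Set ℕ) (n : ℕ) : ℝ :=
  {p | p.Prime ∧ p ∈ S}.indicator (fun n => Real.log n) n

lemma primeLog_nonneg (S : Set ℕ) (n : ℕ) : 0 ≤ primeLog S n :=
  indicator_nonneg (fun n _ => Real.log_natCast_nonneg n) n

lemma hasBoundaryLimits_LSeries {f : ℕ → ℝ} (hf : ∀ n, 0 ≤ f n)
    (hs : Summable fun n : ℕ => f n / n) :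
    HasBoundaryLimits (LSeries fun n => (f n : ℂ)) := by
  refine HasBoundaryLimits.of_continuousOn ?_
  refine continuousOn_tsum (u := fun n : ℕ => f n / n) (fun n => ?_) hs fun n s hs1 => ?_
  · rcases eq_or_ne n 0 with rfl | hn
    · simpa using continuousOn_const
    · simp only [LSeries.term_of_ne_zero hn]
      have hn' : (n : ℂ) ≠ 0 := by exact_mod_cast hn
      exact (Continuous.div continuous_const (continuous_id.const_cpow (Or.inl hn'))
        fun s => by simp [Complex.cpow_eq_zero_iff, hn']).continuousOn
  · rcases eq_or_ne n 0 with rfl | hn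
    · simp
    · have h1 : (1 : ℝ) ≤ n := by exact_mod_cast Nat.one_le_iff_ne_zero.mpr hn
      rw [LSeries.norm_term_eq, if_neg hn, Complex.norm_real, Real.norm_of_nonneg (hf n)]
      refine div_le_div_of_nonneg_left (hf n) (by linarith) ?_
      calc (n : ℝ) = (n : ℝ) ^ (1 : ℝ) := (Real.rpow_one _).symm
        _ ≤ _ := Real.rpow_le_rpow_of_exponent_le h1 hs1

lemma sum_primeLog_univ (N : ℕ) :
    ∑ k ∈ Finset.Icc 1 N, primeLog univ k = Chebyshev.theta N := by
  classical
  rw [Chebyshev.theta_eq_sum_Icc, Nat.floor_natCast, Finset.sum_filter]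
  rw [← Finset.add_sum_Ioc_eq_sum_Icc (Nat.zero_le N)]
  simp only [primeLog, Set.indicator_apply, mem_ofPred_eq, mem_univ, and_true]
  simp [Nat.not_prime_zero]
  rfl

lemma primeLog_le_univ (S : Set ℕ) (n : ℕ) : primeLog S n ≤ primeLog univ n := by
  unfold primeLog
  refine indicator_le_indicator_of_subset ?_ (fun n => Real.log_natCast_nonneg n) n
  exact fun p hp => ⟨hp.1, mem_univ p⟩

lemma sum_primeLog_le (S : Set ℕ) (N : ℕ) :
    ∑ k ∈ Finset.Icc 1 N, primeLog S k ≤ Real.log 4 * N :=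
  (Finset.sum_le_sum fun k _ => primeLog_le_univ S k).trans <| by
    rw [sum_primeLog_univ]
    exact Chebyshev.theta_le_log4_mul_x (Nat.cast_nonneg N)

lemma tendsto_sum_primeLog_div {S : Set ℕ} {c : ℝ}
    (h : HasBoundaryLimits fun s => LSeries (fun n => (primeLog S n : ℂ)) s - c / (s - 1)) :
    Tendsto (fun N : ℕ => (∑ k ∈ Finset.Icc 1 N, primeLog S k) / N) atTop (𝓝 c) :=
  wiener_ikehara (primeLog_nonneg S) (sum_primeLog_le S) h

open ArithmeticFunction in
lemma LSeriesSummable_primeLog (S : Set ℕ) {s : ℂ} (hs : 1 < s.re) :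
    LSeriesSummable (fun n => (primeLog S n : ℂ)) s := by
  refine LSeriesSummable_of_sum_norm_bigO_and_nonneg (r := 1) ?_ (primeLog_nonneg S)
    zero_le_one hs
  refine Asymptotics.IsBigO.of_bound (Real.log 4) (Eventually.of_forall fun N => ?_)
  rw [Real.norm_of_nonneg (Finset.sum_nonneg fun k _ => primeLog_nonneg S k), Real.rpow_one,
    Real.norm_of_nonneg (Nat.cast_nonneg N)]
  exact sum_primeLog_le S N

open ArithmeticFunction in
lemma hasBoundaryLimits_primeLog_residue {q : ℕ} [NeZero q] {a : ZMod q} (ha : IsUnit a) :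
    HasBoundaryLimits fun s => LSeries (fun n => (primeLog {n | (n : ZMod q) = a} n : ℂ)) s -
      (q.totient : ℂ)⁻¹ / (s - 1) := by
  classical
  have h1 := HasBoundaryLimits.of_continuousOn
    (vonMangoldt.continuousOn_LFunctionResidueClassAux (a := a))
  have h2 : HasBoundaryLimits (LSeries fun n =>
      ((if n.Prime then 0 else vonMangoldt.residueClass a n : ℝ) : ℂ)) := by
    refine hasBoundaryLimits_LSeries (fun n => ?_)
      (vonMangoldt.summable_residueClass_non_primes_div a)
    split_ifs
    · exact le_rfl
    · exact vonMangoldt.residueClass_nonneg a n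
  refine (h1.sub h2).congr fun s hs => ?_
  rw [vonMangoldt.eqOn_LFunctionResidueClassAux ha hs]
  simp only
  rw [sub_right_comm]
  congr 1
  rw [sub_eq_iff_eq_add]
  have hsum : (fun n => (vonMangoldt.residueClass a n : ℂ)) =
      (fun n => (primeLog {n | (n : ZMod q) = a} n : ℂ)) +
        fun n => ((if n.Prime then 0 else vonMangoldt.residueClass a n : ℝ) : ℂ) := by
    funext n
    simp only [Pi.add_apply, ← Complex.ofReal_add]
    congr 1
    by_cases hn : n.Prime
    · by_cases hna : (n : ZMod q) = a <;>
        simp [primeLog, vonMangoldt.residueClass, hn, hna, vonMangoldt_apply_prime]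
    · simp [primeLog, hn]
  rw [hsum, LSeries_add (LSeriesSummable_primeLog _ hs)]
  refine LSeriesSummable.of_re_le_re (s := (s.re : ℂ)) (by simp) ?_
  have hs' := LSeriesSummable_of_abscissaOfAbsConv_lt_re
    ((vonMangoldt.abscissaOfAbsConv_residueClass_le_one a).trans_lt
      (by exact_mod_cast hs : (1 : EReal) < s.re))
  refine Summable.of_norm_bounded ((hs'.of_re_le_re (s' := (s.re : ℂ)) (by simp)).norm) fun n => ?_
  refine LSeries.norm_term_le _ ?_
  split_ifs <;> simp

end EtaDensity

namespace EtaDensity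

open MeasureTheory Topology Set

lemma tendsto_primePi_mul_log_div :
    Tendsto (fun x : ℕ => (Nat.primeCounting x * Real.log x - Chebyshev.theta x) / x)
      atTop (𝓝 0) := by
  have h1 := Chebyshev.primeCounting_sub_theta_div_log_isBigO
  have h2 : (fun x : ℝ => (Nat.primeCounting ⌊x⌋₊ - Chebyshev.theta x / Real.log x) *
      (Real.log x / x)) =O[atTop] fun x => x / Real.log x ^ 2 * (Real.log x / x) :=
    h1.mul (Asymptotics.isBigO_refl _ _)
  have h3 : Tendsto (fun x : ℝ => x / Real.log x ^ 2 * (Real.log x / x)) atTop (𝓝 0) := by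
    refine (tendsto_inv_atTop_zero.comp Real.tendsto_log_atTop).congr' ?_
    filter_upwards [eventually_gt_atTop 1] with x hx
    have := Real.log_pos hx
    have : 0 < x := by linarith
    simp only [Function.comp]
    field_simp
  refine ((h2.trans_tendsto h3).comp tendsto_natCast_atTop_atTop).congr' ?_
  filter_upwards [eventually_gt_atTop 1] with x hx
  have hx' : (1 : ℝ) < x := by exact_mod_cast hx
  have := Real.log_pos hx'
  simp only [Function.comp, Nat.floor_natCast]
  field_simp

open Classical in
/-- The number of primes `p ≤ x` with `p ∈ S`. -/
noncomputable def primeCount (S : Set ℕ) (x : ℕ) : ℕ :=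
  ((Finset.Icc 1 x).filter fun p => p.Prime ∧ p ∈ S).card

lemma primeCount_univ (x : ℕ) : primeCount univ x = Nat.primeCounting x := by
  classical
  rw [primeCount, Nat.primeCounting, Nat.primeCounting', Nat.count_eq_card_filter_range]
  congr 1
  ext p
  simp only [Finset.mem_filter, Finset.mem_Icc, mem_univ, and_true, Finset.mem_range]
  exact ⟨fun h => ⟨by omega, h.2⟩, fun h => ⟨⟨h.2.one_lt.le, by omega⟩, h.2⟩⟩

lemma primeCount_mul_log_sub (S : Set ℕ) (x : ℕ) :
    primeCount S x * Real.log x - ∑ k ∈ Finset.Icc 1 x, primeLog S k =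
      ∑ k ∈ Finset.Icc 1 x, {p : ℕ | p.Prime ∧ p ∈ S}.indicator
        (fun k => Real.log x - Real.log k) k := by
  classical
  rw [primeCount, ← nsmul_eq_mul, ← Finset.sum_const, Finset.sum_filter, ← Finset.sum_sub_distrib]
  refine Finset.sum_congr rfl fun k _ => ?_
  simp only [primeLog, Set.indicator_apply, mem_ofPred_eq]
  split_ifs <;> simp

theorem tendsto_primeCount_div {S : Set ℕ} {c : ℝ}
    (h : HasBoundaryLimits fun s => LSeries (fun n => (primeLog S n : ℂ)) s - c / (s - 1)) :
    Tendsto (fun x : ℕ => (primeCount S x : ℝ) / Nat.primeCounting x) atTop (𝓝 c) := by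
  have key : ∀ T : Set ℕ, Tendsto (fun x : ℕ =>
      (primeCount T x * Real.log x - ∑ k ∈ Finset.Icc 1 x, primeLog T k) / x) atTop (𝓝 0) := by
    intro T
    refine squeeze_zero (fun x => ?_) (fun x => ?_) tendsto_primePi_mul_log_div
    · rw [primeCount_mul_log_sub]
      refine div_nonneg (Finset.sum_nonneg fun k hk => ?_) (Nat.cast_nonneg x)
      rw [Finset.mem_Icc] at hk
      refine indicator_apply_nonneg fun _ => sub_nonneg.mpr ?_
      exact Real.log_le_log (by exact_mod_cast hk.1) (by exact_mod_cast hk.2)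
    · rw [← primeCount_univ, ← sum_primeLog_univ, primeCount_mul_log_sub, primeCount_mul_log_sub]
      refine div_le_div_of_nonneg_right (Finset.sum_le_sum fun k hk => ?_) (Nat.cast_nonneg x)
      rw [Finset.mem_Icc] at hk
      refine indicator_le_indicator_apply_of_subset (fun p hp => ⟨hp.1, mem_univ p⟩) ?_
      exact sub_nonneg.mpr (Real.log_le_log (by exact_mod_cast hk.1) (by exact_mod_cast hk.2))
  have hsum : ∀ {T : Set ℕ} {d : ℝ},
      HasBoundaryLimits (fun s => LSeries (fun n => (primeLog T n : ℂ)) s - d / (s - 1)) →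
      Tendsto (fun x : ℕ => primeCount T x * Real.log x / x) atTop (𝓝 d) := by
    intro T d hT
    have := (key T).add (tendsto_sum_primeLog_div hT)
    rw [zero_add] at this
    refine this.congr fun x => ?_
    rw [← add_div, sub_add_cancel]
  have huniv : Tendsto (fun x : ℕ => primeCount univ x * Real.log x / x) atTop (𝓝 1) := by
    refine hsum ?_
    have := hasBoundaryLimits_primeLog_residue (q := 1) (a := 1) isUnit_one
    have he : {n : ℕ | (n : ZMod 1) = 1} = univ := eq_univ_of_forall fun n =>
      Subsingleton.elim (n : ZMod 1) 1
    rw [he] at this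
    simpa using this
  have := (hsum h).div huniv one_ne_zero
  rw [div_one] at this
  refine this.congr' ?_
  filter_upwards [eventually_gt_atTop 1] with x hx
  have hx' : (1 : ℝ) < x := by exact_mod_cast hx
  have := (Real.log_pos hx').ne'
  have : (x : ℝ) ≠ 0 := by linarith
  rw [Pi.div_apply, primeCount_univ]
  field_simp

end EtaDensity

namespace EtaDensity

/-! ### Eta powers modulo two -/

lemma coeff_prod_range_one_sub_X_pow {m N : ℕ} (hm : m ≤ N) :
    (∏ k ∈ Finset.range N, (1 - X ^ (k + 1) : (ZMod 2)[X])).coeff m =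
      (PowerSeries.pentagonalSeries (ZMod 2)).coeff m := by
  have hstab : ∀ j, (∏ k ∈ Finset.range (N + j), (1 - X ^ (k + 1) : (ZMod 2)[X])).coeff m =
      (∏ k ∈ Finset.range N, (1 - X ^ (k + 1) : (ZMod 2)[X])).coeff m := by
    intro j
    induction j with
    | zero => rfl
    | succ j ih =>
      rw [← add_assoc, Finset.prod_range_succ, mul_sub, mul_one, coeff_sub, coeff_mul_X_pow',
        if_neg (by omega), sub_zero, ih]
  obtain ⟨s, hs⟩ := eventually_atTop.mp
    (PowerSeries.coeff_prod_one_sub_X_pow_eventually_eq (ZMod 2) m)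
  obtain ⟨b, hb⟩ := s.exists_nat_subset_range
  have h := hs (Finset.range (N + b)) (hb.trans (Finset.range_subset_range.mpr (by omega)))
  rw [← h, ← hstab b]
  have : (∏ k ∈ Finset.range (N + b), (1 - PowerSeries.X ^ (k + 1) : PowerSeries (ZMod 2))) =
      ((∏ k ∈ Finset.range (N + b), (1 - X ^ (k + 1) : (ZMod 2)[X]) : (ZMod 2)[X]) :
        PowerSeries (ZMod 2)) := by
    rw [← Polynomial.coeToPowerSeries.ringHom_apply, map_prod]
    simp
  rw [this, Polynomial.coeff_coe]

lemma mem_range_pentagonal_iff {m : ℕ} :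
    m ∈ Set.range pentagonal ↔ IsSquare (24 * (m : ℤ) + 1) := by
  constructor
  · rintro ⟨k, rfl⟩
    exact ⟨6 * k - 1, by linarith [two_mul_natCast_pentagonal k]⟩
  · rintro ⟨u, hu⟩
    have key : ∀ k : ℤ, 24 * (m : ℤ) + 1 = (6 * k - 1) * (6 * k - 1) →
        m ∈ Set.range pentagonal := by
      intro k hk
      refine ⟨k, ?_⟩
      have := two_mul_natCast_pentagonal k
      have : (pentagonal k : ℤ) = m := by linarith
      exact_mod_cast this
    have hmod : u % 6 = 1 ∨ u % 6 = 5 := by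
      have h1 : (u * u) % 6 = 1 := by omega
      rw [Int.mul_emod] at h1
      have : 0 ≤ u % 6 ∧ u % 6 < 6 := by omega
      obtain ⟨h2, h3⟩ := this
      interval_cases (u % 6) <;> simp_all
    rcases hmod with h | h
    · exact key (-(u / 6)) (by
        have : u = 6 * (u / 6) + 1 := by omega
        rw [hu]; nth_rewrite 1 2 [this]; ring)
    · exact key (u / 6 + 1) (by
        have : u = 6 * (u / 6) + 5 := by omega
        rw [hu]; nth_rewrite 1 2 [this]; ring)

lemma coeff_prod_eq_ite {m N : ℕ} (hm : m ≤ N) [Decidable (IsSquare (24 * (m : ℤ) + 1))] :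
    (∏ k ∈ Finset.range N, (1 - X ^ (k + 1) : (ZMod 2)[X])).coeff m =
      if IsSquare (24 * (m : ℤ) + 1) then 1 else 0 := by
  rw [coeff_prod_range_one_sub_X_pow hm]
  split_ifs with h
  · have h2 : (PowerSeries.pentagonalSeries (ZMod 2)).coeff m ≠ 0 := fun h0 =>
      PowerSeries.coeff_pentagonalSeries_eq_zero_iff (ZMod 2) |>.mp h0
        (mem_range_pentagonal_iff.mpr h)
    generalize (PowerSeries.pentagonalSeries (ZMod 2)).coeff m = c at h2
    revert c; decide
  · exact PowerSeries.coeff_pentagonalSeries_eq_zero _ fun h' => h (mem_range_pentagonal_iff.mp h')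

lemma expand_two_pow (k : ℕ) (f : (ZMod 2)[X]) : expand (ZMod 2) (2 ^ k) f = f ^ 2 ^ k := by
  induction k with
  | zero => simp
  | succ k ih => rw [pow_succ, expand_mul, ZMod.expand_card, map_pow, ih, ← pow_mul]

open Classical in
lemma coeff_prod_pow {i j d N : ℕ} (hd : d ≤ N) :
    ((∏ k ∈ Finset.range N, (1 - X ^ (k + 1) : (ZMod 2)[X])) ^ (2 ^ i + 2 ^ j)).coeff d =
      (((Finset.HasAntidiagonal.antidiagonal d).filter fun p => ∃ A B : ℕ,
        p.1 = 2 ^ i * A ∧ p.2 = 2 ^ j * B ∧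
        IsSquare (24 * (A : ℤ) + 1) ∧ IsSquare (24 * (B : ℤ) + 1)).card : ZMod 2) := by
  have hexp : ∀ {e m : ℕ}, m ≤ N →
      (expand (ZMod 2) (2 ^ e) (∏ k ∈ Finset.range N, (1 - X ^ (k + 1) : (ZMod 2)[X]))).coeff m =
        if ∃ A : ℕ, m = 2 ^ e * A ∧ IsSquare (24 * (A : ℤ) + 1) then 1 else 0 := by
    intro e m hm
    have he : 0 < 2 ^ e := by positivity
    rw [coeff_expand he]
    by_cases hdvd : 2 ^ e ∣ m
    · obtain ⟨A, rfl⟩ := hdvd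
      rw [if_pos (dvd_mul_right _ _), Nat.mul_div_cancel_left _ he,
        coeff_prod_eq_ite ((Nat.le_mul_of_pos_left A he).trans hm)]
      refine if_congr ⟨fun h => ⟨A, rfl, h⟩, ?_⟩ rfl rfl
      rintro ⟨A', h1, h2⟩
      rwa [Nat.eq_of_mul_eq_mul_left he h1]
    · rw [if_neg hdvd, if_neg]
      rintro ⟨A, rfl, -⟩
      exact hdvd (dvd_mul_right _ _)
  rw [pow_add, ← expand_two_pow, ← expand_two_pow, coeff_mul, Finset.card_filter, Nat.cast_sum]
  refine Finset.sum_congr rfl fun p hp => ?_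
  have hp' := Finset.HasAntidiagonal.mem_antidiagonal.mp hp
  rw [hexp (by omega), hexp (by omega), ite_mul, one_mul, zero_mul, ← ite_and, Nat.cast_ite,
    Nat.cast_one, Nat.cast_zero]
  refine if_congr ?_ rfl rfl
  exact ⟨fun ⟨⟨A, a1, a2⟩, B, b1, b2⟩ => ⟨A, B, a1, b1, a2, b2⟩,
    fun ⟨A, B, a1, b1, a2, b2⟩ => ⟨⟨A, a1, a2⟩, B, b1, b2⟩⟩

lemma sq_eq_of_sq_add_mul_sq_eq {ℓ : ℕ} (hℓ : ℓ.Prime) (hℓ2 : ℓ ≠ 2) {D u w u' w' : ℤ} (hD : 3 ≤ D)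
    (hu : Odd u) (hw : Odd w) (hu' : Odd u') (hw' : Odd w')
    (h : u ^ 2 + D * w ^ 2 = 3 * ℓ) (h' : u' ^ 2 + D * w' ^ 2 = 3 * ℓ) : w ^ 2 = w' ^ 2 := by
  have hp : Prime (ℓ : ℤ) := Nat.prime_iff_prime_int.mp hℓ
  have hℓ0 : (0 : ℤ) < ℓ := by exact_mod_cast hℓ.pos
  have key : ∀ w' : ℤ, Odd w' → u' ^ 2 + D * w' ^ 2 = 3 * ℓ → (ℓ : ℤ) ∣ u * w' - u' * w →
      w ^ 2 = w' ^ 2 := by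
    intro w' hw' h' hdvd
    have heven : Even (u * w' - u' * w) := (hu.mul hw').sub_odd (hu'.mul hw)
    have hcop : IsCoprime (2 : ℤ) ℓ := by
      rw [← Nat.cast_ofNat, Nat.isCoprime_iff_coprime]
      exact (Nat.coprime_primes Nat.prime_two hℓ).mpr (Ne.symm hℓ2)
    obtain ⟨k, hk⟩ := hcop.mul_dvd heven.two_dvd hdvd
    have h9 : (3 * ℓ : ℤ) ^ 2 = (u * u' + D * w * w') ^ 2 + D * (u * w' - u' * w) ^ 2 := by
      rw [pow_two, ← h]
      nth_rewrite 2 [h]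
      rw [← h']
      ring
    rw [hk] at h9
    have hk0 : k = 0 := by
      by_contra hk0
      have h1 : 1 ≤ k ^ 2 := Int.add_one_le_iff.mpr (by positivity : 0 < k ^ 2)
      have h2 : D * (2 * ℓ * k) ^ 2 ≤ (3 * ℓ : ℤ) ^ 2 := by
        rw [h9]; linarith [sq_nonneg (u * u' + D * w * w')]
      have h3 : (ℓ : ℤ) ^ 2 * (4 * (D * k ^ 2)) ≤ ℓ ^ 2 * 9 := by linarith
      have h4 := le_of_mul_le_mul_left h3 (by positivity)
      nlinarith
    rw [hk0, mul_zero, sub_eq_zero] at hk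
    have h5 : (3 * ℓ : ℤ) * (w' ^ 2 - w ^ 2) = 0 := by
      have : (u * w') ^ 2 = (u' * w) ^ 2 := by rw [hk]
      linear_combination this + w ^ 2 * h' - w' ^ 2 * h
    have h6 : (3 * ℓ : ℤ) ≠ 0 := by positivity
    linarith [(mul_eq_zero.mp h5).resolve_left h6]
  have hprod : (ℓ : ℤ) ∣ (u * w' - u' * w) * (u * w' - u' * -w) := by
    refine ⟨3 * (w' ^ 2 - w ^ 2), ?_⟩
    linear_combination w' ^ 2 * h - w ^ 2 * h'
  rcases hp.dvd_or_dvd hprod with hd | hd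
  · exact key w' hw' h' hd
  · have := key (-w') hw'.neg (by rw [neg_sq]; exact h') ((dvd_neg.mpr hd).trans (by
      rw [show -(u * w' - u' * -w) = u * -w' - u' * w by ring]))
    rwa [neg_sq] at this

lemma emod_of_sq_add_sq {ℓ : ℕ} (hℓ : ℓ.Prime) (hℓ5 : 5 ≤ ℓ) {n : ℕ} {u w : ℤ}
    (hw : Odd w) (h : u ^ 2 + 2 * 4 ^ n * w ^ 2 = 3 * ℓ) :
    u ^ 2 % 24 = 1 ∧ w ^ 2 % 24 = 1 := by
  have h3 : ¬ (3 : ℤ) ∣ ℓ := by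
    intro h3
    have := (Nat.prime_dvd_prime_iff_eq Nat.prime_three hℓ).mp (by exact_mod_cast h3)
    omega
  have hodd : Odd (ℓ : ℤ) := by
    exact_mod_cast hℓ.odd_of_ne_two (by omega)
  have hu : Odd u := by
    have h1 : Odd (u ^ 2 + 2 * (4 ^ n * w ^ 2)) := by
      rw [← mul_assoc, h]
      exact Odd.mul (by decide) hodd
    have h2 : Odd (u ^ 2) := by
      rcases Int.even_or_odd (u ^ 2) with h2 | h2
      · exact absurd (h2.add (even_two_mul _)) (Int.not_even_iff_odd.mpr h1)
      · exact h2
    exact (Int.odd_pow' two_ne_zero).mp h2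
  have hmod : (u ^ 2 + 2 * w ^ 2) % 3 = 0 := by
    have h4 : (4 : ℤ) ^ n ≡ 1 [ZMOD 3] := by
      simpa using (show (4 : ℤ) ≡ 1 [ZMOD 3] by decide).pow n
    have h5 : u ^ 2 + 2 * w ^ 2 ≡ 3 * ℓ [ZMOD 3] := by
      rw [← h]
      have := ((h4.mul_left 2).mul_right (w ^ 2)).add_left (u ^ 2)
      rw [mul_one] at this
      exact this.symm
    rw [h5.eq]
    simp
  have hsq : ∀ v : ℤ, v % 3 ≠ 0 → Odd v → v ^ 2 % 24 = 1 := by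
    intro v hv hvo
    have h2 : v % 2 = 1 := Int.odd_iff.mp hvo
    have : v % 24 = 1 ∨ v % 24 = 5 ∨ v % 24 = 7 ∨ v % 24 = 11 ∨ v % 24 = 13 ∨ v % 24 = 17 ∨
      v % 24 = 19 ∨ v % 24 = 23 := by omega
    rw [pow_two, Int.mul_emod]
    rcases this with h | h | h | h | h | h | h | h <;> rw [h] <;> rfl
  have hsq3 : ∀ v : ℤ, (v % 3 = 0 ∧ v ^ 2 % 3 = 0) ∨ (v % 3 ≠ 0 ∧ v ^ 2 % 3 = 1) := by
    intro v
    have : v % 3 = 0 ∨ v % 3 = 1 ∨ v % 3 = 2 := by omega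
    rw [pow_two, Int.mul_emod]
    rcases this with h | h | h <;> simp [h]
  have h9 : ¬ (u % 3 = 0 ∧ w % 3 = 0) := by
    rintro ⟨ha, hb⟩
    obtain ⟨a, rfl⟩ := Int.dvd_of_emod_eq_zero ha
    obtain ⟨b, rfl⟩ := Int.dvd_of_emod_eq_zero hb
    exact h3 ⟨a ^ 2 + 2 * 4 ^ n * b ^ 2, by linarith⟩
  have hu3 := hsq3 u
  have hw3 := hsq3 w
  have : u % 3 ≠ 0 ∧ w % 3 ≠ 0 := by omega
  exact ⟨hsq u this.1 hu, hsq w this.2 hw⟩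

/-- The condition on a prime `ℓ` that controls the coefficient: `ℓ = x ^ 2 + 2 * y ^ 2` with `y / x`
in a prescribed residue class modulo `2 ^ (n + 1)`. -/
def dihedralSet (n : ℕ) : Set ℕ :=
  {ℓ | ∃ x y : ℤ, x ^ 2 + 2 * y ^ 2 = ℓ ∧ (y : ZMod (2 ^ (n + 1))) = x * (1 + 2 ^ n)}

lemma mem_dihedralSet_iff {n ℓ : ℕ} (hodd : Odd ℓ) :
    ℓ ∈ dihedralSet n ↔ ∃ u w : ℤ, Odd w ∧ u ^ 2 + 2 * 4 ^ n * w ^ 2 = 3 * ℓ := by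
  have h42 : (4 : ℤ) ^ n = (2 ^ n) ^ 2 := by rw [← pow_mul, mul_comm, pow_mul]; norm_num
  constructor
  · rintro ⟨x, y, h, hxy⟩
    have hx : Odd x := by
      have h1 : Odd (x ^ 2 + 2 * y ^ 2) := by rw [h]; exact_mod_cast hodd
      rcases Int.even_or_odd x with h2 | h2
      · exact absurd ((h2.pow_of_ne_zero two_ne_zero).add (even_two_mul _))
          (Int.not_even_iff_odd.mpr h1)
      · exact h2
    have hdvd : ((2 ^ (n + 1) : ℕ) : ℤ) ∣ y - x * (1 + 2 ^ n) := by
      rw [← ZMod.intCast_zmod_eq_zero_iff_dvd]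
      push_cast
      rw [hxy, sub_self]
    obtain ⟨k, hk⟩ := hdvd
    push_cast at hk
    refine ⟨x + 2 * y, -(x + 2 * k), (hx.add_even (even_two_mul k)).neg, ?_⟩
    rw [h42, ← h]
    have hy : x - y = 2 ^ n * (-(x + 2 * k)) := by rw [pow_succ] at hk; linarith
    linear_combination (-2 * (x - y) - 2 * (2 ^ n * (-(x + 2 * k)))) * hy
  · rintro ⟨u, w, hw, h⟩
    have key : ∀ u : ℤ, u ^ 2 + 2 * 4 ^ n * w ^ 2 = 3 * ℓ → (3 : ℤ) ∣ u - 2 ^ n * w →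
        ℓ ∈ dihedralSet n := by
      intro u h ⟨j, hj⟩
      have hu : u = 2 ^ n * w + 3 * j := by linarith
      have hx : (2 ^ n * w + j) ^ 2 + 2 * j ^ 2 = ℓ := by
        rw [h42, hu] at h
        linarith
      have hxodd : Odd (2 ^ n * w + j) := by
        have h1 : Odd ((2 ^ n * w + j) ^ 2 + 2 * j ^ 2) := by rw [hx]; exact_mod_cast hodd
        rcases Int.even_or_odd (2 ^ n * w + j) with h2 | h2
        · exact absurd ((h2.pow_of_ne_zero two_ne_zero).add (even_two_mul _))
            (Int.not_even_iff_odd.mpr h1)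
        · exact h2
      refine ⟨2 ^ n * w + j, j, hx, ?_⟩
      obtain ⟨a, ha⟩ := hw.add_odd hxodd
      have h3 : j = (2 ^ n * w + j) * (1 + 2 ^ n) - 2 ^ (n + 1) * a := by
        rw [pow_succ]
        linear_combination -2 ^ n * ha
      have h4 := congrArg (Int.cast : ℤ → ZMod (2 ^ (n + 1))) h3
      have h5 : (2 : ZMod (2 ^ (n + 1))) ^ (n + 1) = 0 := by
        have := ZMod.natCast_self (2 ^ (n + 1))
        exact_mod_cast this
      push_cast at h4 ⊢
      rw [h5, zero_mul, sub_zero] at h4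
      exact h4
    have h3 : (3 : ℤ) ∣ (u - 2 ^ n * w) * (-u - 2 ^ n * w) := by
      refine ⟨4 ^ n * w ^ 2 - ℓ, ?_⟩
      rw [h42] at h ⊢
      linear_combination -h
    rcases Int.prime_three.dvd_or_dvd h3 with h3 | h3
    · exact key u h h3
    · exact key (-u) (by rwa [neg_sq]) h3

theorem etaCoeff_nuR_eq_one_iff {n : ℕ} (hn : 1 ≤ n) {ℓ : ℕ} (hℓ : ℓ.Prime) (hℓ5 : 5 ≤ ℓ)
    (hz : (2 * 4 ^ n + 1) / 3 ≤ ℓ) :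
    etaCoeff (24 * ((2 * 4 ^ n + 1) / 3)) (nuR (24 * ((2 * 4 ^ n + 1) / 3)) ℓ) = 1 ↔
      ℓ ∈ dihedralSet n := by
  classical
  have h4 : 4 ^ n % 3 = 1 := by
    rw [Nat.pow_mod]; simp
  set z := (2 * 4 ^ n + 1) / 3 with hzdef
  have h3z : 3 * z = 2 * 4 ^ n + 1 := by omega
  have hz0 : 0 < z := by omega
  have hg : Nat.gcd 24 (24 * z) = 24 := Nat.gcd_mul_right_right z 24 ▸ by simp
  have hb : 24 * z / 24 = z := Nat.mul_div_cancel_left z (by norm_num)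
  have hnu : nuR (24 * z) ℓ = ℓ := by
    rw [nuR, hg, hb]
    refine le_antisymm (Nat.sInf_le ⟨dvd_rfl, hz, by simp [Nat.mod_one]⟩) ?_
    refine le_csInf ⟨ℓ, dvd_rfl, hz, by simp [Nat.mod_one]⟩ fun N hN => ?_
    exact Nat.le_of_dvd (by have := hN.2.1; omega) hN.1
  have h2p : 24 * z = 2 ^ 3 + 2 ^ (2 * n + 4) := by
    rw [pow_add, pow_mul, show (2 : ℕ) ^ 2 = 4 by norm_num]; omega
  have hcoeff : etaCoeff (24 * z) ℓ =
      (((Finset.HasAntidiagonal.antidiagonal (ℓ - z)).filter fun p => ∃ A B : ℕ,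
        p.1 = 2 ^ 3 * A ∧ p.2 = 2 ^ (2 * n + 4) * B ∧
        IsSquare (24 * (A : ℤ) + 1) ∧ IsSquare (24 * (B : ℤ) + 1)).card : ZMod 2) := by
    rw [etaCoeff, hg, hb, coeff_X_pow_mul', if_pos hz, Finset.prod_pow,
      ← coeff_prod_pow (N := ℓ) (Nat.sub_le ℓ z), ← h2p]
    congr 2
    rw [Finset.range_eq_Ico, Finset.prod_Ico_add' (fun k => (1 - X ^ k : (ZMod 2)[X])) 0 ℓ 1]
    refine Finset.prod_congr ?_ fun k _ => by norm_num
    ext k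
    simp
  have hodd : Odd ℓ := hℓ.odd_of_ne_two (by omega)
  rw [hnu, hcoeff, mem_dihedralSet_iff hodd]
  set s := (Finset.HasAntidiagonal.antidiagonal (ℓ - z)).filter fun p => ∃ A B : ℕ,
        p.1 = 2 ^ 3 * A ∧ p.2 = 2 ^ (2 * n + 4) * B ∧
        IsSquare (24 * (A : ℤ) + 1) ∧ IsSquare (24 * (B : ℤ) + 1) with hs
  have hzZ : (3 * z : ℤ) = 2 * 4 ^ n + 1 := by exact_mod_cast h3z
  have h16 : ((2 ^ (2 * n + 4) : ℕ) : ℤ) = 16 * 4 ^ n := by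
    push_cast
    rw [pow_add, pow_mul]; norm_num; ring
  have hoddsq : ∀ {A : ℕ} {u : ℤ}, 24 * (A : ℤ) + 1 = u * u → Odd u := by
    intro A u h
    have : Odd (u * u) := by rw [← h]; exact ⟨12 * A, by ring⟩
    exact (Int.odd_mul.mp this).1
  have hmem : ∀ p ∈ s, ∃ (B : ℕ) (u w : ℤ), Odd u ∧ Odd w ∧ p.2 = 2 ^ (2 * n + 4) * B ∧
      24 * (B : ℤ) + 1 = w ^ 2 ∧ u ^ 2 + 2 * 4 ^ n * w ^ 2 = 3 * ℓ := by
    intro p hp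
    obtain ⟨hp, A, B, hA, hB, ⟨u, hu⟩, ⟨w, hw⟩⟩ := Finset.mem_filter.mp hp
    have hp := Finset.HasAntidiagonal.mem_antidiagonal.mp hp
    refine ⟨B, u, w, hoddsq hu, hoddsq hw, hB, by rw [hw, pow_two], ?_⟩
    rw [hA, hB] at hp
    have h1 : (2 ^ 3 * A + 2 ^ (2 * n + 4) * B : ℕ) + z = ℓ := by omega
    have h2 : ((2 ^ 3 * A + 2 ^ (2 * n + 4) * B : ℕ) : ℤ) + z = ℓ := by exact_mod_cast h1
    rw [Nat.cast_add, Nat.cast_mul _ B, h16] at h2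
    push_cast at h2
    rw [pow_two, pow_two, ← hu, ← hw]
    linear_combination 3 * h2 - hzZ
  have hcard : s.card ≤ 1 := by
    refine Finset.card_le_one.mpr fun p hp q hq => ?_
    obtain ⟨B, u, w, hu, hw, hB, hBw, h⟩ := hmem p hp
    obtain ⟨B', u', w', hu', hw', hB', hBw', h'⟩ := hmem q hq
    have h43 : (3 : ℤ) ≤ 2 * 4 ^ n := by
      have : (4 : ℤ) ^ 1 ≤ 4 ^ n := pow_le_pow_right₀ (by norm_num) hn
      linarith
    have hww := sq_eq_of_sq_add_mul_sq_eq hℓ (by omega) h43 hu hw hu' hw' h h'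
    have hBB : B = B' := by
      have : (B : ℤ) = B' := by linarith
      exact_mod_cast this
    have h1 := Finset.HasAntidiagonal.mem_antidiagonal.mp (Finset.mem_filter.mp hp).1
    have h2 := Finset.HasAntidiagonal.mem_antidiagonal.mp (Finset.mem_filter.mp hq).1
    have h3 : p.2 = q.2 := by rw [hB, hB', hBB]
    exact Prod.ext (by omega) h3
  constructor
  · intro h
    have hne : s.Nonempty := by
      rw [Finset.nonempty_iff_ne_empty]
      intro h0
      rw [h0] at h
      simp at h
    obtain ⟨p, hp⟩ := hne
    obtain ⟨B, u, w, -, hw, -, -, h⟩ := hmem p hp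
    exact ⟨u, w, hw, h⟩
  · rintro ⟨u, w, hw, h⟩
    obtain ⟨hu24, hw24⟩ := emod_of_sq_add_sq hℓ hℓ5 hw h
    obtain ⟨A, hA⟩ : ∃ A : ℕ, u ^ 2 = 24 * (A : ℤ) + 1 :=
      ⟨(u ^ 2 / 24).toNat, by have := sq_nonneg u; omega⟩
    obtain ⟨B, hB⟩ : ∃ B : ℕ, w ^ 2 = 24 * (B : ℤ) + 1 :=
      ⟨(w ^ 2 / 24).toNat, by have := sq_nonneg w; omega⟩
    have hmem : (2 ^ 3 * A, 2 ^ (2 * n + 4) * B) ∈ s := by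
      refine Finset.mem_filter.mpr ⟨Finset.HasAntidiagonal.mem_antidiagonal.mpr ?_, A, B, rfl, rfl,
        ⟨u, by rw [← hA, pow_two]⟩, ⟨w, by rw [← hB, pow_two]⟩⟩
      have h2 : ((2 ^ 3 * A + 2 ^ (2 * n + 4) * B : ℕ) : ℤ) + z = ℓ := by
        rw [Nat.cast_add, Nat.cast_mul _ B, h16]
        push_cast
        rw [hA, hB] at h
        linarith
      have h1 : (2 ^ 3 * A + 2 ^ (2 * n + 4) * B : ℕ) + z = ℓ := by exact_mod_cast h2
      simp only
      omega
    have : s.card = 1 := le_antisymm hcard (Finset.card_pos.mpr ⟨_, hmem⟩)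
    rw [this, Nat.cast_one]

end EtaDensity

namespace EtaDensity

open Topology

lemma primePi_eq_primeCounting (x : ℕ) : primePi x = Nat.primeCounting x := by
  rw [primePi, Nat.primeCounting, Nat.primeCounting', Nat.count_eq_card_filter_range]

lemma card_le_card_add_of_forall_ge {p q : ℕ → Prop} [DecidablePred p] [DecidablePred q]
    {s t : Finset ℕ} {K : ℕ} (h : ∀ k ∈ s, K ≤ k → p k → k ∈ t ∧ q k) :
    (s.filter p).card ≤ (t.filter q).card + K := by
  have hsub : s.filter p ⊆ t.filter q ∪ Finset.range K := by
    intro k hk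
    obtain ⟨h1, h2⟩ := Finset.mem_filter.mp hk
    rw [Finset.mem_union, Finset.mem_filter, Finset.mem_range]
    exact (lt_or_ge k K).symm.imp_left fun h3 => h k h1 h3 h2
  refine (Finset.card_le_card hsub).trans ((Finset.card_union_le _ _).trans ?_)
  rw [Finset.card_range]

lemma tendsto_etaDensityCount_div {n : ℕ} (hn : 1 ≤ n) {c : ℝ}
    (h : Tendsto (fun x : ℕ => (primeCount (dihedralSet n) x : ℝ) / Nat.primeCounting x)
      atTop (𝓝 c)) :
    Tendsto (fun x : ℕ => (etaDensityCount (24 * ((2 * 4 ^ n + 1) / 3)) x : ℝ) / primePi x)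
      atTop (𝓝 c) := by
  classical
  set K : ℕ := (2 * 4 ^ n + 1) / 3 + 5 with hK
  have h1 : ∀ x, etaDensityCount (24 * ((2 * 4 ^ n + 1) / 3)) x ≤
      primeCount (dihedralSet n) x + K := by
    intro x
    refine card_le_card_add_of_forall_ge fun k hk hkK ⟨hp, h5, he⟩ => ?_
    rw [Finset.mem_range] at hk
    refine ⟨Finset.mem_Icc.mpr ⟨hp.one_lt.le, by omega⟩, hp, ?_⟩
    exact (etaCoeff_nuR_eq_one_iff hn hp h5 (by omega)).mp he
  have h2 : ∀ x, primeCount (dihedralSet n) x ≤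
      etaDensityCount (24 * ((2 * 4 ^ n + 1) / 3)) x + K := by
    intro x
    refine card_le_card_add_of_forall_ge fun k hk hkK ⟨hp, he⟩ => ?_
    rw [Finset.mem_Icc] at hk
    refine ⟨Finset.mem_range.mpr (by omega), hp, by omega, ?_⟩
    exact (etaCoeff_nuR_eq_one_iff hn hp (by omega) (by omega)).mpr he
  have hpi : Tendsto (fun x : ℕ => (K : ℝ) / Nat.primeCounting x) atTop (𝓝 0) :=
    tendsto_const_nhds.div_atTop
      (tendsto_natCast_atTop_atTop.comp Nat.tendsto_primeCounting)
  have hdiff : Tendsto (fun x : ℕ =>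
      (etaDensityCount (24 * ((2 * 4 ^ n + 1) / 3)) x : ℝ) / primePi x -
        (primeCount (dihedralSet n) x : ℝ) / Nat.primeCounting x) atTop (𝓝 0) := by
    refine squeeze_zero_norm (fun x => ?_) hpi
    rw [primePi_eq_primeCounting, ← sub_div, norm_div, Real.norm_natCast]
    refine div_le_div_of_nonneg_right ?_ (Nat.cast_nonneg _)
    have h1' : (etaDensityCount (24 * ((2 * 4 ^ n + 1) / 3)) x : ℝ) ≤
      primeCount (dihedralSet n) x + K := by exact_mod_cast h1 x
    have h2' : (primeCount (dihedralSet n) x : ℝ) ≤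
      etaDensityCount (24 * ((2 * 4 ^ n + 1) / 3)) x + K := by exact_mod_cast h2 x
    rw [Real.norm_eq_abs, abs_le]
    constructor <;> linarith
  simpa using hdiff.add h

end EtaDensity

namespace EtaDensity

/-! ### The ring `ℤ[√-2]` -/

/-- The ring `ℤ[√-2]`. -/
abbrev QInt := ℤ√(-2)

namespace QInt

/-- The norm `a ^ 2 + 2 * b ^ 2` of `a + b√-2`, as a natural number. -/
def nm (α : QInt) : ℕ := α.norm.natAbs

lemma norm_eq (α : QInt) : α.norm = α.re ^ 2 + 2 * α.im ^ 2 := by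
  rw [Zsqrtd.norm_def]; ring

lemma zsqrtd_norm_nonneg (α : QInt) : 0 ≤ α.norm := Zsqrtd.norm_nonneg (by norm_num) α

lemma natCast_nm (α : QInt) : (nm α : ℤ) = α.re ^ 2 + 2 * α.im ^ 2 := by
  rw [nm, Int.natAbs_of_nonneg (zsqrtd_norm_nonneg α), norm_eq]

lemma natCast_nm_real (α : QInt) : (nm α : ℝ) = (α.re : ℝ) ^ 2 + 2 * (α.im : ℝ) ^ 2 := by
  exact_mod_cast congrArg (Int.cast : ℤ → ℝ) (natCast_nm α)

lemma nm_mul (α β : QInt) : nm (α * β) = nm α * nm β := by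
  rw [nm, Zsqrtd.norm_mul, Int.natAbs_mul]; rfl

@[simp] lemma nm_neg (α : QInt) : nm (-α) = nm α := by rw [nm, Zsqrtd.norm_neg]; rfl

@[simp] lemma nm_star (α : QInt) : nm (star α) = nm α := by rw [nm, Zsqrtd.norm_conj]; rfl

@[simp] lemma nm_one : nm 1 = 1 := by simp [nm]

@[simp] lemma nm_zero : nm 0 = 0 := by simp [nm]

lemma nm_eq_zero_iff {α : QInt} : nm α = 0 ↔ α = 0 := by
  rw [nm, Int.natAbs_eq_zero, Zsqrtd.norm_eq_zero_iff (by norm_num)]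

lemma nm_pos {α : QInt} (h : α ≠ 0) : 0 < nm α :=
  Nat.pos_of_ne_zero fun h0 => h (nm_eq_zero_iff.mp h0)

lemma isUnit_iff {α : QInt} : IsUnit α ↔ nm α = 1 := Zsqrtd.norm_eq_one_iff.symm

lemma nm_eq_one_iff {α : QInt} : nm α = 1 ↔ α = 1 ∨ α = -1 := by
  constructor
  · intro h
    have h1 := natCast_nm α
    rw [h] at h1
    have hy : α.im = 0 := by
      by_contra hy
      have := Int.one_le_abs hy
      push_cast at h1
      nlinarith [sq_abs α.im, sq_nonneg α.re]
    have hx : α.re = 1 ∨ α.re = -1 := by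
      rw [hy] at h1
      exact sq_eq_one_iff.mp (by push_cast at h1; linarith)
    rcases hx with hx | hx
    · left; ext <;> simp [hx, hy]
    · right; ext <;> simp [hx, hy]
  · rintro (rfl | rfl) <;> simp

noncomputable instance : Div QInt :=
  ⟨fun x y => ⟨round ((x * star y).re / y.norm : ℚ), round ((x * star y).im / y.norm : ℚ)⟩⟩

lemma div_def (x y : QInt) :
    x / y = ⟨round ((x * star y).re / y.norm : ℚ), round ((x * star y).im / y.norm : ℚ)⟩ := rfl

noncomputable instance : Mod QInt := ⟨fun x y => x - y * (x / y)⟩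

lemma mod_def (x y : QInt) : x % y = x - y * (x / y) := rfl

lemma nm_mod_lt (x : QInt) {y : QInt} (hy : y ≠ 0) : nm (x % y) < nm y := by
  have hN : (0 : ℤ) < y.norm := by
    have := nm_pos hy
    rw [nm] at this
    have h := zsqrtd_norm_nonneg y
    omega
  have hNq : (0 : ℚ) < y.norm := by exact_mod_cast hN
  set u : ℚ := (x * star y).re / y.norm with hu
  set v : ℚ := (x * star y).im / y.norm with hv
  have hu1 := abs_sub_round u
  have hv1 := abs_sub_round v
  have hmul : ((x % y) * star y) = x * star y - (y.norm : QInt) * (x / y) := by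
    rw [mod_def, sub_mul, Zsqrtd.norm_eq_mul_conj]; ring
  have hre : (((x % y) * star y).re : ℚ) = y.norm * (u - round u) := by
    rw [hmul, Zsqrtd.re_sub, div_def]
    simp only [Zsqrtd.re_mul, Zsqrtd.re_intCast, Zsqrtd.im_intCast]
    push_cast
    rw [mul_sub, hu, mul_div_cancel₀ _ hNq.ne']
    simp
  have him : (((x % y) * star y).im : ℚ) = y.norm * (v - round v) := by
    rw [hmul, Zsqrtd.im_sub, div_def]
    simp only [Zsqrtd.im_mul, Zsqrtd.re_intCast, Zsqrtd.im_intCast]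
    push_cast
    rw [mul_sub, hv, mul_div_cancel₀ _ hNq.ne']
    simp
  have hn : (nm (x % y) : ℚ) * nm y =
      (((x % y) * star y).re : ℚ) ^ 2 + 2 * (((x % y) * star y).im : ℚ) ^ 2 := by
    have := natCast_nm ((x % y) * star y)
    rw [nm_mul, nm_star] at this
    exact_mod_cast this
  have hyq : (nm y : ℚ) = y.norm := by
    have : (nm y : ℤ) = y.norm := Int.natAbs_of_nonneg (zsqrtd_norm_nonneg y)
    exact_mod_cast this
  rw [hre, him, hyq] at hn
  have hu2 : (u - round u) ^ 2 ≤ 1 / 4 := by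
    rw [← sq_abs]; nlinarith [abs_nonneg (u - round u)]
  have hv2 : (v - round v) ^ 2 ≤ 1 / 4 := by
    rw [← sq_abs]; nlinarith [abs_nonneg (v - round v)]
  have key : (nm (x % y) : ℚ) = y.norm * ((u - round u) ^ 2 + 2 * (v - round v) ^ 2) := by
    apply mul_right_cancel₀ hNq.ne'
    rw [hn]; ring
  have : (nm (x % y) : ℚ) < nm y := by
    rw [key, hyq]
    nlinarith
  exact_mod_cast this

instance : Nontrivial QInt := ⟨⟨0, 1, by decide⟩⟩

/-- `ℤ[√-2]` is a Euclidean domain. -/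
noncomputable abbrev euclideanDomain : EuclideanDomain QInt :=
  { (inferInstance : CommRing QInt), (inferInstance : Nontrivial QInt) with
    quotient := (· / ·)
    remainder := (· % ·)
    quotient_zero := fun x => by
      simp only [div_def]
      ext <;> simp
    quotient_mul_add_remainder_eq := fun _ _ => by simp [mod_def]
    r := fun x y => nm x < nm y
    r_wellFounded := (measure nm).wf
    remainder_lt := fun x _ h => nm_mod_lt x h
    mul_left_not_lt := fun a b hb => by
      rw [nm_mul, not_lt]
      exact Nat.le_mul_of_pos_right _ (nm_pos hb) }

instance : IsDomain QInt :=
  let _ := euclideanDomain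
  inferInstanceAs (IsDomain QInt)

instance : IsPrincipalIdealRing QInt :=
  @EuclideanDomain.to_principal_ideal_domain _ euclideanDomain

lemma nm_ge_two_of_prime {π : QInt} (h : Prime π) : 2 ≤ nm π := by
  have h0 := nm_pos h.ne_zero
  have h1 : nm π ≠ 1 := fun h1 => h.not_isUnit (isUnit_iff.mpr h1)
  omega

lemma prime_of_nm_prime {π : QInt} (h : (nm π).Prime) : Prime π := by
  rw [← irreducible_iff_prime]
  refine ⟨fun hu => h.one_lt.ne' (isUnit_iff.mp hu), fun a b hab => ?_⟩
  rw [hab, nm_mul] at h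
  rcases Nat.prime_mul_iff.mp h with ⟨-, h1⟩ | ⟨-, h1⟩
  · exact Or.inr (isUnit_iff.mpr h1)
  · exact Or.inl (isUnit_iff.mpr h1)

lemma associated_iff {α β : QInt} : Associated α β ↔ β = α ∨ β = -α := by
  constructor
  · rintro ⟨u, hu⟩
    rcases nm_eq_one_iff.mp (isUnit_iff.mp u.isUnit) with h | h
    · left; rw [← hu, h, mul_one]
    · right; rw [← hu, h]; ring
  · rintro (rfl | rfl)
    · rfl
    · exact (Associated.refl α).neg_right

/-- A prime of `ℤ[√-2]` whose norm is not a rational prime is a rational integer. -/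
lemma im_eq_zero_of_prime {π : QInt} (h : Prime π) (hn : ¬ (nm π).Prime) : π.im = 0 := by
  have hdvd : π ∣ ((nm π : ℕ) : QInt) := by
    refine ⟨star π, ?_⟩
    rw [← Zsqrtd.norm_eq_mul_conj, ← Int.natAbs_of_nonneg (zsqrtd_norm_nonneg π), Int.cast_natCast]
    rfl
  have hfac : ∃ p : ℕ, p.Prime ∧ π ∣ (p : QInt) := by
    rw [← Nat.prod_primeFactorsList (nm_pos h.ne_zero).ne', Nat.cast_list_prod,
      h.dvd_prod_iff] at hdvd
    obtain ⟨a, ha, hda⟩ := hdvd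
    obtain ⟨p, hp, rfl⟩ := List.mem_map.mp ha
    exact ⟨p, Nat.prime_of_mem_primeFactorsList hp, hda⟩
  obtain ⟨p, hp, δ, hδ⟩ := hfac
  have hnp : nm (p : QInt) = p ^ 2 := by
    rw [nm, Zsqrtd.norm_natCast, ← Nat.cast_mul, Int.natAbs_natCast, sq]
  rw [hδ, nm_mul] at hnp
  obtain ⟨k, hk, hk'⟩ := (Nat.dvd_prime_pow hp).mp (Dvd.intro _ hnp)
  have hk2 : k = 2 := by
    have h2 := nm_ge_two_of_prime h
    interval_cases k
    · simp at hk'; omega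
    · rw [pow_one] at hk'; exact absurd (hk' ▸ hp) hn
    · rfl
  rw [hk', hk2] at hnp
  have hδ1 : nm δ = 1 := by
    have : 0 < p ^ 2 := pow_pos hp.pos 2
    nlinarith
  rcases nm_eq_one_iff.mp hδ1 with rfl | rfl
  · rw [mul_one] at hδ
    rw [← hδ]; simp
  · have : π = -(p : QInt) := by rw [hδ]; ring
    rw [this]; simp

/-- The elements whose norm is a given rational prime. -/
lemma eq_or_of_nm_eq_prime {α β : QInt} (hα : (nm α).Prime) (h : nm β = nm α) :
    β = α ∨ β = -α ∨ β = star α ∨ β = -star α := by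
  have key : ∀ γ : QInt, nm γ = nm α → γ ∣ α → α = γ ∨ α = -γ := by
    rintro γ hγ ⟨δ, hδ⟩
    have h1 : nm δ = 1 := by
      have := nm_mul γ δ
      rw [← hδ, hγ] at this
      exact Nat.eq_of_mul_eq_mul_left hα.pos (by omega)
    rcases nm_eq_one_iff.mp h1 with rfl | rfl
    · left; rw [hδ, mul_one]
    · right; rw [hδ]; ring
  have hβ : Prime β := prime_of_nm_prime (h ▸ hα)
  have hdvd : β ∣ α * star α := by
    refine ⟨star β, ?_⟩
    rw [← Zsqrtd.norm_eq_mul_conj, ← Zsqrtd.norm_eq_mul_conj,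
      ← Int.natAbs_of_nonneg (zsqrtd_norm_nonneg α), ← Int.natAbs_of_nonneg (zsqrtd_norm_nonneg β)]
    change ((nm α : ℤ) : QInt) = ((nm β : ℤ) : QInt)
    rw [h]
  rcases hβ.dvd_or_dvd hdvd with h1 | h1
  · rcases key β h h1 with rfl | rfl <;> simp
  · have h2 : star β ∣ α := by
      obtain ⟨δ, hδ⟩ := h1
      exact ⟨star δ, by rw [← star_star α, hδ, star_mul, mul_comm]⟩
    rcases key (star β) (by rw [nm_star, h]) h2 with rfl | rfl <;> simp

lemma odd_re_of_odd_nm {α : QInt} (h : Odd (nm α)) : Odd α.re := by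
  have h1 := natCast_nm α
  have h2 : Odd (nm α : ℤ) := by exact_mod_cast h
  rw [h1, Int.odd_add] at h2
  have h3 : Odd (α.re ^ 2) := h2.mpr (even_two_mul _)
  exact (Int.odd_pow.mp h3).resolve_right (by norm_num)

/-- The fibre of the norm over an odd rational prime has at most one orbit under units and
conjugation, and this orbit has four elements. -/
lemma setOf_nm_eq {α : QInt} (hα : (nm α).Prime) (h2 : Odd (nm α)) :
    {β | nm β = nm α} = (({α, -α, star α, -star α} : Finset QInt) : Set QInt) ∧
      α ≠ -α ∧ α ≠ star α ∧ α ≠ -star α := by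
  have hre : Odd α.re := odd_re_of_odd_nm h2
  have hre0 : α.re ≠ 0 := by rintro h; rw [h] at hre; exact absurd hre (by decide)
  have him : α.im ≠ 0 := by
    intro h
    have h1 := natCast_nm α
    rw [h] at h1
    have h3 : nm α = α.re.natAbs ^ 2 := by
      zify; rw [h1, sq_abs]; ring
    rw [h3] at hα
    exact Nat.Prime.not_prime_pow le_rfl hα
  refine ⟨?_, ?_, ?_, ?_⟩
  · ext β
    simp only [Set.mem_ofPred_eq, Finset.coe_insert, Finset.coe_singleton, Set.mem_insert_iff,
      Set.mem_singleton_iff]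
    refine ⟨eq_or_of_nm_eq_prime hα, ?_⟩
    rintro (rfl | rfl | rfl | rfl) <;> simp
  · intro h; have := congrArg Zsqrtd.re h; simp at this; omega
  · intro h; have := congrArg Zsqrtd.im h; simp at this; omega
  · intro h; have := congrArg Zsqrtd.re h; simp at this; omega

lemma exists_nm_eq {p : ℕ} (hp : p.Prime) (h : p % 8 = 1 ∨ p % 8 = 3) : ∃ α : QInt, nm α = p := by
  have := Fact.mk hp
  have hp2 : p ≠ 2 := by rintro rfl; simp at h
  obtain ⟨y, hy⟩ := (ZMod.exists_sq_eq_neg_two_iff hp2).mpr h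
  obtain ⟨x, rfl⟩ := ZMod.intCast_surjective y
  have hdvd : (p : ℤ) ∣ x ^ 2 + 2 := by
    rw [← ZMod.intCast_zmod_eq_zero_iff_dvd]
    push_cast
    rw [sq, ← hy]; ring
  have hfac : (p : QInt) ∣ (⟨x, 1⟩ : QInt) * ⟨x, -1⟩ := by
    obtain ⟨k, hk⟩ := hdvd
    refine ⟨(k : QInt), ?_⟩
    ext
    · simp; linarith
    · simp
  have hnp : nm (p : QInt) = p ^ 2 := by
    rw [nm, Zsqrtd.norm_natCast, ← Nat.cast_mul, Int.natAbs_natCast, sq]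
  have hnot : ∀ a b : ℤ, (b = 1 ∨ b = -1) → ¬ (p : QInt) ∣ (⟨a, b⟩ : QInt) := by
    rintro a b hb ⟨δ, hδ⟩
    have h1 := congrArg Zsqrtd.im hδ
    simp at h1
    have h3 : (p : ℤ) ∣ b := Dvd.intro _ h1.symm
    have h4 : (p : ℤ) ∣ 1 := by rcases hb with rfl | rfl <;> simpa using h3
    exact hp.one_lt.ne' (by exact_mod_cast Int.eq_one_of_dvd_one (by positivity) h4)
  have hnprime : ¬ Prime (p : QInt) := fun hP =>
    (hP.dvd_or_dvd hfac).elim (hnot _ _ (Or.inl rfl)) (hnot _ _ (Or.inr rfl))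
  rw [← irreducible_iff_prime, irreducible_iff] at hnprime
  have hnu : ¬ IsUnit (p : QInt) := by
    rw [isUnit_iff, hnp]
    have := hp.one_lt
    nlinarith
  push Not at hnprime
  obtain ⟨a, b, hab, ha, hb⟩ := hnprime hnu
  rw [isUnit_iff] at ha hb
  rw [hab, nm_mul] at hnp
  exact ⟨a, ((hp.mul_eq_prime_sq_iff ha hb).mp hnp).1⟩

lemma nm_mod_eight {α : QInt} (h : Odd (nm α)) :
    (Even α.im ∧ nm α % 8 = 1) ∨ (Odd α.im ∧ nm α % 8 = 3) := by
  obtain ⟨a, ha⟩ := odd_re_of_odd_nm h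
  have h1 := natCast_nm α
  obtain ⟨c, hc⟩ := Int.even_mul_succ_self a
  rcases Int.even_or_odd' α.im with ⟨b, hb | hb⟩
  · left
    refine ⟨⟨b, by omega⟩, ?_⟩
    have : (nm α : ℤ) = 8 * (c + b ^ 2) + 1 := by
      rw [h1, ha, hb]; linear_combination 4 * hc
    omega
  · right
    refine ⟨⟨b, hb⟩, ?_⟩
    have : (nm α : ℤ) = 8 * (c + b ^ 2 + b) + 3 := by
      rw [h1, ha, hb]; linear_combination 4 * hc
    omega

end QInt

end EtaDensity

namespace EtaDensity

namespace QInt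

/-! ### Valuations weighted by logarithms of norms -/

open Classical in
/-- `log (nm π)` if `π` is a prime of `ℤ[√-2]`, and zero otherwise. -/
noncomputable def lam (π : QInt) : ℝ := if Prime π then Real.log (nm π) else 0

open Classical in
/-- The `π`-adic valuation of `γ` times `log (nm π)`, for a prime `π` of `ℤ[√-2]`. -/
noncomputable def logVal (π γ : QInt) : ℝ :=
  if Prime π then multiplicity π γ * Real.log (nm π) else 0

lemma lam_nonneg (π : QInt) : 0 ≤ lam π := by
  unfold lam; split_ifs <;> [exact Real.log_natCast_nonneg _; rfl]

lemma logVal_nonneg (π γ : QInt) : 0 ≤ logVal π γ := by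
  unfold logVal
  split_ifs <;> [exact mul_nonneg (Nat.cast_nonneg _) (Real.log_natCast_nonneg _); rfl]

lemma finiteMultiplicity {π γ : QInt} (hπ : Prime π) (hγ : γ ≠ 0) : FiniteMultiplicity π γ :=
  FiniteMultiplicity.of_prime_left hπ hγ

lemma logVal_mul {π α β : QInt} (hα : α ≠ 0) (hβ : β ≠ 0) :
    logVal π (α * β) = logVal π α + logVal π β := by
  unfold logVal
  split_ifs with h
  · rw [multiplicity_mul h (finiteMultiplicity h (mul_ne_zero hα hβ))]
    push_cast; ring
  · simp

lemma logVal_self (π : QInt) : logVal π π = lam π := by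
  unfold logVal lam
  split_ifs with h
  · rw [multiplicity_self]; simp
  · rfl

lemma logVal_eq_zero_of_not_dvd {π γ : QInt} (h : ¬ π ∣ γ) : logVal π γ = 0 := by
  unfold logVal
  split_ifs
  · rw [multiplicity_eq_zero.mpr h]; simp
  · rfl

lemma hasSum_logVal {γ : QInt} (hγ : γ ≠ 0) :
    HasSum (fun π => logVal π γ) (2 * Real.log (nm γ)) := by
  induction γ using UniqueFactorizationMonoid.induction_on_prime with
  | h₁ => exact absurd rfl hγ
  | h₂ u hu =>
    rw [isUnit_iff.mp hu]
    simp only [Nat.cast_one, Real.log_one, mul_zero]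
    have h0 : ∀ π, logVal π u = 0 := by
      intro π
      by_cases h : Prime π
      · exact logVal_eq_zero_of_not_dvd fun hd => h.not_isUnit (isUnit_of_dvd_unit hd hu)
      · exact if_neg h
    simp only [h0]
    exact hasSum_zero
  | h₃ a p ha hp ih =>
    have hsum : HasSum (fun π => logVal π p) (2 * Real.log (nm p)) := by
      have hne : p ≠ -p := fun h => hp.ne_zero (by
        have h1 := congrArg Zsqrtd.re h
        have h2 := congrArg Zsqrtd.im h
        simp only [Zsqrtd.re_neg, Zsqrtd.im_neg] at h1 h2
        ext <;> simp <;> omega)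
      have h : HasSum (fun π => logVal π p) (∑ π ∈ {p, -p}, logVal π p) :=
        hasSum_sum_of_ne_finset_zero (by
        intro π hπ
        simp only [Finset.mem_insert, Finset.mem_singleton, not_or] at hπ
        by_cases h : Prime π
        · refine logVal_eq_zero_of_not_dvd fun hd => ?_
          rcases associated_iff.mp ((h.associated_of_dvd hp hd).symm) with h1 | h1
          · exact hπ.1 h1
          · exact hπ.2 h1
        · exact if_neg h)
      rw [Finset.sum_pair hne, logVal_self] at h
      have h2 : logVal (-p) p = lam p := by
        have := logVal_mul (π := -p) (α := -1) (β := -p) (by simp) (neg_ne_zero.mpr hp.ne_zero)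
        rw [neg_one_mul, neg_neg, logVal_self,
          logVal_eq_zero_of_not_dvd (γ := -1), zero_add] at this
        · rw [this, lam, lam, nm_neg, if_pos hp.neg, if_pos hp]
        · intro hd
          exact hp.neg.not_isUnit (isUnit_of_dvd_unit hd isUnit_one.neg)
      rw [h2, ← two_mul] at h
      rwa [lam, if_pos hp] at h
    have := hsum.add (ih ha)
    simp only [← logVal_mul hp.ne_zero ha] at this
    convert this using 1
    rw [nm_mul, Nat.cast_mul, Real.log_mul]
    · ring
    · exact_mod_cast (nm_pos hp.ne_zero).ne'
    · exact_mod_cast (nm_pos ha).ne'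

end QInt

end EtaDensity

namespace EtaDensity

namespace QInt

open Topology

/-! ### Dirichlet series over `ℤ[√-2]` -/

lemma summable_nm_rpow {σ : ℝ} (hσ : 1 < σ) : Summable fun α : QInt => (nm α : ℝ) ^ (-σ) := by
  have h := EisensteinSeries.summable_one_div_norm_rpow (k := 2 * σ) (by linarith)
  have hinj : Function.Injective fun α : QInt => ![α.re, α.im] := by
    intro α β h
    have h0 := congrFun h 0
    have h1 := congrFun h 1
    ext
    · simpa using h0
    · simpa using h1
  refine Summable.of_nonneg_of_le (fun _ => by positivity) (fun α => ?_) (h.comp_injective hinj)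
  simp only [Function.comp]
  by_cases hα : α = 0
  · subst hα
    simp only [nm_zero, Nat.cast_zero]
    rw [Real.zero_rpow (by linarith)]
    positivity
  have hpos : (0 : ℝ) < ‖(![α.re, α.im] : Fin 2 → ℤ)‖ := by
    rw [norm_pos_iff]
    intro h
    exact hα (hinj (by simpa using h))
  rw [show -(2 * σ) = 2 * -σ by ring, Real.rpow_mul hpos.le, Real.rpow_two]
  refine Real.rpow_le_rpow_of_nonpos (by positivity) ?_ (by linarith)
  rw [natCast_nm_real]
  have h2 : ‖(![α.re, α.im] : Fin 2 → ℤ)‖ ≤ max |(α.re : ℝ)| |(α.im : ℝ)| := by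
    rw [pi_norm_le_iff_of_nonneg (by positivity)]
    intro i
    fin_cases i
    · simp [Int.norm_eq_abs]
    · simp [Int.norm_eq_abs]
  refine (pow_le_pow_left₀ hpos.le h2 2).trans ?_
  rcases max_choice |(α.re : ℝ)| |(α.im : ℝ)| with h | h <;> rw [h, sq_abs] <;>
    nlinarith [sq_nonneg (α.re : ℝ), sq_nonneg (α.im : ℝ)]

lemma log_nm_nonneg (α : QInt) : 0 ≤ Real.log (nm α) := Real.log_natCast_nonneg _

lemma summable_log_nm_mul_rpow {σ : ℝ} (hσ : 1 < σ) :
    Summable fun α : QInt => Real.log (nm α) * (nm α : ℝ) ^ (-σ) := by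
  set ε := (σ - 1) / 2 with hε
  have hε0 : 0 < ε := by rw [hε]; linarith
  refine Summable.of_nonneg_of_le (fun α => mul_nonneg (log_nm_nonneg α) (by positivity))
    (fun α => ?_) ((summable_nm_rpow (σ := σ - ε) (by rw [hε]; linarith)).mul_left (1 / ε))
  by_cases hα : α = 0
  · subst hα
    simp only [nm_zero, Nat.cast_zero, Real.log_zero, zero_mul]
    positivity
  have hpos : (0 : ℝ) < nm α := by exact_mod_cast nm_pos hα
  calc Real.log (nm α) * (nm α : ℝ) ^ (-σ) ≤ ((nm α : ℝ) ^ ε / ε) * (nm α : ℝ) ^ (-σ) :=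
        mul_le_mul_of_nonneg_right (Real.log_le_rpow_div hpos.le hε0) (by positivity)
    _ = 1 / ε * (nm α : ℝ) ^ (-(σ - ε)) := by
        rw [show -(σ - ε) = ε + -σ by ring, Real.rpow_add hpos]; ring

variable (χ : QInt →*₀ ℂ)

/-- The general term of the Dirichlet series over `ℤ[√-2]` attached to `χ`. -/
noncomputable def term (s : ℂ) (α : QInt) : ℂ := χ α * (nm α : ℂ) ^ (-s)

/-- The Dirichlet series over `ℤ[√-2]` attached to `χ`. -/
noncomputable def lseries (s : ℂ) : ℂ := ∑' α, term χ s α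

@[simp] lemma term_zero (s : ℂ) : term χ s 0 = 0 := by simp [term]

lemma term_mul (s : ℂ) (α β : QInt) : term χ s (α * β) = term χ s α * term χ s β := by
  rw [term, term, term, map_mul, nm_mul, Nat.cast_mul, Complex.natCast_mul_natCast_cpow]
  ring

variable {χ}

lemma norm_term_le (hχ : ∀ α, ‖χ α‖ ≤ 1) (s : ℂ) (α : QInt) :
    ‖term χ s α‖ ≤ (nm α : ℝ) ^ (-s.re) := by
  by_cases hα : α = 0
  · subst hα; rw [term_zero, norm_zero]; positivity
  rw [term, norm_mul, Complex.norm_natCast_cpow_of_pos (nm_pos hα), Complex.neg_re]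
  exact mul_le_of_le_one_left (by positivity) (hχ α)

lemma nm_rpow_le {σ τ : ℝ} (h : σ ≤ τ) (hσ : 0 < σ) (α : QInt) :
    (nm α : ℝ) ^ (-τ) ≤ (nm α : ℝ) ^ (-σ) := by
  by_cases hα : α = 0
  · subst hα
    simp only [nm_zero, Nat.cast_zero]
    rw [Real.zero_rpow (by linarith), Real.zero_rpow (by linarith)]
  exact Real.rpow_le_rpow_of_exponent_le (by exact_mod_cast nm_pos hα) (by linarith)

lemma summable_norm_term (hχ : ∀ α, ‖χ α‖ ≤ 1) {s : ℂ} (hs : 1 < s.re) :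
    Summable fun α => ‖term χ s α‖ :=
  (summable_nm_rpow hs).of_nonneg_of_le (fun _ => norm_nonneg _) (norm_term_le hχ s)

lemma hasDerivAt_term (s : ℂ) (α : QInt) :
    HasDerivAt (fun z => term χ z α) (-(Real.log (nm α) : ℂ) * term χ s α) s := by
  by_cases hα : α = 0
  · subst hα; simpa using hasDerivAt_const s (0 : ℂ)
  have h0 : (nm α : ℂ) ≠ 0 := by exact_mod_cast (nm_pos hα).ne'
  have := (((hasDerivAt_neg s).const_cpow (Or.inl h0)).const_mul (χ α))
  refine this.congr_deriv ?_
  rw [term, Complex.natCast_log]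
  ring

lemma hasSum_deriv_lseries (hχ : ∀ α, ‖χ α‖ ≤ 1) {s : ℂ} (hs : 1 < s.re) :
    HasSum (fun α => -(Real.log (nm α) : ℂ) * term χ s α) (deriv (lseries χ) s) := by
  obtain ⟨δ, h1, hδ⟩ := exists_between hs
  have hU : IsOpen {z : ℂ | δ < z.re} := isOpen_lt continuous_const Complex.continuous_re
  have h := Complex.hasSum_deriv_of_summable_norm (F := fun α z => term χ z α)
    (summable_nm_rpow h1)
    (fun α z _ => (hasDerivAt_term z α).differentiableAt.differentiableWithinAt) hU
    (fun α z hz => (norm_term_le hχ z α).trans (nm_rpow_le (le_of_lt hz) (by linarith) α)) hδ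
  simpa only [(hasDerivAt_term s _).deriv] using! h

lemma norm_cpow_sub_cpow_le {m a b : ℝ} (hm : 1 ≤ m) (ha : m ≤ a) (hb : m ≤ b) {s : ℂ}
    (hs : 3 / 4 ≤ s.re) :
    ‖(a : ℂ) ^ (-s) - (b : ℂ) ^ (-s)‖ ≤ ‖s‖ * m ^ (-(7 / 4) : ℝ) * |a - b| := by
  have hs0 : -s ≠ 0 := by
    rw [neg_ne_zero]; rintro rfl; norm_num at hs
  have h := (convex_Ici m).norm_image_sub_le_of_norm_hasDerivWithin_le
    (f := fun x : ℝ => (x : ℂ) ^ (-s)) (f' := fun x : ℝ => -s * (x : ℂ) ^ (-s - 1))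
    (C := ‖s‖ * m ^ (-(7 / 4) : ℝ))
    (fun x hx => (hasDerivAt_ofReal_cpow_const (by
      have : (1 : ℝ) ≤ x := hm.trans hx
      linarith) hs0).hasDerivWithinAt) (fun x hx => by
      have hx1 : (1 : ℝ) ≤ x := hm.trans hx
      rw [norm_mul, norm_neg, Complex.norm_cpow_eq_rpow_re_of_pos (by linarith)]
      refine mul_le_mul_of_nonneg_left ?_ (norm_nonneg s)
      simp only [Complex.sub_re, Complex.neg_re, Complex.one_re]
      exact (Real.rpow_le_rpow_of_exponent_le hx1 (by linarith)).trans
        (Real.rpow_le_rpow_of_nonpos (by linarith) hx (by norm_num)))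
    (Set.mem_Ici.mpr hb) (Set.mem_Ici.mpr ha)
  simpa only [Real.norm_eq_abs] using h

lemma nm_add_bounds {M y : ℕ} (hy : y < M) {α : QInt} (hα : 8 * (M : ℝ) ^ 2 ≤ nm α) :
    (nm α : ℝ) / 4 ≤ nm (α + ⟨0, y⟩) ∧
      |(nm (α + ⟨0, y⟩) : ℝ) - nm α| ≤ 6 * (M : ℝ) ^ 2 * √(nm α) := by
  have hyM : (y : ℝ) ≤ M := by exact_mod_cast hy.le
  have hM1 : (1 : ℝ) ≤ M := by exact_mod_cast (show 1 ≤ M by omega)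
  have hy0 : (0 : ℝ) ≤ y := by positivity
  have hr := Real.sq_sqrt (show (0 : ℝ) ≤ nm α by positivity)
  have hr0 := Real.sqrt_nonneg (nm α : ℝ)
  set r := √(nm α : ℝ) with hrdef
  have hN' : (nm (α + ⟨0, y⟩) : ℝ) = (α.re : ℝ) ^ 2 + 2 * ((α.im : ℝ) + y) ^ 2 := by
    rw [natCast_nm_real]; simp
  have hN := natCast_nm_real α
  rw [hN']
  set a : ℝ := (α.re : ℝ)
  set b : ℝ := (α.im : ℝ)
  have hyM2 : (y : ℝ) ^ 2 ≤ M ^ 2 := pow_le_pow_left₀ hy0 hyM 2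
  refine ⟨by nlinarith [sq_nonneg (b + 2 * y), sq_nonneg a], ?_⟩
  have hb : |b| ≤ r := abs_le_of_sq_le_sq (by nlinarith [sq_nonneg a, sq_nonneg b]) hr0
  have hr1 : 1 ≤ r := by nlinarith
  have hby : |b| * y ≤ r * M := mul_le_mul hb hyM hy0 hr0
  have h1 : |4 * (b * y) + 2 * (y : ℝ) ^ 2| ≤ 4 * (|b| * y) + 2 * (y : ℝ) ^ 2 := by
    refine (abs_add_le _ _).trans_eq ?_
    rw [abs_mul, abs_mul, abs_mul, abs_of_nonneg hy0, abs_of_nonneg (sq_nonneg (y : ℝ))]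
    norm_num
  have h2 : a ^ 2 + 2 * (b + y) ^ 2 - (nm α : ℝ) = 4 * (b * y) + 2 * (y : ℝ) ^ 2 := by
    rw [hN]; ring
  rw [h2]
  have hMr : r * M ≤ M ^ 2 * r := by nlinarith [mul_nonneg hr0 (sub_nonneg.mpr hM1)]
  have hM2 : (M : ℝ) ^ 2 ≤ M ^ 2 * r := le_mul_of_one_le_right (by positivity) hr1
  linarith

lemma norm_term_le_one (hχ : ∀ α, ‖χ α‖ ≤ 1) {s : ℂ} (hs : 0 < s.re) (α : QInt) :
    ‖term χ s α‖ ≤ 1 := by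
  by_cases hα : α = 0
  · subst hα; simp
  · exact (norm_term_le hχ s α).trans
      (Real.rpow_le_one_of_one_le_of_nonpos (by exact_mod_cast nm_pos hα) (by linarith))

lemma exists_bound_sum_translates (hχ : ∀ α, ‖χ α‖ ≤ 1) {M : ℕ} (hM : 0 < M)
    (hsum : ∀ α, ∑ y ∈ Finset.range M, χ (α + ⟨0, y⟩) = 0) {B : ℝ} (hB : 0 ≤ B) :
    ∃ u : QInt → ℝ, Summable u ∧ ∀ (s : ℂ), 3 / 4 < s.re → ‖s‖ ≤ B → ∀ α,
      ‖∑ y ∈ Finset.range M, term χ s (α + ⟨0, y⟩)‖ ≤ u α := by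
  set K₁ : ℝ := M * (B * 4 ^ (7 / 4 : ℝ) * (6 * M ^ 2)) with hK₁
  set K₂ : ℝ := M * (8 * M ^ 2) ^ (5 / 4 : ℝ) with hK₂
  have hK₁0 : 0 ≤ K₁ := by positivity
  have hK₂0 : 0 ≤ K₂ := by positivity
  refine ⟨fun α => (K₁ + K₂) * (nm α : ℝ) ^ (-(5 / 4) : ℝ) + if α = 0 then (M : ℝ) else 0,
    ((summable_nm_rpow (by norm_num)).mul_left _).add (hasSum_ite_eq (0 : QInt) (M : ℝ)).summable,
    fun s hs hsB α => ?_⟩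
  have htriv : ‖∑ y ∈ Finset.range M, term χ s (α + ⟨0, y⟩)‖ ≤ M := by
    refine (norm_sum_le_of_le _ fun y _ => norm_term_le_one hχ (by linarith) _).trans_eq ?_
    simp
  beta_reduce
  by_cases hα : α = 0
  · rw [if_pos hα]
    exact htriv.trans (le_add_of_nonneg_left (by positivity))
  rw [if_neg hα, add_zero, add_mul]
  have hN : (0 : ℝ) < nm α := by exact_mod_cast nm_pos hα
  rcases lt_or_ge (nm α : ℝ) (8 * M ^ 2) with h | h
  · refine htriv.trans ?_
    have h1 : (M : ℝ) ≤ K₂ * (nm α : ℝ) ^ (-(5 / 4) : ℝ) := by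
      have h2 : (1 : ℝ) ≤ (8 * M ^ 2) ^ (5 / 4 : ℝ) * (nm α : ℝ) ^ (-(5 / 4) : ℝ) := by
        rw [Real.rpow_neg hN.le, ← div_eq_mul_inv, ← Real.div_rpow (by positivity) hN.le]
        exact Real.one_le_rpow ((one_le_div hN).mpr h.le) (by norm_num)
      rw [hK₂, mul_assoc]
      exact le_mul_of_one_le_right (by positivity) h2
    have : 0 ≤ K₁ * (nm α : ℝ) ^ (-(5 / 4) : ℝ) := by positivity
    linarith
  · have hM1 : (1 : ℝ) ≤ M := by exact_mod_cast hM
    have hm : (1 : ℝ) ≤ nm α / 4 := by nlinarith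
    have hrew : ∑ y ∈ Finset.range M, term χ s (α + ⟨0, y⟩) = ∑ y ∈ Finset.range M,
        χ (α + ⟨0, y⟩) * (((nm (α + ⟨0, y⟩) : ℝ) : ℂ) ^ (-s) - ((nm α : ℝ) : ℂ) ^ (-s)) := by
      simp only [mul_sub, Finset.sum_sub_distrib, ← Finset.sum_mul, hsum, zero_mul, sub_zero]
      simp [term]
    have hterm : ∀ y ∈ Finset.range M, ‖χ (α + ⟨0, y⟩) *
        (((nm (α + ⟨0, y⟩) : ℝ) : ℂ) ^ (-s) - ((nm α : ℝ) : ℂ) ^ (-s))‖ ≤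
        B * ((nm α : ℝ) / 4) ^ (-(7 / 4) : ℝ) * (6 * M ^ 2 * √(nm α)) := by
      intro y hy
      obtain ⟨h1, h2⟩ := nm_add_bounds (Finset.mem_range.mp hy) h
      rw [norm_mul]
      refine (mul_le_of_le_one_left (norm_nonneg _) (hχ _)).trans ?_
      refine (norm_cpow_sub_cpow_le hm h1 (by linarith) hs.le).trans ?_
      gcongr
    rw [hrew]
    refine (norm_sum_le_of_le _ hterm).trans ?_
    rw [Finset.sum_const, Finset.card_range, nsmul_eq_mul]
    have h3 : ((nm α : ℝ) / 4) ^ (-(7 / 4) : ℝ) * √(nm α) =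
        4 ^ (7 / 4 : ℝ) * (nm α : ℝ) ^ (-(5 / 4) : ℝ) := by
      rw [Real.div_rpow hN.le (by norm_num), Real.sqrt_eq_rpow, div_mul_eq_mul_div,
        ← Real.rpow_add hN, Real.rpow_neg (by norm_num : (0 : ℝ) ≤ 4) (7 / 4), div_inv_eq_mul]
      norm_num [mul_comm]
    have h4 : (M : ℝ) * (B * ((nm α : ℝ) / 4) ^ (-(7 / 4) : ℝ) * (6 * M ^ 2 * √(nm α))) =
        K₁ * (nm α : ℝ) ^ (-(5 / 4) : ℝ) := by
      rw [hK₁]; linear_combination (M : ℝ) * B * (6 * M ^ 2) * h3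
    rw [h4]
    have : 0 ≤ K₂ * (nm α : ℝ) ^ (-(5 / 4) : ℝ) := by positivity
    linarith

/-- Analytic continuation of the Dirichlet series to `3 / 4 < re s`, when the sums of `χ` over the
translates of some finite set vanish. -/
lemma exists_continuation (hχ : ∀ α, ‖χ α‖ ≤ 1) {M : ℕ} (hM : 0 < M)
    (hsum : ∀ α, ∑ y ∈ Finset.range M, χ (α + ⟨0, y⟩) = 0) :
    ∃ G : ℂ → ℂ, DifferentiableOn ℂ G {s | 3 / 4 < s.re} ∧
      ∀ s : ℂ, 1 < s.re → G s = lseries χ s := by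
  have hU : IsOpen {s : ℂ | 3 / 4 < s.re} := isOpen_lt continuous_const Complex.continuous_re
  refine ⟨fun s => (M : ℂ)⁻¹ * ∑' α, ∑ y ∈ Finset.range M, term χ s (α + ⟨0, y⟩), ?_, ?_⟩
  · intro s hs
    obtain ⟨u, hu, hbound⟩ := exists_bound_sum_translates hχ hM hsum
      (show 0 ≤ ‖s‖ + 1 by positivity)
    have hV : IsOpen ({s : ℂ | 3 / 4 < s.re} ∩ Metric.ball 0 (‖s‖ + 1)) :=
      hU.inter Metric.isOpen_ball
    set F : QInt → ℂ → ℂ := fun α z => ∑ y ∈ Finset.range M, term χ z (α + ⟨0, y⟩) with hF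
    have hdiff : ∀ (α : QInt) (z : ℂ), DifferentiableAt ℂ (F α) z := fun α z =>
      DifferentiableAt.fun_sum fun y _ => (hasDerivAt_term z (α + ⟨0, y⟩)).differentiableAt
    have h : DifferentiableOn ℂ (fun w => ∑' α, F α w) _ :=
      Complex.differentiableOn_tsum_of_summable_norm hu
        (fun α z _ => (hdiff α z).differentiableWithinAt) hV (fun α z hz => by
          obtain ⟨h1, h2⟩ := hz
          rw [mem_ball_zero_iff] at h2
          exact hbound z h1 h2.le α)
    exact ((h.differentiableAt (hV.mem_nhds ⟨hs, by simp⟩)).const_mul _).differentiableWithinAt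
  · intro s hs
    have hs1 : HasSum (term χ s) (lseries χ s) := (summable_norm_term hχ hs).of_norm.hasSum
    have htrans : ∀ β : QInt, HasSum (fun α => term χ s (α + β)) (lseries χ s) := fun β =>
      (Equiv.hasSum_iff (f := term χ s) (Equiv.addRight β)).mpr hs1
    have h1 : ∀ y ∈ Finset.range M,
        HasSum (fun α => term χ s (α + ⟨0, (y : ℤ)⟩)) (lseries χ s) := fun y _ => htrans ⟨0, y⟩
    have h2 := hasSum_sum h1
    beta_reduce
    rw [h2.tsum_eq, Finset.sum_const, Finset.card_range, nsmul_eq_mul,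
      inv_mul_cancel_left₀ (by exact_mod_cast hM.ne')]

end QInt

end EtaDensity

namespace EtaDensity

namespace QInt

open Topology

/-! ### Logarithmic derivatives -/

variable {χ : QInt →*₀ ℂ}

lemma norm_term_le_half (hχ : ∀ α, ‖χ α‖ ≤ 1) {s : ℂ} (hs : 1 ≤ s.re) {π : QInt} (hπ : Prime π) :
    ‖term χ s π‖ ≤ 1 / 2 := by
  have h2 : (2 : ℝ) ≤ nm π := by exact_mod_cast nm_ge_two_of_prime hπ
  calc ‖term χ s π‖ ≤ (nm π : ℝ) ^ (-s.re) := norm_term_le hχ s π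
    _ ≤ (nm π : ℝ) ^ (-1 : ℝ) := nm_rpow_le hs one_pos π
    _ ≤ (2 : ℝ) ^ (-1 : ℝ) := Real.rpow_le_rpow_of_nonpos two_pos h2 (by norm_num)
    _ = 1 / 2 := by norm_num [Real.rpow_neg_one]

lemma half_le_norm_one_sub_term (hχ : ∀ α, ‖χ α‖ ≤ 1) {s : ℂ} (hs : 1 ≤ s.re) {π : QInt}
    (hπ : Prime π) : 1 / 2 ≤ ‖1 - term χ s π‖ := by
  have h1 := norm_term_le_half hχ hs hπ
  have h2 := norm_sub_norm_le (1 : ℂ) (term χ s π)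
  rw [norm_one] at h2
  linarith

lemma one_sub_term_ne_zero (hχ : ∀ α, ‖χ α‖ ≤ 1) {s : ℂ} (hs : 1 ≤ s.re) {π : QInt}
    (hπ : Prime π) : 1 - term χ s π ≠ 0 := by
  have := half_le_norm_one_sub_term hχ hs hπ
  rw [← norm_pos_iff]
  linarith

lemma lam_of_not_prime {π : QInt} (h : ¬ Prime π) : lam π = 0 := if_neg h

lemma lam_le (π : QInt) : lam π ≤ Real.log (nm π) := by
  unfold lam
  split_ifs
  · rfl
  · exact log_nm_nonneg π

lemma summable_log_mul_norm_term (hχ : ∀ α, ‖χ α‖ ≤ 1) {s : ℂ} (hs : 1 < s.re) :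
    Summable fun γ => Real.log (nm γ) * ‖term χ s γ‖ :=
  (summable_log_nm_mul_rpow hs).of_nonneg_of_le
    (fun γ => mul_nonneg (log_nm_nonneg γ) (norm_nonneg _))
    (fun γ => mul_le_mul_of_nonneg_left (norm_term_le hχ s γ) (log_nm_nonneg γ))

lemma summable_logVal_mul_term (hχ : ∀ α, ‖χ α‖ ≤ 1) {s : ℂ} (hs : 1 < s.re) :
    Summable fun x : QInt × QInt => (logVal x.2 x.1 : ℂ) * term χ s x.1 := by
  have hsum : ∀ γ, HasSum (fun π => logVal π γ * ‖term χ s γ‖)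
      (2 * Real.log (nm γ) * ‖term χ s γ‖) := by
    intro γ
    by_cases hγ : γ = 0
    · subst hγ; simp
    · exact (hasSum_logVal hγ).mul_right _
  have h : Summable fun x : QInt × QInt => logVal x.2 x.1 * ‖term χ s x.1‖ := by
    rw [summable_prod_of_nonneg fun x => mul_nonneg (logVal_nonneg _ _) (norm_nonneg _)]
    refine ⟨fun γ => (hsum γ).summable, ?_⟩
    simp only [(hsum _).tsum_eq, mul_assoc]
    exact (summable_log_mul_norm_term hχ hs).mul_left 2
  refine Summable.of_norm (h.congr fun x => ?_)
  rw [norm_mul, Complex.norm_real, Real.norm_of_nonneg (logVal_nonneg _ _)]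

lemma tsum_logVal_mul_term (hχ : ∀ α, ‖χ α‖ ≤ 1) {s : ℂ} (hs : 1 < s.re) (π : QInt) :
    ∑' γ, (logVal π γ : ℂ) * term χ s γ =
      lseries χ s * (lam π * (term χ s π / (1 - term χ s π))) := by
  by_cases hπ : Prime π
  · have hS : Summable fun γ => (logVal π γ : ℂ) * term χ s γ :=
      (summable_logVal_mul_term hχ hs).comp_injective
        (i := fun γ : QInt => (γ, π)) fun a b h => (Prod.mk.inj h).1
    have hL : Summable (term χ s) := (summable_norm_term hχ hs).of_norm
    have hinj : Function.Injective fun δ : QInt => π * δ := mul_right_injective₀ hπ.ne_zero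
    have hsupp : Function.support (fun γ => (logVal π γ : ℂ) * term χ s γ) ⊆
        Set.range fun δ : QInt => π * δ := by
      intro γ hγ
      by_contra hd
      refine hγ ?_
      have : ¬ π ∣ γ := fun ⟨δ, hδ⟩ => hd ⟨δ, hδ.symm⟩
      simp [logVal_eq_zero_of_not_dvd this]
    have hterm : ∀ δ, (logVal π (π * δ) : ℂ) * term χ s (π * δ) =
        term χ s π * ((logVal π δ : ℂ) * term χ s δ + lam π * term χ s δ) := by
      intro δ
      by_cases hδ : δ = 0
      · subst hδ; simp
      · rw [logVal_mul hπ.ne_zero hδ, logVal_self, term_mul]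
        push_cast; ring
    have h := hinj.tsum_eq hsupp
    simp only [hterm] at h
    rw [tsum_mul_left, hS.tsum_add (hL.mul_left _), tsum_mul_left] at h
    have h1 := one_sub_term_ne_zero hχ hs.le hπ
    change _ = (∑' α, term χ s α) * _
    rw [mul_div_assoc', mul_div_assoc', eq_div_iff h1]
    linear_combination -h
  · have h0 : ∀ γ, logVal π γ = 0 := fun γ => if_neg hπ
    simp [h0, lam_of_not_prime hπ]

lemma deriv_lseries_eq (hχ : ∀ α, ‖χ α‖ ≤ 1) {s : ℂ} (hs : 1 < s.re) :
    -2 * deriv (lseries χ) s =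
      lseries χ s * ∑' π, lam π * (term χ s π / (1 - term χ s π)) := by
  have hS := summable_logVal_mul_term hχ hs
  have h1 : ∑' γ, ∑' π, (logVal π γ : ℂ) * term χ s γ = -2 * deriv (lseries χ) s := by
    rw [← (hasSum_deriv_lseries hχ hs).tsum_eq, ← tsum_mul_left]
    refine tsum_congr fun γ => ?_
    by_cases hγ : γ = 0
    · subst hγ; simp
    · have := (Complex.hasSum_ofReal.mpr (hasSum_logVal hγ)).mul_right (term χ s γ)
      rw [this.tsum_eq]
      push_cast; ring
  have h2 := hS.tsum_comm (f := fun γ π => (logVal π γ : ℂ) * term χ s γ)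
  rw [← h1, ← h2, ← tsum_mul_left]
  exact tsum_congr fun π => tsum_logVal_mul_term hχ hs π

variable (χ) in
/-- The Dirichlet series over the primes of `ℤ[√-2]`, with logarithmic weights. -/
noncomputable def primeSeries (s : ℂ) : ℂ := ∑' π, (lam π : ℂ) * term χ s π

variable (χ) in
/-- The contribution of proper prime powers to the logarithmic derivative of `lseries χ`. -/
noncomputable def primePowerSeries (s : ℂ) : ℂ :=
  ∑' π, (lam π : ℂ) * (term χ s π ^ 2 / (1 - term χ s π))

lemma summable_lam_mul_term (hχ : ∀ α, ‖χ α‖ ≤ 1) {s : ℂ} (hs : 1 < s.re) :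
    Summable fun π => (lam π : ℂ) * term χ s π := by
  refine Summable.of_norm_bounded (summable_log_mul_norm_term hχ hs) fun π => ?_
  rw [norm_mul, Complex.norm_real, Real.norm_of_nonneg (lam_nonneg π)]
  exact mul_le_mul_of_nonneg_right (lam_le π) (norm_nonneg _)

lemma norm_primePower_le (hχ : ∀ α, ‖χ α‖ ≤ 1) {s : ℂ} (hs : 1 ≤ s.re) (π : QInt) :
    ‖(lam π : ℂ) * (term χ s π ^ 2 / (1 - term χ s π))‖ ≤
      2 * (Real.log (nm π) * (nm π : ℝ) ^ (-2 : ℝ)) := by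
  by_cases hπ : Prime π
  · rw [norm_mul, Complex.norm_real, Real.norm_of_nonneg (lam_nonneg π), norm_div, norm_pow]
    have h1 : ‖term χ s π‖ ≤ (nm π : ℝ) ^ (-1 : ℝ) :=
      (norm_term_le hχ s π).trans (nm_rpow_le hs one_pos π)
    have h2 : ‖term χ s π‖ ^ 2 ≤ (nm π : ℝ) ^ (-2 : ℝ) := by
      refine (pow_le_pow_left₀ (norm_nonneg _) h1 2).trans_eq ?_
      rw [← Real.rpow_natCast, ← Real.rpow_mul (by positivity)]
      norm_num
    have h3 : ‖term χ s π‖ ^ 2 / ‖1 - term χ s π‖ ≤ (nm π : ℝ) ^ (-2 : ℝ) / (1 / 2) :=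
      div_le_div₀ (by positivity) h2 (by norm_num) (half_le_norm_one_sub_term hχ hs hπ)
    calc _ ≤ Real.log (nm π) * ((nm π : ℝ) ^ (-2 : ℝ) / (1 / 2)) :=
          mul_le_mul (lam_le π) h3 (by positivity) (log_nm_nonneg π)
      _ = _ := by ring
  · rw [lam_of_not_prime hπ]
    simp only [Complex.ofReal_zero, zero_mul, norm_zero]
    have := log_nm_nonneg π
    positivity

lemma continuous_term (π : QInt) : Continuous fun s => term χ s π :=
  continuous_iff_continuousAt.mpr fun s => (hasDerivAt_term s π).continuousAt

lemma continuousOn_primePowerSeries (hχ : ∀ α, ‖χ α‖ ≤ 1) :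
    ContinuousOn (primePowerSeries χ) {s | 1 ≤ s.re} := by
  refine continuousOn_tsum (fun π => ?_)
    ((summable_log_nm_mul_rpow (by norm_num : (1 : ℝ) < 2)).mul_left 2)
    (fun π s hs => norm_primePower_le hχ hs π)
  by_cases hπ : Prime π
  · exact continuousOn_const.mul (((continuous_term π).pow 2).continuousOn.div
      (continuous_const.sub (continuous_term π)).continuousOn
      fun s hs => one_sub_term_ne_zero hχ hs hπ)
  · simp only [lam_of_not_prime hπ, Complex.ofReal_zero, zero_mul]
    exact continuousOn_const

lemma neg_two_mul_deriv_lseries (hχ : ∀ α, ‖χ α‖ ≤ 1) {s : ℂ} (hs : 1 < s.re) :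
    -2 * deriv (lseries χ) s = lseries χ s * (primeSeries χ s + primePowerSeries χ s) := by
  rw [deriv_lseries_eq hχ hs, primeSeries, primePowerSeries,
    ← (summable_lam_mul_term hχ hs).tsum_add]
  · congr 1
    refine tsum_congr fun π => ?_
    by_cases hπ : Prime π
    · have := one_sub_term_ne_zero hχ hs.le hπ
      field_simp
      ring
    · simp [lam_of_not_prime hπ]
  · exact Summable.of_norm_bounded
      ((summable_log_nm_mul_rpow (by norm_num : (1 : ℝ) < 2)).mul_left 2)
      fun π => norm_primePower_le hχ hs.le π

end QInt

end EtaDensity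

namespace EtaDensity

namespace QInt

open Topology

/-! ### Nonvanishing on the line `re s = 1` -/

/-- A completely multiplicative function bounded by one, invariant under units, whose sums over
the translates of some segment vanish. -/
structure IsBalanced (χ : QInt →*₀ ℂ) : Prop where
  norm_le : ∀ α, ‖χ α‖ ≤ 1
  map_neg_one : χ (-1) = 1
  exists_sum_eq_zero : ∃ M : ℕ, 0 < M ∧ ∀ α, ∑ y ∈ Finset.range M, χ (α + ⟨0, y⟩) = 0

variable {χ : QInt →*₀ ℂ}

lemma exists_lseries_ne_zero (hχ : ∀ α, ‖χ α‖ ≤ 1) (h1 : χ (-1) = 1) :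
    ∃ s : ℂ, 1 < s.re ∧ lseries χ s ≠ 0 := by
  have hlim : Tendsto (fun n : ℕ => lseries χ (n : ℂ)) atTop
      (𝓝 (∑' α, if nm α = 1 then χ α else 0)) := by
    refine tendsto_tsum_of_dominated_convergence (summable_nm_rpow (one_lt_two)) (fun α => ?_) ?_
    · by_cases hα : α = 0
      · subst hα; simp
      split_ifs with hn
      · simp [term, hn]
      · have h2 : 1 < nm α := by have := nm_pos hα; omega
        have : Tendsto (fun n : ℕ => χ α * ((nm α : ℂ)⁻¹) ^ n) atTop (𝓝 (χ α * 0)) := by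
          refine (tendsto_pow_atTop_nhds_zero_of_norm_lt_one ?_).const_mul _
          rw [norm_inv, Complex.norm_natCast]
          exact inv_lt_one_of_one_lt₀ (by exact_mod_cast h2)
        rw [mul_zero] at this
        refine this.congr fun n => ?_
        rw [term, Complex.cpow_neg, Complex.cpow_natCast, inv_pow]
    · filter_upwards [eventually_ge_atTop 2] with n hn α
      refine (norm_term_le hχ _ α).trans (nm_rpow_le ?_ two_pos α)
      simpa using hn
  have hval : (∑' α, if nm α = 1 then χ α else 0) = 2 := by
    rw [tsum_eq_sum (s := {1, -1})]
    · rw [Finset.sum_pair (by decide)]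
      simp [h1]; norm_num
    · intro α hα
      rw [if_neg]
      simpa [nm_eq_one_iff] using hα
  rw [hval] at hlim
  obtain ⟨n, hn, hn2⟩ := ((hlim.eventually_ne two_ne_zero).and (eventually_ge_atTop 2)).exists
  exact ⟨n, by rw [Complex.natCast_re]; exact_mod_cast hn2, hn⟩

lemma isOpen_re_gt (a : ℝ) : IsOpen {s : ℂ | a < s.re} :=
  isOpen_lt continuous_const Complex.continuous_re

lemma tendsto_ofReal_add (t : ℝ) : Tendsto (fun σ : ℝ => (σ : ℂ) + t * Complex.I) (𝓝[>] 1)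
    (𝓝[≠] (1 + t * Complex.I)) := by
  refine tendsto_nhdsWithin_of_tendsto_nhds_of_eventually_within _ ?_ ?_
  · have : Continuous fun σ : ℝ => (σ : ℂ) + t * Complex.I := by fun_prop
    simpa using (this.tendsto 1).mono_left nhdsWithin_le_nhds
  · filter_upwards [self_mem_nhdsWithin] with σ hσ h
    have h1 := congrArg Complex.re h
    simp at h1
    exact (ne_of_gt hσ) h1

/-- The behaviour of `primeSeries χ` at a point of the line `re s = 1` is governed by the order of
vanishing of the continuation of `lseries χ`. -/
lemma exists_order (hχ : ∀ α, ‖χ α‖ ≤ 1) (h1 : χ (-1) = 1) {G : ℂ → ℂ}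
    (hG : DifferentiableOn ℂ G {s | 3 / 4 < s.re}) (hGL : ∀ s : ℂ, 1 < s.re → G s = lseries χ s)
    (t : ℝ) : ∃ m : ℕ, Tendsto (fun σ : ℝ => ((σ : ℂ) - 1) * primeSeries χ (σ + t * Complex.I))
      (𝓝[>] 1) (𝓝 (-2 * m)) ∧ (m = 0 → G (1 + t * Complex.I) ≠ 0) := by
  set z₀ : ℂ := 1 + t * Complex.I with hz₀
  have hz₀re : z₀.re = 1 := by simp [hz₀]
  have hU := isOpen_re_gt (3 / 4)
  have hmem : z₀ ∈ {s : ℂ | (3 / 4 : ℝ) < s.re} := by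
    change (3 / 4 : ℝ) < z₀.re; rw [hz₀re]; norm_num
  have hAn : AnalyticOnNhd ℂ G {s | 3 / 4 < s.re} := hG.analyticOnNhd hU
  have hne : ¬ ∀ᶠ z in 𝓝 z₀, G z = 0 := by
    intro h0
    obtain ⟨s, hs, hs0⟩ := exists_lseries_ne_zero hχ h1
    have := hAn.eqOn_zero_of_preconnected_of_eventuallyEq_zero
      (convex_halfSpace_re_gt _).isPreconnected hmem h0
    refine hs0 ?_
    rw [← hGL s hs]
    exact this (show (3 / 4 : ℝ) < s.re by linarith)
  obtain ⟨m, g, hg, hg0, hGg⟩ := (hAn z₀ hmem).exists_eventuallyEq_pow_smul_nonzero_iff.mpr hne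
  have hderiv : ∀ᶠ z in 𝓝 z₀, (z - z₀) * deriv G z =
      (z - z₀) ^ m * (m * g z + (z - z₀) * deriv g z) := by
    filter_upwards [EventuallyEq.deriv hGg, hg.eventually_analyticAt] with z hz hgz
    have h2 : HasDerivAt (fun z => (z - z₀) ^ m • g z)
        (m * (z - z₀) ^ (m - 1) * 1 * g z + (z - z₀) ^ m * deriv g z) z :=
      ((((hasDerivAt_id' z).sub_const z₀).fun_pow m).fun_mul hgz.differentiableAt.hasDerivAt)
    rw [hz, h2.deriv]
    rcases m with _ | k
    · simp
    · rw [Nat.add_sub_cancel, pow_succ]; push_cast; ring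
  have hpath := tendsto_ofReal_add t
  rw [← hz₀] at hpath
  have hpath' : Tendsto (fun σ : ℝ => (σ : ℂ) + t * Complex.I) (𝓝[>] 1) (𝓝 z₀) :=
    hpath.mono_right nhdsWithin_le_nhds
  have hzero : Tendsto (fun σ : ℝ => (σ : ℂ) - 1) (𝓝[>] 1) (𝓝 0) := by
    have : Continuous fun σ : ℝ => (σ : ℂ) - 1 := by fun_prop
    simpa using (this.tendsto 1).mono_left nhdsWithin_le_nhds
  refine ⟨m, ?_, ?_⟩
  · have hlimR : Tendsto (fun σ : ℝ => primePowerSeries χ (σ + t * Complex.I)) (𝓝[>] 1)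
        (𝓝 (primePowerSeries χ z₀)) := by
      refine (continuousOn_primePowerSeries hχ z₀ (show (1 : ℝ) ≤ z₀.re from hz₀re.ge)).tendsto.comp
        (tendsto_nhdsWithin_of_tendsto_nhds_of_eventually_within _ hpath' ?_)
      filter_upwards [self_mem_nhdsWithin] with σ hσ
      simpa using (le_of_lt hσ : (1 : ℝ) ≤ σ)
    have hlimg : Tendsto (fun σ : ℝ => deriv g (σ + t * Complex.I) / g (σ + t * Complex.I))
        (𝓝[>] 1) (𝓝 (deriv g z₀ / g z₀)) :=
      (hg.deriv.continuousAt.tendsto.comp hpath').div (hg.continuousAt.tendsto.comp hpath') hg0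
    have hlim := ((hzero.mul hlimg).const_add (m : ℂ)).const_mul (-2) |>.sub (hzero.mul hlimR)
    simp only [zero_mul, add_zero, sub_zero] at hlim
    refine hlim.congr' ?_
    filter_upwards [hpath'.eventually hderiv, hpath'.eventually hGg,
      hpath'.eventually (hg.continuousAt.eventually_ne hg0), self_mem_nhdsWithin]
      with σ hd hGσ hgσ hσ
    have hσ1 : (1 : ℝ) < ((σ : ℂ) + t * Complex.I).re := by simpa using hσ
    set z : ℂ := (σ : ℂ) + t * Complex.I with hz
    have hzz : z - z₀ = (σ : ℂ) - 1 := by rw [hz, hz₀]; ring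
    have hpow : (z - z₀) ^ m ≠ 0 := by
      refine pow_ne_zero _ ?_
      rw [hzz, sub_ne_zero]
      exact_mod_cast (ne_of_gt hσ : σ ≠ 1)
    have hdG : deriv G z = deriv (lseries χ) z := by
      refine EventuallyEq.deriv_eq ?_
      filter_upwards [(isOpen_re_gt 1).mem_nhds hσ1] with w hw
      exact hGL w hw
    have hkey := neg_two_mul_deriv_lseries hχ hσ1
    rw [← hdG, ← hGL z hσ1, hGσ, smul_eq_mul] at hkey
    rw [hzz] at hd hkey hpow
    have : ((σ : ℂ) - 1) ^ m * (g z * (((σ : ℂ) - 1) * (primeSeries χ z + primePowerSeries χ z) +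
        2 * (m + ((σ : ℂ) - 1) * (deriv g z / g z)))) = 0 := by
      have h3 : g z * (deriv g z / g z) = deriv g z := mul_div_cancel₀ _ hgσ
      linear_combination -2 * hd - ((σ : ℂ) - 1) * hkey + 2 * ((σ : ℂ) - 1) ^ (m + 1) * h3
    rcases mul_eq_zero.mp this with h4 | h4
    · exact absurd h4 hpow
    rcases mul_eq_zero.mp h4 with h5 | h5
    · exact absurd h5 hgσ
    linear_combination -h5
  · rintro rfl
    rw [hGg.self_of_nhds]
    simpa using hg0

lemma three_four_one {z : ℂ} (hz : ‖z‖ = 1) : 0 ≤ 3 + 4 * z.re + (z ^ 2).re := by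
  have h : z.re ^ 2 + z.im ^ 2 = 1 := by
    have := Complex.sq_norm z
    rw [hz, Complex.normSq_apply] at this
    nlinarith
  rw [sq, Complex.mul_re]
  nlinarith [sq_nonneg (z.re + 1)]

lemma primeSeries_three_four_one {χ₀ χ₂ : QInt →*₀ ℂ} (hχ : ∀ α, ‖χ α‖ ≤ 1)
    (hχ₀ : ∀ α, ‖χ₀ α‖ ≤ 1) (hχ₂ : ∀ α, ‖χ₂ α‖ ≤ 1)
    (hrel : ∀ α, (χ₀ α = 0 ∧ χ α = 0 ∧ χ₂ α = 0) ∨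
      (χ₀ α = 1 ∧ ‖χ α‖ = 1 ∧ χ₂ α = χ α ^ 2)) {σ : ℝ} (hσ : 1 < σ) (t : ℝ) :
    0 ≤ (3 * primeSeries χ₀ σ + 4 * primeSeries χ (σ + t * Complex.I) +
      primeSeries χ₂ (σ + (2 * t : ℝ) * Complex.I)).re := by
  have hs0 : 1 < (σ : ℂ).re := by simpa using hσ
  have hs1 : 1 < ((σ : ℂ) + t * Complex.I).re := by simpa using hσ
  have hs2 : 1 < ((σ : ℂ) + (2 * t : ℝ) * Complex.I).re := by simpa using hσ
  have h := (((summable_lam_mul_term hχ₀ hs0).hasSum.mul_left 3).add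
    ((summable_lam_mul_term hχ hs1).hasSum.mul_left 4)).add
    (summable_lam_mul_term hχ₂ hs2).hasSum
  refine (Complex.hasSum_re h).nonneg fun π => ?_
  by_cases hπ0 : π = 0
  · subst hπ0; simp
  have hn : (nm π : ℂ) ≠ 0 := by exact_mod_cast (nm_pos hπ0).ne'
  rcases hrel π with ⟨h0, h1, h2⟩ | ⟨h0, h1, h2⟩
  · simp [term, h0, h1, h2]
  · set w : ℂ := (nm π : ℂ) ^ (-(t * Complex.I)) with hw
    have hw1 : ‖w‖ = 1 := by
      rw [hw, Complex.norm_natCast_cpow_of_pos (nm_pos hπ0)]; simp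
    have e0 : (nm π : ℂ) ^ (-(σ : ℂ)) = (((nm π : ℝ) ^ (-σ) : ℝ) : ℂ) := by
      rw [Complex.ofReal_cpow (by positivity)]; push_cast; rfl
    have e1 : (nm π : ℂ) ^ (-((σ : ℂ) + t * Complex.I)) = (((nm π : ℝ) ^ (-σ) : ℝ) : ℂ) * w := by
      rw [neg_add, Complex.cpow_add _ _ hn, e0]
    have e2 : (nm π : ℂ) ^ (-((σ : ℂ) + (2 * t : ℝ) * Complex.I)) =
        (((nm π : ℝ) ^ (-σ) : ℝ) : ℂ) * w ^ 2 := by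
      rw [neg_add, Complex.cpow_add _ _ hn, e0, hw, ← Complex.cpow_nat_mul]
      congr 2
      push_cast; ring
    have hrw : 3 * ((lam π : ℂ) * term χ₀ σ π) + 4 * ((lam π : ℂ) * term χ (σ + t * Complex.I) π) +
        (lam π : ℂ) * term χ₂ (σ + (2 * t : ℝ) * Complex.I) π =
        ((lam π * (nm π : ℝ) ^ (-σ) : ℝ) : ℂ) * (3 + 4 * (χ π * w) + (χ π * w) ^ 2) := by
      rw [term, term, term, e0, e1, e2, h0, h2]
      push_cast; ring
    have hz : ‖χ π * w‖ = 1 := by rw [norm_mul, h1, hw1, one_mul]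
    rw [hrw, Complex.re_ofReal_mul]
    refine mul_nonneg (mul_nonneg (lam_nonneg π) (by positivity)) ?_
    simpa using three_four_one hz

/-- If neither `χ` nor its square is trivial, then `primeSeries χ` extends continuously to the line
`re s = 1`. -/
lemma hasBoundaryLimits_primeSeries {χ₀ χ₂ : QInt →*₀ ℂ} (hχ : IsBalanced χ) (hχ₂ : IsBalanced χ₂)
    (hχ₀ : ∀ α, ‖χ₀ α‖ ≤ 1)
    (hpole : Tendsto (fun σ : ℝ => ((σ : ℂ) - 1) * primeSeries χ₀ σ) (𝓝[>] 1) (𝓝 2))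
    (hrel : ∀ α, (χ₀ α = 0 ∧ χ α = 0 ∧ χ₂ α = 0) ∨
      (χ₀ α = 1 ∧ ‖χ α‖ = 1 ∧ χ₂ α = χ α ^ 2)) :
    HasBoundaryLimits (primeSeries χ) := by
  obtain ⟨M, hM, hsum⟩ := hχ.exists_sum_eq_zero
  obtain ⟨M₂, hM₂, hsum₂⟩ := hχ₂.exists_sum_eq_zero
  obtain ⟨G, hG, hGL⟩ := exists_continuation hχ.norm_le hM hsum
  obtain ⟨G₂, hG₂, hGL₂⟩ := exists_continuation hχ₂.norm_le hM₂ hsum₂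
  have hne : ∀ t : ℝ, G (1 + t * Complex.I) ≠ 0 := by
    intro t
    obtain ⟨m, hm, hmG⟩ := exists_order hχ.norm_le hχ.map_neg_one hG hGL t
    obtain ⟨m₂, hm₂, -⟩ := exists_order hχ₂.norm_le hχ₂.map_neg_one hG₂ hGL₂ (2 * t)
    refine hmG ?_
    have hlim := (Complex.continuous_re.tendsto _).comp
      (((hpole.const_mul 3).add (hm.const_mul 4)).add hm₂)
    have hnonneg := ge_of_tendsto hlim (b := 0) (by
      filter_upwards [self_mem_nhdsWithin] with σ hσ
      have h := primeSeries_three_four_one hχ.norm_le hχ₀ hχ₂.norm_le hrel hσ t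
      have h2 := mul_nonneg (sub_nonneg.mpr (le_of_lt hσ)) h
      rw [← Complex.re_ofReal_mul] at h2
      refine h2.trans_eq (congrArg Complex.re ?_)
      push_cast; ring)
    have h3 : (3 * 2 + 4 * (-2 * (m : ℂ)) + -2 * (m₂ : ℂ)).re = 6 - 8 * m - 2 * m₂ := by
      simp; ring
    rw [h3] at hnonneg
    have h4 : (8 : ℝ) * m ≤ 6 := by
      have : (0 : ℝ) ≤ m₂ := by positivity
      linarith
    have h5 : 8 * m ≤ 6 := by exact_mod_cast h4
    omega
  intro z hz
  have hU := isOpen_re_gt (3 / 4)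
  have hAn : AnalyticOnNhd ℂ G {s | 3 / 4 < s.re} := hG.analyticOnNhd hU
  rcases hz.eq_or_lt with hz1 | hz1
  · have hzG : G z ≠ 0 := by
      have := hne z.im
      rwa [← Complex.re_add_im z, ← hz1, Complex.ofReal_one]
    have hzU : z ∈ {s : ℂ | (3 / 4 : ℝ) < s.re} := by
      change (3 / 4 : ℝ) < z.re; rw [← hz1]; norm_num
    have hcont := (hAn z hzU).continuousAt
    have hcont' := (hAn z hzU).deriv.continuousAt
    have hR : Tendsto (primePowerSeries χ) (𝓝[{z | 1 < z.re}] z) (𝓝 (primePowerSeries χ z)) :=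
      (continuousOn_primePowerSeries hχ.norm_le z hz).tendsto.mono_left
        (nhdsWithin_mono _ fun w hw => (le_of_lt hw : (1 : ℝ) ≤ w.re))
    refine ⟨_, ((((hcont'.tendsto.const_mul (-2)).div hcont.tendsto hzG).mono_left
      nhdsWithin_le_nhds).sub hR).congr' ?_⟩
    filter_upwards [self_mem_nhdsWithin, nhdsWithin_le_nhds (hcont.eventually_ne hzG)] with w hw hwG
    have hdG : deriv G w = deriv (lseries χ) w := by
      refine EventuallyEq.deriv_eq ?_
      filter_upwards [(isOpen_re_gt 1).mem_nhds hw] with u hu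
      exact hGL u hu
    have hkey := neg_two_mul_deriv_lseries hχ.norm_le hw
    rw [← hdG, ← hGL w hw] at hkey
    change -2 * deriv G w / G w - primePowerSeries χ w = primeSeries χ w
    rw [hkey]
    field_simp
    ring
  · obtain ⟨δ, h1, hδ⟩ := exists_between hz1
    have hc : ContinuousOn (primeSeries χ) {s | δ < s.re} := by
      refine continuousOn_tsum (fun π => (continuous_const.mul (continuous_term π)).continuousOn)
        (summable_log_nm_mul_rpow h1) fun π s hs => ?_
      rw [norm_mul, Complex.norm_real, Real.norm_of_nonneg (lam_nonneg π)]
      exact mul_le_mul (lam_le π) ((norm_term_le hχ.norm_le s π).trans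
        (nm_rpow_le (le_of_lt hs) (by linarith) π)) (norm_nonneg _) (log_nm_nonneg π)
    exact ⟨_, (hc.continuousAt ((isOpen_re_gt δ).mem_nhds hδ)).tendsto.mono_left
      nhdsWithin_le_nhds⟩

end QInt

end EtaDensity

namespace EtaDensity

/-! ### Characters of slopes -/

/-- The slopes `im α / re α` modulo `2 ^ k` of the elements `α` of `ℤ[√-2]` of odd norm; they form a
group under the addition law `(a, b) ↦ (a + b) / (1 - 2 a b)`. -/
def Slope (k : ℕ) : Type := ZMod (2 ^ k)

namespace Slope

variable {k : ℕ}

lemma isUnit_one_sub_two_mul (x : ZMod (2 ^ k)) : IsUnit (1 - 2 * x) := by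
  refine IsNilpotent.isUnit_one_sub ⟨k, ?_⟩
  have h : (2 : ZMod (2 ^ k)) ^ k = 0 := by exact_mod_cast ZMod.natCast_self (2 ^ k)
  rw [mul_pow, h, zero_mul]

lemma isUnit_intCast {a : ℤ} (ha : Odd a) : IsUnit (a : ZMod (2 ^ k)) := by
  obtain ⟨m, rfl⟩ := ha
  have := isUnit_one_sub_two_mul (k := k) (-m : ZMod (2 ^ k))
  push_cast
  rwa [show 2 * (m : ZMod (2 ^ k)) + 1 = 1 - 2 * -m by ring]

instance : Fintype (Slope k) := inferInstanceAs (Fintype (ZMod (2 ^ k)))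

instance : DecidableEq (Slope k) := inferInstanceAs (DecidableEq (ZMod (2 ^ k)))

instance : Zero (Slope k) := ⟨(0 : ZMod (2 ^ k))⟩

instance : Neg (Slope k) := ⟨fun a : ZMod (2 ^ k) => (-a : ZMod (2 ^ k))⟩

instance : Add (Slope k) :=
  ⟨fun a b : ZMod (2 ^ k) => ((a + b) * (1 - 2 * (a * b))⁻¹ : ZMod (2 ^ k))⟩

/-- A residue class modulo `2 ^ k`, as a slope. -/
def of (a : ZMod (2 ^ k)) : Slope k := a

lemma of_add_of (a b : ZMod (2 ^ k)) : of a + of b = of ((a + b) * (1 - 2 * (a * b))⁻¹) := rfl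

lemma neg_of (a : ZMod (2 ^ k)) : -of a = of (-a) := rfl

lemma of_zero : of (0 : ZMod (2 ^ k)) = 0 := rfl

lemma of_injective : Function.Injective (of : ZMod (2 ^ k) → Slope k) := fun _ _ h => h

lemma of_surjective : Function.Surjective (of : ZMod (2 ^ k) → Slope k) := fun a => ⟨a, rfl⟩

lemma of_add_of_eq {a b c : ZMod (2 ^ k)} (h : c * (1 - 2 * (a * b)) = a + b) :
    of a + of b = of c := by
  rw [of_add_of, ← h, mul_assoc, ZMod.mul_inv_of_unit _ (isUnit_one_sub_two_mul _), mul_one]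

lemma exists_of_add_of (a b : ZMod (2 ^ k)) :
    ∃ c, of a + of b = of c ∧ c * (1 - 2 * (a * b)) = a + b :=
  ⟨(a + b) * (1 - 2 * (a * b))⁻¹, rfl, by
    rw [mul_assoc, ZMod.inv_mul_of_unit _ (isUnit_one_sub_two_mul _), mul_one]⟩

instance : AddCommGroup (Slope k) where
  add_assoc a b c := by
    obtain ⟨a, rfl⟩ := of_surjective a
    obtain ⟨b, rfl⟩ := of_surjective b
    obtain ⟨c, rfl⟩ := of_surjective c
    obtain ⟨u, hu, hu'⟩ := exists_of_add_of a b
    obtain ⟨v, hv, hv'⟩ := exists_of_add_of b c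
    obtain ⟨w, hw, hw'⟩ := exists_of_add_of u c
    rw [hu, hv, hw]
    symm
    refine of_add_of_eq ((isUnit_one_sub_two_mul (b * c)).mul_left_injective ?_)
    have h : w * (1 - 2 * (a * b + b * c + a * c)) = a + b + c - 2 * (a * b * c) := by
      linear_combination (1 - 2 * (a * b)) * hw' + (2 * w * c + 1) * hu'
    change w * (1 - 2 * (a * v)) * (1 - 2 * (b * c)) = (a + v) * (1 - 2 * (b * c))
    linear_combination h - (2 * w * a + 1) * hv'
  zero_add a := by
    obtain ⟨a, rfl⟩ := of_surjective a
    rw [← of_zero]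
    exact of_add_of_eq (by ring)
  add_zero a := by
    obtain ⟨a, rfl⟩ := of_surjective a
    rw [← of_zero]
    exact of_add_of_eq (by ring)
  neg_add_cancel a := by
    obtain ⟨a, rfl⟩ := of_surjective a
    rw [neg_of, ← of_zero]
    exact of_add_of_eq (by ring)
  add_comm a b := by
    obtain ⟨a, rfl⟩ := of_surjective a
    obtain ⟨b, rfl⟩ := of_surjective b
    rw [of_add_of, of_add_of, add_comm a b, mul_comm a b]
  nsmul := nsmulRec
  zsmul := zsmulRec

/-- Every even slope is a double. -/
lemma exists_add_self_eq (u : ZMod (2 ^ k)) : ∃ x : Slope k, x + x = of (2 * u) := by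
  have hinj : Function.Injective fun x : ZMod (2 ^ k) => x + 2 * u * x ^ 2 := by
    intro x y hxy
    have h : (x - y) * (1 - 2 * (-u * (x + y))) = 0 := by
      have : x + 2 * u * x ^ 2 = y + 2 * u * y ^ 2 := hxy
      linear_combination this
    exact sub_eq_zero.mp ((isUnit_one_sub_two_mul _).mul_left_eq_zero.mp h)
  obtain ⟨x, hx⟩ := Finite.surjective_of_injective hinj u
  have hx : x + 2 * u * x ^ 2 = u := hx
  exact ⟨of x, of_add_of_eq (by linear_combination -2 * hx)⟩

end Slope

namespace QInt

open Slope

variable {k : ℕ}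

/-- The slope `im α / re α` modulo `2 ^ k` of an element `α` with odd real part. -/
def slope (k : ℕ) (α : QInt) : Slope k := of ((α.im : ZMod (2 ^ k)) * (α.re : ZMod (2 ^ k))⁻¹)

lemma slope_eq_of_iff {α : QInt} (hα : Odd α.re) {t : ZMod (2 ^ k)} :
    slope k α = of t ↔ (α.im : ZMod (2 ^ k)) = α.re * t := by
  have hu := isUnit_intCast (k := k) hα
  rw [slope, of_injective.eq_iff]
  constructor
  · rintro rfl
    rw [mul_left_comm, ZMod.mul_inv_of_unit _ hu, mul_one]
  · intro h
    rw [h, mul_right_comm, ZMod.mul_inv_of_unit _ hu, one_mul]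

lemma odd_re_mul_iff {α β : QInt} : Odd (α * β).re ↔ Odd α.re ∧ Odd β.re := by
  rw [Zsqrtd.re_mul, show α.re * β.re + -2 * α.im * β.im = α.re * β.re - 2 * (α.im * β.im) by ring,
    Int.odd_sub, Int.odd_mul]
  simp

lemma slope_mul {α β : QInt} (hα : Odd α.re) (hβ : Odd β.re) :
    slope k (α * β) = slope k α + slope k β := by
  obtain ⟨a, ha⟩ := of_surjective (slope k α)
  obtain ⟨b, hb⟩ := of_surjective (slope k β)
  obtain ⟨c, hc, hc'⟩ := exists_of_add_of a b
  rw [← ha, ← hb, hc, slope_eq_of_iff (odd_re_mul_iff.mpr ⟨hα, hβ⟩)]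
  rw [eq_comm, slope_eq_of_iff hα] at ha
  rw [eq_comm, slope_eq_of_iff hβ] at hb
  rw [Zsqrtd.re_mul, Zsqrtd.im_mul]
  push_cast
  rw [ha, hb]
  linear_combination -(α.re * β.re : ZMod (2 ^ k)) * hc'

lemma slope_neg {α : QInt} (hα : Odd α.re) : slope k (-α) = slope k α := by
  obtain ⟨a, ha⟩ := of_surjective (slope k α)
  have h : Odd (-α).re := by simpa using hα
  rw [← ha, slope_eq_of_iff h]
  rw [eq_comm, slope_eq_of_iff hα] at ha
  simp [ha]

lemma slope_star {α : QInt} (hα : Odd α.re) : slope k (star α) = -slope k α := by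
  obtain ⟨a, ha⟩ := of_surjective (slope k α)
  have h : Odd (star α).re := by simpa using hα
  rw [← ha, neg_of, slope_eq_of_iff h]
  rw [eq_comm, slope_eq_of_iff hα] at ha
  simp [ha]

lemma slope_one : slope k 1 = 0 := by
  rw [← of_zero, slope_eq_of_iff (by simp)]
  simp

lemma slope_surjective (t : Slope k) : ∃ α : QInt, Odd α.re ∧ slope k α = t := by
  obtain ⟨t, rfl⟩ := of_surjective t
  refine ⟨⟨1, t.val⟩, odd_one, ?_⟩
  rw [slope_eq_of_iff odd_one]
  simp

/-- The character of `ℤ[√-2]` attached to a character of the group of slopes. -/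
noncomputable def char (ψ : AddChar (Slope k) ℂ) : QInt →*₀ ℂ where
  toFun α := if Odd α.re then ψ (slope k α) else 0
  map_zero' := by simp
  map_one' := by simp [slope_one]
  map_mul' α β := by
    by_cases hα : Odd α.re
    · by_cases hβ : Odd β.re
      · rw [if_pos hα, if_pos hβ, if_pos (odd_re_mul_iff.mpr ⟨hα, hβ⟩), slope_mul hα hβ,
          AddChar.map_add_eq_mul]
      · rw [if_neg hβ, if_neg fun h => hβ (odd_re_mul_iff.mp h).2, mul_zero]
    · rw [if_neg hα, if_neg fun h => hα (odd_re_mul_iff.mp h).1, zero_mul]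

variable (ψ : AddChar (Slope k) ℂ)

lemma char_of_odd {α : QInt} (hα : Odd α.re) : char ψ α = ψ (slope k α) := if_pos hα

lemma char_of_not_odd {α : QInt} (hα : ¬ Odd α.re) : char ψ α = 0 := if_neg hα

lemma norm_char_of_odd {α : QInt} (hα : Odd α.re) : ‖char ψ α‖ = 1 := by
  rw [char_of_odd ψ hα, AddChar.norm_apply]

lemma norm_char_le (α : QInt) : ‖char ψ α‖ ≤ 1 := by
  by_cases hα : Odd α.re
  · exact (norm_char_of_odd ψ hα).le
  · rw [char_of_not_odd ψ hα, norm_zero]; exact zero_le_one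

lemma char_neg (α : QInt) : char ψ (-α) = char ψ α := by
  by_cases hα : Odd α.re
  · rw [char_of_odd ψ hα, char_of_odd ψ (by simpa using hα), slope_neg hα]
  · rw [char_of_not_odd ψ hα, char_of_not_odd ψ (by simpa using hα)]

variable {ψ}

lemma isBalanced_char (hψ : ψ ≠ 0) : IsBalanced (char ψ) where
  norm_le := norm_char_le ψ
  map_neg_one := by rw [char_neg, map_one]
  exists_sum_eq_zero := by
    refine ⟨2 ^ k, by positivity, fun α => ?_⟩
    by_cases hα : Odd α.re
    · have hu := isUnit_intCast (k := k) hα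
      rw [← AddChar.sum_eq_zero_iff_ne_zero.mpr hψ]
      have hodd : ∀ y : ℕ, Odd (α + ⟨0, y⟩ : QInt).re := fun y => by simpa using hα
      refine Finset.sum_bij (fun y _ => slope k (α + ⟨0, y⟩)) (fun _ _ => Finset.mem_univ _) ?_ ?_
        fun y _ => char_of_odd ψ (hodd y)
      · intro y hy y' hy' h
        obtain ⟨t, ht⟩ := of_surjective (slope k (α + ⟨0, y⟩))
        rw [← ht] at h
        rw [eq_comm, slope_eq_of_iff (hodd y)] at ht
        rw [eq_comm, slope_eq_of_iff (hodd y')] at h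
        simp only [Zsqrtd.im_add, Zsqrtd.re_add, add_zero] at h ht
        rw [← ht] at h
        push_cast at h
        have h' := (ZMod.natCast_eq_natCast_iff' _ _ _).mp (add_left_cancel h)
        rwa [Nat.mod_eq_of_lt (Finset.mem_range.mp hy),
          Nat.mod_eq_of_lt (Finset.mem_range.mp hy'), eq_comm] at h'
      · intro t _
        obtain ⟨t, rfl⟩ := of_surjective t
        refine ⟨(α.re * t - α.im : ZMod (2 ^ k)).val, Finset.mem_range.mpr (ZMod.val_lt _), ?_⟩
        rw [slope_eq_of_iff (hodd _)]
        simp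
    · exact Finset.sum_eq_zero fun y _ => char_of_not_odd ψ (by simpa using hα)

/-- A character of order at most two depends only on the parity of the imaginary part. -/
lemma exists_char_eq_of_sq (hψ : ψ * ψ = 1) : ∃ ε : ℂ, (ε = 1 ∨ ε = -1) ∧ (ε = 1 → ψ = 1) ∧
    ∀ α : QInt, Odd α.re → char ψ α = if Even α.im then 1 else ε := by
  have hsq : ∀ t, ψ t * ψ t = 1 := fun t => by rw [← AddChar.mul_apply, hψ, AddChar.one_apply]
  have heven : ∀ α : QInt, Odd α.re → Even α.im → char ψ α = 1 := by
    intro α hα hi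
    obtain ⟨m, hm⟩ := hi.two_dvd
    obtain ⟨x, hx⟩ := exists_add_self_eq ((m : ZMod (2 ^ k)) * (α.re : ZMod (2 ^ k))⁻¹)
    have : slope k α = x + x := by
      rw [hx, slope_eq_of_iff hα, hm, mul_left_comm, mul_left_comm _ (m : ZMod (2 ^ k)),
        ZMod.mul_inv_of_unit _ (isUnit_intCast hα)]
      push_cast; ring
    rw [char_of_odd ψ hα, this, AddChar.map_add_eq_mul, hsq]
  set β : QInt := ⟨1, -1⟩ with hβ
  have hβ1 : Odd β.re := odd_one
  have hββ : char ψ β * char ψ β = 1 := by rw [char_of_odd ψ hβ1, hsq]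
  have hall : ∀ α : QInt, Odd α.re → char ψ α = if Even α.im then 1 else char ψ β := by
    intro α hα
    split_ifs with hi
    · exact heven α hα hi
    · have h : char ψ (α * β) = 1 := by
        refine heven _ (odd_re_mul_iff.mpr ⟨hα, hβ1⟩) ?_
        rw [Zsqrtd.im_mul]
        have := Int.not_even_iff_odd.mp hi
        change Even (α.re * (-1) + α.im * 1)
        rw [mul_neg_one, mul_one]
        exact (hα.neg).add_odd this
      rw [map_mul] at h
      linear_combination char ψ β * h - char ψ α * hββ
  refine ⟨char ψ β, mul_self_eq_one_iff.mp hββ, fun h => ?_, hall⟩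
  ext t
  obtain ⟨α, hα, rfl⟩ := slope_surjective t
  rw [← char_of_odd ψ hα, hall α hα, h, ite_self, AddChar.one_apply]

end QInt

end EtaDensity

namespace EtaDensity

namespace QInt

open Topology

/-! ### Reduction to rational primes -/

variable {χ : QInt →*₀ ℂ}

variable (χ) in
/-- The sum of `χ` over the elements of norm `n`. -/
noncomputable def normSum (n : ℕ) : ℂ := ∑' α : nm ⁻¹' {n}, χ α

open Classical in
variable (χ) in
/-- The contribution to `primeSeries χ` of the primes whose norm is not a rational prime. -/
noncomputable def inertSeries (s : ℂ) : ℂ :=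
  ∑' π, if (nm π).Prime then 0 else (lam π : ℂ) * term χ s π

lemma summable_log_nm_div_nm_of_im_eq_zero :
    Summable fun π : QInt => if π.im = 0 then Real.log (nm π) * (nm π : ℝ) ^ (-1 : ℝ) else 0 := by
  have hinj : Function.Injective fun a : ℤ => (⟨a, 0⟩ : QInt) := fun a b h =>
    congrArg Zsqrtd.re h
  refine (hinj.summable_iff ?_).mp ?_
  · intro π hπ
    refine if_neg fun h => hπ ⟨π.re, ?_⟩
    ext <;> simp [h]
  · have hs := (Real.summable_abs_int_rpow (b := 3 / 2) (by norm_num)).mul_left 4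
    refine Summable.of_nonneg_of_le (fun a => ?_) (fun a => ?_) hs
    · simp only [Function.comp]
      rw [if_true]
      exact mul_nonneg (log_nm_nonneg _) (by positivity)
    · simp only [Function.comp]
      rw [if_true]
      rcases eq_or_ne a 0 with rfl | ha
      · have : nm ⟨0, 0⟩ = 0 := nm_zero
        rw [this]; simp
      have ha' : 0 < |(a : ℝ)| := by positivity
      have hn : (nm ⟨a, 0⟩ : ℝ) = |(a : ℝ)| ^ (2 : ℝ) := by
        rw [natCast_nm_real]; simp
      have hlog := Real.log_le_rpow_div (x := |(a : ℝ)| ^ (2 : ℝ)) (ε := 1 / 4) (by positivity)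
        (by norm_num)
      rw [← Real.rpow_mul ha'.le] at hlog
      rw [hn, ← Real.rpow_mul ha'.le]
      calc Real.log (|(a : ℝ)| ^ (2 : ℝ)) * |(a : ℝ)| ^ ((2 : ℝ) * -1)
          ≤ |(a : ℝ)| ^ ((2 : ℝ) * (1 / 4)) / (1 / 4) * |(a : ℝ)| ^ ((2 : ℝ) * -1) := by gcongr
        _ = 4 * |(a : ℝ)| ^ ((2 : ℝ) * (1 / 4) + (2 : ℝ) * -1) := by
          rw [Real.rpow_add ha']; ring
        _ = 4 * |(a : ℝ)| ^ (-(3 / 2) : ℝ) := by norm_num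

lemma hasBoundaryLimits_inertSeries (hχ : ∀ α, ‖χ α‖ ≤ 1) :
    HasBoundaryLimits (inertSeries χ) := by
  classical
  refine .of_continuousOn (continuousOn_tsum (fun π => ?_) summable_log_nm_div_nm_of_im_eq_zero
    fun π s hs => ?_)
  · split_ifs
    · exact continuousOn_const
    · exact (continuous_const.mul (continuous_term π)).continuousOn
  · by_cases h : (nm π).Prime
    · rw [if_pos h, norm_zero]
      split_ifs
      · exact mul_nonneg (log_nm_nonneg π) (by positivity)
      · rfl
    rw [if_neg h]
    by_cases hπ : Prime π
    · rw [if_pos (im_eq_zero_of_prime hπ h), norm_mul, Complex.norm_real,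
        Real.norm_of_nonneg (lam_nonneg π)]
      exact mul_le_mul (lam_le π) ((norm_term_le hχ s π).trans (nm_rpow_le hs one_pos π))
        (norm_nonneg _) (log_nm_nonneg π)
    · rw [lam_of_not_prime hπ, Complex.ofReal_zero, zero_mul, norm_zero]
      split_ifs
      · exact mul_nonneg (log_nm_nonneg π) (by positivity)
      · rfl

lemma lam_of_nm_prime {π : QInt} (h : (nm π).Prime) : lam π = Real.log (nm π) :=
  if_pos (prime_of_nm_prime h)

/-- Up to the contribution of the inert primes, `primeSeries χ` is a Dirichlet series over the
rational primes. -/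
lemma lSeriesHasSum_normSum (hχ : ∀ α, ‖χ α‖ ≤ 1) {s : ℂ} (hs : 1 < s.re) :
    LSeriesHasSum (fun n => (primeLog Set.univ n : ℂ) * normSum χ n) s
      (primeSeries χ s - inertSeries χ s) := by
  classical
  have hsum := summable_lam_mul_term hχ hs
  have h2 : Summable fun π => if (nm π).Prime then 0 else (lam π : ℂ) * term χ s π := by
    refine hsum.norm.of_norm_bounded fun π => ?_
    split_ifs
    · simpa using mul_nonneg (abs_nonneg _) (norm_nonneg _)
    · rfl
  have h := (hsum.hasSum.sub h2.hasSum).tsum_fiberwise nm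
  refine HasSum.congr_fun h fun n => ?_
  by_cases hn : n.Prime
  · rw [LSeries.term_of_ne_zero hn.ne_zero, normSum, mul_div_right_comm, ← tsum_mul_left]
    refine tsum_congr fun ⟨α, hα⟩ => ?_
    have hα : nm α = n := hα
    subst hα
    rw [if_pos hn, sub_zero, lam_of_nm_prime hn, term, Complex.cpow_neg,
      show primeLog Set.univ (nm α) = Real.log (nm α) from
        Set.indicator_of_mem (show nm α ∈ {p | p.Prime ∧ p ∈ Set.univ} from ⟨hn, trivial⟩) _]
    ring
  · have h3 : ∀ α : nm ⁻¹' {n}, ((lam α : ℂ) * term χ s α -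
        if (nm α).Prime then 0 else (lam α : ℂ) * term χ s α) = 0 := by
      rintro ⟨α, hα⟩
      have hα : nm α = n := hα
      rw [if_neg (by rwa [hα]), sub_self]
    rw [tsum_congr h3, tsum_zero, LSeries.term_def,
      show primeLog Set.univ n = 0 from
        Set.indicator_of_notMem (fun h : n ∈ {p : ℕ | p.Prime ∧ p ∈ Set.univ} => hn h.1) _]
    simp

lemma normSum_eq_zero {n : ℕ} (h : ∀ α, nm α = n → χ α = 0) : normSum χ n = 0 := by
  have : ∀ α : nm ⁻¹' {n}, χ α = 0 := fun α => h α α.2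
  rw [normSum, tsum_congr this, tsum_zero]

lemma normSum_nm {α : QInt} (hα : (nm α).Prime) (h2 : Odd (nm α)) (hneg : ∀ β, χ (-β) = χ β) :
    normSum χ (nm α) = 2 * (χ α + χ (star α)) := by
  obtain ⟨h, h1, h3, h4⟩ := setOf_nm_eq hα h2
  have : nm ⁻¹' {nm α} = (({α, -α, star α, -star α} : Finset QInt) : Set QInt) := h
  rw [normSum, this, Finset.tsum_subtype', Finset.sum_insert, Finset.sum_insert, Finset.sum_insert,
    Finset.sum_singleton, hneg, hneg]
  · ring
  · intro h5
    rw [Finset.mem_singleton] at h5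
    refine h1 ?_
    simpa using congrArg star h5
  · intro h5
    simp only [Finset.mem_insert, Finset.mem_singleton] at h5
    rcases h5 with h5 | h5
    · exact h4 (by rw [← h5, neg_neg])
    · exact h3 (neg_injective h5)
  · simp [h1, h3, h4]

end QInt

end EtaDensity

namespace EtaDensity

/-! ### Primes in `dihedralSet` -/

lemma primeLog_of_mem {S : Set ℕ} {p : ℕ} (hp : p.Prime) (h : p ∈ S) :
    primeLog S p = Real.log p :=
  Set.indicator_of_mem (show p ∈ {p : ℕ | p.Prime ∧ p ∈ S} from ⟨hp, h⟩) _

lemma primeLog_of_notMem {S : Set ℕ} {p : ℕ} (h : p ∉ S) : primeLog S p = 0 :=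
  Set.indicator_of_notMem (fun h' : p ∈ {p : ℕ | p.Prime ∧ p ∈ S} => h h'.2) _

lemma primeLog_of_not_prime {S : Set ℕ} {p : ℕ} (h : ¬ p.Prime) : primeLog S p = 0 :=
  Set.indicator_of_notMem (fun h' : p ∈ {p : ℕ | p.Prime ∧ p ∈ S} => h h'.1) _

namespace QInt

open Topology Slope

variable {k : ℕ} {ψ : AddChar (Slope k) ℂ}

lemma even_re_of_nm_eq_two {α : QInt} (h : nm α = 2) : ¬ Odd α.re := by
  have h1 := natCast_nm α
  rw [h] at h1
  intro h2
  have h3 : Odd (α.re ^ 2 + 2 * α.im ^ 2) := (h2.pow).add_even (even_two_mul _)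
  rw [← h1] at h3
  exact absurd h3 (by decide)

lemma normSum_char_two : normSum (char ψ) 2 = 0 :=
  normSum_eq_zero fun _ h => char_of_not_odd ψ (even_re_of_nm_eq_two h)

/-- For a character of order at most two, `primeSeries` is governed by the primes in arithmetic
progressions modulo `8`. -/
lemma hasBoundaryLimits_primeSeries_of_sq (hψ : ψ * ψ = 1) :
    HasBoundaryLimits fun s => primeSeries (char ψ) s - (if ψ = 1 then 2 else 0) / (s - 1) := by
  classical
  obtain ⟨ε, hε, hε1, hchar⟩ := exists_char_eq_of_sq hψ
  have hpole : (if ψ = 1 then (2 : ℂ) else 0) = 1 + ε := by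
    split_ifs with h
    · have h1 := hchar ⟨1, 1⟩ odd_one
      rw [char_of_odd ψ odd_one, h, AddChar.one_apply, if_neg (by decide)] at h1
      rw [← h1]; norm_num
    · rcases hε with h1 | h1
      · exact absurd (hε1 h1) h
      · rw [h1]; ring
  have hsum : ∀ n, (primeLog Set.univ n : ℂ) * normSum (char ψ) n =
      4 * (primeLog {n | (n : ZMod 8) = 1} n : ℂ) +
        4 * ε * (primeLog {n | (n : ZMod 8) = 3} n : ℂ) := by
    intro p
    by_cases hp : p.Prime
    swap
    · simp [primeLog_of_not_prime hp]
    have hmem1 : p ∈ {n : ℕ | (n : ZMod 8) = 1} ↔ p % 8 = 1 := by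
      exact (ZMod.natCast_eq_natCast_iff' p 1 8)
    have hmem3 : p ∈ {n : ℕ | (n : ZMod 8) = 3} ↔ p % 8 = 3 := by
      exact (ZMod.natCast_eq_natCast_iff' p 3 8)
    rw [primeLog_of_mem hp (Set.mem_univ p)]
    by_cases hrep : ∃ α, nm α = p
    · obtain ⟨α, rfl⟩ := hrep
      rcases hp.eq_two_or_odd' with h2 | hodd
      · rw [h2, normSum_char_two,
          primeLog_of_notMem (show 2 ∉ {n : ℕ | (n : ZMod 8) = 1} by decide),
          primeLog_of_notMem (show 2 ∉ {n : ℕ | (n : ZMod 8) = 3} by decide)]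
        simp
      · have hα := odd_re_of_odd_nm hodd
        rw [normSum_nm hp hodd (char_neg ψ), hchar α hα, hchar (star α) (by simpa using hα)]
        simp only [Zsqrtd.im_star, even_neg]
        rcases nm_mod_eight hodd with ⟨hi, h8⟩ | ⟨hi, h8⟩
        · rw [if_pos hi, primeLog_of_mem hp (hmem1.mpr h8),
            primeLog_of_notMem (by rw [hmem3, h8]; norm_num)]
          push_cast; ring
        · rw [if_neg (Int.not_even_iff_odd.mpr hi), primeLog_of_mem hp (hmem3.mpr h8),
            primeLog_of_notMem (by rw [hmem1, h8]; norm_num)]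
          push_cast; ring
    · rw [normSum_eq_zero fun α hα => absurd ⟨α, hα⟩ hrep,
        primeLog_of_notMem fun h => hrep (exists_nm_eq hp (.inl (hmem1.mp h))),
        primeLog_of_notMem fun h => hrep (exists_nm_eq hp (.inr (hmem3.mp h)))]
      simp
  have h1 := hasBoundaryLimits_primeLog_residue (q := 8) (a := 1) isUnit_one
  have h3 := hasBoundaryLimits_primeLog_residue (q := 8) (a := 3) (by decide)
  refine (((h1.const_mul 4).add (h3.const_mul (4 * ε))).add
    (hasBoundaryLimits_inertSeries (norm_char_le ψ))).congr fun s hs => ?_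
  have hL := (lSeriesHasSum_normSum (norm_char_le ψ) hs).LSeries_eq
  have htot : Nat.totient 8 = 4 := by decide
  simp_rw [hsum] at hL
  have hL' : LSeries (fun n => 4 * (primeLog {n | (n : ZMod 8) = 1} n : ℂ) +
      4 * ε * (primeLog {n | (n : ZMod 8) = 3} n : ℂ)) s =
      4 * LSeries (fun n => (primeLog {n | (n : ZMod 8) = 1} n : ℂ)) s +
        4 * ε * LSeries (fun n => (primeLog {n | (n : ZMod 8) = 3} n : ℂ)) s := by
    have e1 := (LSeriesSummable_primeLog {n | (n : ZMod 8) = 1} hs)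
    have e3 := (LSeriesSummable_primeLog {n | (n : ZMod 8) = 3} hs)
    have := LSeries_add (e1.smul 4) (e3.smul (4 * ε))
    rwa [LSeries_smul, LSeries_smul] at this
  rw [hL'] at hL
  rw [hpole, htot]
  push_cast
  linear_combination hL

/-- The series `primeSeries` of a character has at most a simple pole at `s = 1`, which occurs for
the trivial character only. -/
lemma hasBoundaryLimits_primeSeries_char (ψ : AddChar (Slope k) ℂ) :
    HasBoundaryLimits fun s => primeSeries (char ψ) s - (if ψ = 1 then 2 else 0) / (s - 1) := by
  by_cases hψ : ψ * ψ = 1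
  · exact hasBoundaryLimits_primeSeries_of_sq hψ
  have hψ1 : ψ ≠ 1 := by rintro rfl; exact hψ (one_mul 1)
  simp only [if_neg hψ1, zero_div, sub_zero]
  have h1 := hasBoundaryLimits_primeSeries_of_sq (ψ := (1 : AddChar (Slope k) ℂ)) (one_mul 1)
  simp only [if_true] at h1
  obtain ⟨l, hl⟩ := h1 1 (by simp)
  refine hasBoundaryLimits_primeSeries (χ₀ := char (1 : AddChar (Slope k) ℂ)) (χ₂ := char (ψ * ψ))
    (isBalanced_char fun h => hψ1 (h.trans AddChar.one_eq_zero.symm))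
    (isBalanced_char fun h => hψ (h.trans AddChar.one_eq_zero.symm)) (norm_char_le 1) ?_ ?_
  · have hpath : Tendsto (fun σ : ℝ => (σ : ℂ)) (𝓝[>] 1) (𝓝[{z | 1 < z.re}] 1) := by
      refine tendsto_nhdsWithin_of_tendsto_nhds_of_eventually_within _ ?_ ?_
      · simpa using (Complex.continuous_ofReal.tendsto 1).mono_left nhdsWithin_le_nhds
      · filter_upwards [self_mem_nhdsWithin] with σ hσ
        simpa using hσ
    have hzero : Tendsto (fun σ : ℝ => (σ : ℂ) - 1) (𝓝[>] 1) (𝓝 0) := by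
      have : Continuous fun σ : ℝ => (σ : ℂ) - 1 := by fun_prop
      simpa using (this.tendsto 1).mono_left nhdsWithin_le_nhds
    have h2 := (hzero.mul (hl.comp hpath)).add_const 2
    rw [zero_mul, zero_add] at h2
    refine h2.congr' ?_
    filter_upwards [self_mem_nhdsWithin] with σ hσ
    have hσ' : (σ : ℂ) - 1 ≠ 0 := by
      rw [sub_ne_zero]
      exact_mod_cast (ne_of_gt hσ : σ ≠ 1)
    simp only [Function.comp]
    field_simp
    ring
  · intro α
    by_cases hα : Odd α.re
    · refine .inr ⟨?_, norm_char_of_odd ψ hα, ?_⟩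
      · rw [char_of_odd 1 hα, AddChar.one_apply]
      · rw [char_of_odd _ hα, char_of_odd _ hα, AddChar.mul_apply, sq]
    · exact .inl ⟨char_of_not_odd _ hα, char_of_not_odd _ hα, char_of_not_odd _ hα⟩

/-- Orthogonality of characters detects the primes in `dihedralSet n`. -/
lemma sum_char_mul_normSum {n : ℕ} (hn : 1 ≤ n) {p : ℕ} (hp : p.Prime) :
    ∑ ψ : AddChar (Slope (n + 1)) ℂ, ψ (-of (1 + 2 ^ n)) * normSum (char ψ) p =
      (dihedralSet n).indicator (fun _ => 2 ^ (n + 2)) p := by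
  classical
  have hnot : p ∉ dihedralSet n →
      (dihedralSet n).indicator (fun _ => (2 : ℂ) ^ (n + 2)) p = 0 :=
    fun h => Set.indicator_of_notMem h _
  have hslope : ∀ α : QInt, Odd α.re → ((α.im : ZMod (2 ^ (n + 1))) = α.re * (1 + 2 ^ n) ↔
      slope (n + 1) α = of (1 + 2 ^ n)) := fun α hα => (slope_eq_of_iff hα).symm
  have hmem : p ∈ dihedralSet n ↔ ∃ α : QInt, nm α = p ∧
      (α.im : ZMod (2 ^ (n + 1))) = α.re * (1 + 2 ^ n) := by
    constructor
    · rintro ⟨x, y, h, h'⟩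
      refine ⟨⟨x, y⟩, ?_, h'⟩
      exact_mod_cast (natCast_nm ⟨x, y⟩).trans h
    · rintro ⟨α, rfl, h⟩
      exact ⟨α.re, α.im, (natCast_nm α).symm, h⟩
  by_cases hrep : ∃ α, nm α = p
  swap
  · rw [hnot fun h => hrep (by obtain ⟨α, h, -⟩ := hmem.mp h; exact ⟨α, h⟩)]
    refine Finset.sum_eq_zero fun ψ _ => ?_
    rw [normSum_eq_zero fun α hα => absurd ⟨α, hα⟩ hrep, mul_zero]
  obtain ⟨α, rfl⟩ := hrep
  rcases hp.eq_two_or_odd' with h2 | hodd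
  · rw [h2] at hmem hnot ⊢
    rw [hnot]
    · exact Finset.sum_eq_zero fun ψ _ => by rw [normSum_char_two, mul_zero]
    · rw [hmem]
      rintro ⟨β, hβ, h⟩
      obtain ⟨a, ha⟩ := (Int.not_odd_iff_even.mp (even_re_of_nm_eq_two hβ)).two_dvd
      have h3 : ((β.im : ℤ) : ZMod (2 ^ (n + 1))) = ((β.re * (1 + 2 ^ n) : ℤ) : ZMod _) := by
        rw [h]; push_cast; rfl
      have h4 := (ZMod.intCast_eq_intCast_iff_dvd_sub _ _ _).mp h3
      have h5 : (2 : ℤ) ∣ β.re * (1 + 2 ^ n) - β.im :=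
        (dvd_pow_self (2 : ℤ) n.succ_ne_zero).trans (by exact_mod_cast h4)
      have h6 : (2 : ℤ) ∣ β.im := by
        rw [ha, mul_assoc] at h5
        exact (dvd_sub_right (dvd_mul_right _ _)).mp h5
      obtain ⟨b, hb⟩ := h6
      have h7 := natCast_nm β
      rw [hβ, ha, hb, mul_pow, mul_pow] at h7
      push_cast at h7
      omega
  have hα := odd_re_of_odd_nm hodd
  have hα' : Odd (star α).re := by simpa using hα
  have hne : of (1 + 2 ^ n : ZMod (2 ^ (n + 1))) ≠ -of (1 + 2 ^ n) := by
    intro h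
    rw [neg_of, of_injective.eq_iff] at h
    have h0 : (2 : ZMod (2 ^ (n + 1))) ^ (n + 1) = 0 := by
      exact_mod_cast ZMod.natCast_self (2 ^ (n + 1))
    have h3 : ((2 : ℕ) : ZMod (2 ^ (n + 1))) = 0 := by
      push_cast
      linear_combination h - h0
    have h4 := Nat.le_of_dvd two_pos ((ZMod.natCast_eq_zero_iff _ _).mp h3)
    have h5 : 2 ^ 2 ≤ 2 ^ (n + 1) := Nat.pow_le_pow_right two_pos (by omega)
    omega
  have hiff : nm α ∈ dihedralSet n ↔
      slope (n + 1) α = of (1 + 2 ^ n) ∨ -slope (n + 1) α = of (1 + 2 ^ n) := by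
    rw [hmem]
    constructor
    · rintro ⟨β, hβ, h⟩
      have hβ' : β ∈ {β | nm β = nm α} := hβ
      rw [(setOf_nm_eq hp hodd).1] at hβ'
      simp only [Finset.coe_insert, Finset.coe_singleton, Set.mem_insert_iff,
        Set.mem_singleton_iff] at hβ'
      rw [hslope β (odd_re_of_odd_nm (hβ ▸ hodd))] at h
      rcases hβ' with rfl | rfl | rfl | rfl
      · exact .inl h
      · exact .inl (by rwa [slope_neg hα] at h)
      · exact .inr (by rwa [slope_star hα] at h)
      · exact .inr (by rwa [slope_neg hα', slope_star hα] at h)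
    · rintro (h | h)
      · exact ⟨α, rfl, (hslope α hα).mpr h⟩
      · exact ⟨star α, nm_star α, (hslope _ hα').mpr (by rwa [slope_star hα])⟩
  have hsum : ∑ ψ : AddChar (Slope (n + 1)) ℂ, ψ (-of (1 + 2 ^ n)) * normSum (char ψ) (nm α) =
      2 * ((if slope (n + 1) α = of (1 + 2 ^ n) then 2 ^ (n + 1) else 0) +
        if -slope (n + 1) α = of (1 + 2 ^ n) then 2 ^ (n + 1) else 0) := by
    have hcard : (Fintype.card (Slope (n + 1)) : ℂ) = 2 ^ (n + 1) := by
      have : Fintype.card (Slope (n + 1)) = 2 ^ (n + 1) := ZMod.card _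
      rw [this]; push_cast; rfl
    have key : ∀ t : Slope (n + 1), (if t = of (1 + 2 ^ n) then (2 : ℂ) ^ (n + 1) else 0) =
        ∑ ψ : AddChar (Slope (n + 1)) ℂ, ψ (-of (1 + 2 ^ n)) * ψ t := by
      intro t
      simp_rw [← AddChar.map_add_eq_mul]
      rw [AddChar.sum_apply_eq_ite, hcard]
      exact if_congr (by rw [neg_add_eq_zero, eq_comm]) rfl rfl
    rw [key, key, ← Finset.sum_add_distrib, Finset.mul_sum]
    refine Finset.sum_congr rfl fun ψ _ => ?_
    rw [normSum_nm hp hodd (char_neg ψ), char_of_odd ψ hα, char_of_odd ψ hα', slope_star hα]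
    ring
  rw [hsum]
  by_cases h1 : slope (n + 1) α = of (1 + 2 ^ n)
  · rw [Set.indicator_of_mem (hiff.mpr (.inl h1)), if_pos h1, if_neg (by rw [h1]; exact hne.symm)]
    ring
  · by_cases h2 : -slope (n + 1) α = of (1 + 2 ^ n)
    · rw [Set.indicator_of_mem (hiff.mpr (.inr h2)), if_neg h1, if_pos h2]
      ring
    · rw [hnot (by rw [hiff]; tauto), if_neg h1, if_neg h2]
      ring

end QInt

open QInt Slope in
lemma hasBoundaryLimits_primeLog_dihedralSet {n : ℕ} (hn : 1 ≤ n) :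
    HasBoundaryLimits fun s => LSeries (fun m => (primeLog (dihedralSet n) m : ℂ)) s -
      (((1 / 2 : ℝ) ^ (n + 1) : ℝ) : ℂ) / (s - 1) := by
  classical
  have hψ : ∀ ψ : AddChar (Slope (n + 1)) ℂ, HasBoundaryLimits fun s =>
      ψ (-of (1 + 2 ^ n)) * (primeSeries (char ψ) s - (if ψ = 1 then 2 else 0) / (s - 1) -
        inertSeries (char ψ) s) := fun ψ =>
    ((hasBoundaryLimits_primeSeries_char ψ).sub
      (hasBoundaryLimits_inertSeries (norm_char_le ψ))).const_mul _
  refine ((HasBoundaryLimits.sum Finset.univ fun ψ _ => hψ ψ).const_mul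
    ((2 : ℂ) ^ (n + 2))⁻¹).congr fun s hs => ?_
  have hS : LSeries (fun m => (primeLog (dihedralSet n) m : ℂ)) s = ((2 : ℂ) ^ (n + 2))⁻¹ *
      ∑ ψ : AddChar (Slope (n + 1)) ℂ, ψ (-of (1 + 2 ^ n)) *
        (primeSeries (char ψ) s - inertSeries (char ψ) s) := by
    refine LSeriesHasSum.LSeries_eq ?_
    refine HasSum.congr_fun ((hasSum_sum fun ψ (_ : ψ ∈ Finset.univ) =>
      ((lSeriesHasSum_normSum (norm_char_le ψ) hs).mul_left
        (ψ (-of (1 + 2 ^ n))))).mul_left ((2 : ℂ) ^ (n + 2))⁻¹) fun p => ?_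
    by_cases hp : p.Prime
    · have h := sum_char_mul_normSum hn hp
      simp only [LSeries.term_of_ne_zero hp.ne_zero, primeLog_of_mem hp (Set.mem_univ p)]
      have : ∀ ψ : AddChar (Slope (n + 1)) ℂ, ψ (-of (1 + 2 ^ n)) *
          (((Real.log p : ℝ) : ℂ) * normSum (char ψ) p / (p : ℂ) ^ s) =
          ((Real.log p : ℝ) : ℂ) / (p : ℂ) ^ s * (ψ (-of (1 + 2 ^ n)) * normSum (char ψ) p) :=
        fun ψ => by ring
      simp_rw [this]
      rw [← Finset.mul_sum, h]
      by_cases hpS : p ∈ dihedralSet n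
      · rw [Set.indicator_of_mem hpS, primeLog_of_mem hp hpS]
        field_simp
      · rw [Set.indicator_of_notMem hpS, primeLog_of_notMem hpS]
        simp
    · simp [LSeries.term_def, primeLog_of_not_prime hp]
  rw [hS]
  have hpole : ∑ ψ : AddChar (Slope (n + 1)) ℂ, ψ (-of (1 + 2 ^ n)) *
      ((if ψ = 1 then 2 else 0) / (s - 1)) = 2 / (s - 1) := by
    rw [Finset.sum_eq_single 1]
    · rw [if_pos rfl, AddChar.one_apply, one_mul]
    · intro ψ _ h
      rw [if_neg h, zero_div, mul_zero]
    · simp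
  have hexp : ∑ ψ : AddChar (Slope (n + 1)) ℂ, ψ (-of (1 + 2 ^ n)) *
      (primeSeries (char ψ) s - (if ψ = 1 then 2 else 0) / (s - 1) - inertSeries (char ψ) s) =
      (∑ ψ : AddChar (Slope (n + 1)) ℂ, ψ (-of (1 + 2 ^ n)) *
        (primeSeries (char ψ) s - inertSeries (char ψ) s)) - 2 / (s - 1) := by
    rw [← hpole, ← Finset.sum_sub_distrib]
    exact Finset.sum_congr rfl fun ψ _ => by ring
  rw [hexp, mul_sub]
  congr 1
  push_cast
  rw [one_div, inv_pow, pow_succ 2 (n + 1)]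
  field_simp

end EtaDensity

/-- Theorem D, `ℚ(√−2)`-dihedral case: `D(24 ⬝ z_n) = 2^{-(n+1)}` for `n ≥ 1`,
where `z_n = (2·4^n + 1)/3`. -/
theorem etaPowerDensity_dihedral_sqrt_neg_two (n : ℕ) (hn : 1 ≤ n) :
    Tendsto
      (fun x : ℕ =>
        (etaDensityCount (24 * ((2 * 4 ^ n + 1) / 3)) x : ℝ) / (primePi x : ℝ))
      atTop (nhds ((1 / 2 : ℝ) ^ (n + 1))) :=
  EtaDensity.tendsto_etaDensityCount_div hn
    (EtaDensity.tendsto_primeCount_div (EtaDensity.hasBoundaryLimits_primeLog_dihedralSet hn))
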